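/- arXiv:2006.12058 — 8 statements merged into one kernel-verified Lean document; each statement's English description precedes it below -/
import Mathlib

section
/- Every self-similar set in ℝ^d that is not contained in an affine hyperplane of ℝ^d is arithmetically thick. -/
open Metric Set
open scoped RealInnerProductSpace

/-- The `n`-fold arithmetic sum `⊕_n E = {x_1 + ⋯ + x_n : x_i ∈ E}`. -/
def nfoldSum {d : ℕ} (n : ℕ) (E : Set (EuclideanSpace ℝ (Fin d))) :
    Set (EuclideanSpace ℝ (Fin d)) :=
  {y | ∃ x : Fin n → EuclideanSpace ℝ (Fin d), (∀ i, x i ∈ E) ∧ y = ∑ i, x i}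

/-- A compact set is arithmetically thick if some `n`-fold arithmetic sum of it has
non-empty interior. -/
def ArithmeticallyThick {d : ℕ} (E : Set (EuclideanSpace ℝ (Fin d))) : Prop :=
  ∃ n : ℕ, 0 < n ∧ (interior (nfoldSum n E)).Nonempty

section Similarity

variable {X : Type*} [PseudoMetricSpace X]

/-- `g` is a similarity map of ratio `s ∈ (0, 1]` which sends `E` into itself. -/
structure IsSimilarityInto (E : Set X) (s : ℝ) (g : X → X) : Prop where
  pos : 0 < s
  le_one : s ≤ 1
  dist_eq : ∀ x y, dist (g x) (g y) = s * dist x y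
  mapsTo : MapsTo g E E

namespace IsSimilarityInto

variable {E : Set X}

lemma id : IsSimilarityInto E 1 id :=
  ⟨one_pos, le_rfl, fun x y => by simp, mapsTo_id E⟩

lemma comp {s s' : ℝ} {g g' : X → X} (h : IsSimilarityInto E s g)
    (h' : IsSimilarityInto E s' g') : IsSimilarityInto E (s * s') (g ∘ g') where
  pos := mul_pos h.pos h'.pos
  le_one := mul_le_one₀ h.le_one h'.pos.le h'.le_one
  dist_eq x y := by simp only [Function.comp_apply, h.dist_eq, h'.dist_eq, mul_assoc]
  mapsTo := h.mapsTo.comp h'.mapsTo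

lemma exists_prod {ι : Type*} (T : Finset ι) {s : ι → ℝ}
    (hs : ∀ i ∈ T, ∃ g, IsSimilarityInto E (s i) g) :
    ∃ g, IsSimilarityInto E (∏ i ∈ T, s i) g := by
  refine Finset.prod_induction s (fun r => ∃ g, IsSimilarityInto E r g) ?_ ⟨_, id⟩ hs
  rintro a b ⟨g, hg⟩ ⟨g', hg'⟩
  exact ⟨_, hg.comp hg'⟩

/-- Every point of a self-similar set lies in copies of that set of arbitrarily small ratio. -/
lemma exists_ratio_le {ι : Type*} [Finite ι] [Nonempty ι] {φ : ι → X → X} {r : ι → ℝ}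
    (hφ : ∀ i, IsSimilarityInto E (r i) (φ i)) (hr : ∀ i, r i < 1) (hE : E ⊆ ⋃ i, φ i '' E)
    {η : ℝ} (hη : 0 < η) {p : X} (hp : p ∈ E) :
    ∃ s g, IsSimilarityInto E s g ∧ s ≤ η ∧ p ∈ g '' E := by
  obtain ⟨i₀, hi₀⟩ := Finite.exists_max r
  obtain ⟨k, hk⟩ := exists_pow_lt_of_lt_one hη (hr i₀)
  suffices h : ∀ (k : ℕ), ∀ p ∈ E, ∃ s g, IsSimilarityInto E s g ∧ s ≤ r i₀ ^ k ∧ p ∈ g '' E by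
    obtain ⟨s, g, hg, hs, hpg⟩ := h k p hp
    exact ⟨s, g, hg, hs.trans hk.le, hpg⟩
  intro k
  induction k with
  | zero => exact fun p hp => ⟨1, _, id, by simp, p, hp, rfl⟩
  | succ k ih =>
    intro p hp
    obtain ⟨i, q, hq, rfl⟩ := mem_iUnion.1 (hE hp)
    obtain ⟨s, g, hg, hs, z, hz, rfl⟩ := ih q hq
    refine ⟨r i * s, φ i ∘ g, (hφ i).comp hg, ?_, z, hz, rfl⟩
    rw [pow_succ']
    exact mul_le_mul (hi₀ i) hs hg.pos.le (hφ i₀).pos.le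

end IsSimilarityInto

end Similarity

section InnerProductSpace

variable {V : Type*} [NormedAddCommGroup V] [InnerProductSpace ℝ V]

/-- Subtracting a vector of norm at most `D` which has a large component along `e` either leaves
`e` small or shortens it by a definite amount. -/
lemma norm_sub_le_max_of_inner_ge {e a : V} {c D : ℝ} (hc : 0 < c) (hcD : c ≤ D)
    (ha : ‖a‖ ≤ D) (hin : c * ‖e‖ ≤ ⟪a, e⟫) :
    ‖e - a‖ ≤ max (D ^ 2 / c + D) (‖e‖ - c / 2) := by
  have hK : D ^ 2 / c * c = D ^ 2 := div_mul_cancel₀ _ hc.ne'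
  rcases le_total ‖e‖ (D ^ 2 / c) with h | h
  · exact le_max_of_le_left ((norm_sub_le _ _).trans (add_le_add h ha))
  · apply le_max_of_le_right
    have hcK : c ≤ D ^ 2 / c := by
      rw [le_div_iff₀ hc]; nlinarith
    apply abs_le_of_sq_le_sq' _ (by linarith) |>.2
    rw [norm_sub_sq_real, real_inner_comm]
    nlinarith [norm_nonneg a, norm_nonneg e]

/-- Greedy approximation of a vector `e` by a sum of vectors chosen from prescribed sets, each of
which contains vectors pointing in every direction. -/
lemma exists_norm_sub_sum_le {ι : Type*} [DecidableEq ι] (A : ι → Set V) {c D : ℝ} (hc : 0 < c)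
    (hcD : c ≤ D) (hA : ∀ i, ∀ a ∈ A i, ‖a‖ ≤ D)
    (hin : ∀ i u, ∃ a ∈ A i, c * ‖u‖ ≤ ⟪a, u⟫) (e : V) (T : Finset ι) :
    ∃ a : ι → V, (∀ i ∈ T, a i ∈ A i) ∧
      ‖e - ∑ i ∈ T, a i‖ ≤ max (D ^ 2 / c + D) (‖e‖ - T.card * (c / 2)) := by
  induction T using Finset.induction_on with
  | empty => exact ⟨0, by simp, by simp⟩
  | insert j T hj ih =>
    obtain ⟨a, haA, ha⟩ := ih
    obtain ⟨x, hx, hxin⟩ := hin j (e - ∑ i ∈ T, a i)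
    refine ⟨Function.update a j x, ?_, ?_⟩
    · intro i hi
      rcases eq_or_ne i j with rfl | hij
      · simpa using hx
      · simpa [hij] using haA i (Finset.mem_of_mem_insert_of_ne hi hij)
    · have hsum : e - ∑ i ∈ insert j T, Function.update a j x i = (e - ∑ i ∈ T, a i) - x := by
        rw [Finset.sum_insert hj, Function.update_self, Finset.sum_update_of_notMem hj]
        abel
      rw [hsum, Finset.card_insert_of_notMem hj]
      refine (norm_sub_le_max_of_inner_ge hc hcD (hA j x hx) hxin).trans ?_
      push_cast
      rcases le_max_iff.1 ha with h | h
      · exact max_le (le_max_left _ _) (le_max_of_le_left (by linarith))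
      · exact max_le (le_max_left _ _) (le_max_of_le_right (by linarith))

/-- Inner products of differences of values of a similarity map against a fixed vector. -/
lemma exists_inner_sub_eq_of_dist_eq [FiniteDimensional ℝ V] {g : V → V} {s : ℝ} (hs : 0 < s)
    (hg : ∀ x y, dist (g x) (g y) = s * dist x y) (u : V) :
    ∃ u' : V, ‖u'‖ = ‖u‖ ∧ ∀ x y, ⟪g x - g y, u⟫ = s * ⟪x - y, u'⟫ := by
  have hiso : Isometry fun x => s⁻¹ • g x := by
    refine Isometry.of_dist_eq fun x y => ?_
    rw [dist_smul₀, hg, Real.norm_of_nonneg (inv_nonneg.2 hs.le), inv_mul_cancel_left₀ hs.ne']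
  let L := hiso.affineIsometryOfStrictConvexSpace.linearIsometry.toLinearIsometryEquiv rfl
  have hL : ∀ x y, g x - g y = s • L (x - y) := by
    intro x y
    have h := hiso.affineIsometryOfStrictConvexSpace.toAffineMap.linearMap_vsub x y
    have h' : L (x - y) = s⁻¹ • g x - s⁻¹ • g y := h
    rw [h', ← smul_sub, smul_inv_smul₀ hs.ne']
  refine ⟨L.symm u, L.symm.norm_map u, fun x y => ?_⟩
  rw [hL, real_inner_smul_left, ← L.inner_map_map (x - y), L.apply_symm_apply]

/-- A set which lies in no affine hyperplane affinely spans the space. -/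
lemma affineSpan_eq_top_of_not_subset_hyperplane [FiniteDimensional ℝ V] {E : Set V}
    (hne : E.Nonempty) (hhyp : ¬ ∃ (v : V) (c : ℝ), v ≠ 0 ∧ ∀ x ∈ E, ⟪x, v⟫ = c) :
    affineSpan ℝ E = ⊤ := by
  rw [AffineSubspace.affineSpan_eq_top_iff_vectorSpan_eq_top_of_nonempty ℝ V V hne]
  by_contra h
  rw [← Submodule.orthogonal_eq_bot_iff] at h
  obtain ⟨v, hv, hv0⟩ := Submodule.exists_mem_ne_zero_of_ne_bot h
  obtain ⟨x₀, hx₀⟩ := hne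
  refine hhyp ⟨v, ⟪x₀, v⟫, hv0, fun x hx => ?_⟩
  have := (Submodule.mem_orthogonal _ v).1 hv _ (vsub_mem_vectorSpan ℝ hx hx₀)
  rwa [vsub_eq_sub, inner_sub_left, sub_eq_zero] at this

/-- A spanning set contains finitely many points surrounding some point `b` in all directions. -/
lemma exists_finset_inner_sub_ge [FiniteDimensional ℝ V] {E : Set V}
    (hE : affineSpan ℝ E = ⊤) :
    ∃ (t : Finset V) (b : V) (c : ℝ), ↑t ⊆ E ∧ 0 < c ∧
      ∀ u, ∃ p ∈ t, c * ‖u‖ ≤ ⟪p - b, u⟫ := by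
  obtain ⟨t, htE, hspan, hind⟩ := exists_affineIndependent ℝ V E
  have htfin : t.Finite := finite_set_of_fin_dim_affineIndependent ℝ hind
  obtain ⟨b, hb⟩ := interior_convexHull_nonempty_iff_affineSpan_eq_top.2 (hspan.trans hE)
  obtain ⟨δ, hδ, hball⟩ := Metric.nhds_basis_closedBall.mem_iff.1 (mem_interior_iff_mem_nhds.1 hb)
  refine ⟨htfin.toFinset, b, δ, by simpa using htE, hδ, fun u => ?_⟩
  by_contra! hcon
  have hlt : t ⊆ {x | ⟪u, x⟫ < ⟪u, b⟫ + δ * ‖u‖} := by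
    intro p hp
    have := hcon p (by simpa using hp)
    rw [real_inner_comm, inner_sub_right] at this
    simp only [mem_ofPred_eq]
    linarith
  have hconv : Convex ℝ {x : V | ⟪u, x⟫ < ⟪u, b⟫ + δ * ‖u‖} :=
    convex_halfSpace_lt (innerSL ℝ u).toLinearMap.isLinear _
  have hmem : b + (δ * ‖u‖⁻¹) • u ∈ Metric.closedBall b δ := by
    rw [mem_closedBall, dist_self_add_left, norm_smul, norm_mul, norm_inv, norm_norm,
      Real.norm_of_nonneg hδ.le, mul_assoc]
    exact mul_le_of_le_one_right hδ.le inv_mul_le_one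
  have h := convexHull_min hlt hconv (hball hmem)
  simp only [mem_ofPred_eq, inner_add_right, inner_smul_right, real_inner_self_eq_norm_sq] at h
  rcases eq_or_ne ‖u‖ 0 with h0 | h0
  · simp [h0] at h
  · have : δ * ‖u‖⁻¹ * ‖u‖ ^ 2 = δ * ‖u‖ := by field_simp
    linarith

/-- A self-similar set spanning the space is mapped into itself by finitely many similarity maps of
one common ratio which displace some point `b` in all directions. -/
lemma exists_similarities_common_ratio [FiniteDimensional ℝ V] {ι : Type*} [Finite ι] [Nonempty ι]
    {E : Set V} {φ : ι → V → V} {r : ι → ℝ} (hφ : ∀ i, IsSimilarityInto E (r i) (φ i))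
    (hr : ∀ i, r i < 1) (hE : E ⊆ ⋃ i, φ i '' E) (hcomp : IsCompact E) (hne : E.Nonempty)
    (hspan : affineSpan ℝ E = ⊤) :
    ∃ (t : Finset V) (ψ : V → V → V) (b : V) (c ρ : ℝ), 0 < c ∧ ρ < 1 ∧
      (∀ p ∈ t, IsSimilarityInto E ρ (ψ p)) ∧
      ∀ u, ∃ p ∈ t, c * ‖u‖ ≤ ⟪ψ p b - b, u⟫ := by
  classical
  obtain ⟨t, b, c, htE, hc, ht⟩ := exists_finset_inner_sub_ge hspan
  obtain ⟨x₀, hx₀⟩ := hne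
  obtain ⟨M, hM⟩ := hcomp.isBounded.subset_closedBall b
  have hM0 : 0 ≤ M := dist_nonneg.trans (hM hx₀)
  set η : ℝ := min (1 / 2) (c / 2 / (3 * M + 1))
  have hη : 0 < η := by positivity
  have hsmall : ∀ p ∈ t, ∃ s g, IsSimilarityInto E s g ∧ s ≤ η ∧ p ∈ g '' E :=
    fun p hp => IsSimilarityInto.exists_ratio_le hφ hr hE hη (htE hp)
  choose! s g hg hs hpg using hsmall
  have hrest : ∀ p ∈ t, ∃ G, IsSimilarityInto E (∏ q ∈ t.erase p, s q) G := fun p _ =>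
    IsSimilarityInto.exists_prod _ fun q hq => ⟨_, hg q (Finset.mem_of_mem_erase hq)⟩
  choose! G hG using hrest
  have hψ : ∀ p ∈ t, IsSimilarityInto E (∏ q ∈ t, s q) (g p ∘ G p) := fun p hp => by
    rw [← Finset.mul_prod_erase t s hp]
    exact (hg p hp).comp (hG p hp)
  refine ⟨t, fun p => g p ∘ G p, b, c / 2, ∏ q ∈ t, s q, half_pos hc, ?_, hψ, fun u => ?_⟩
  · obtain ⟨p, hp, -⟩ := ht 0
    rw [← Finset.mul_prod_erase t s hp]
    calc s p * ∏ q ∈ t.erase p, s q ≤ s p :=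
          mul_le_of_le_one_right (hg p hp).pos.le (hG p hp).le_one
      _ ≤ 1 / 2 := (hs p hp).trans (min_le_left _ _)
      _ < 1 := by norm_num
  · obtain ⟨p, hp, hpu⟩ := ht u
    refine ⟨p, hp, ?_⟩
    obtain ⟨z, hz, hzp⟩ := hpg p hp
    have hGb : dist (G p b) z ≤ 3 * M := by
      have h1 : dist (G p b) (G p x₀) ≤ M := by
        rw [(hG p hp).dist_eq]
        refine (mul_le_of_le_one_left dist_nonneg (hG p hp).le_one).trans ?_
        rw [dist_comm]
        exact hM hx₀
      have h2 : dist (G p x₀) b ≤ M := hM ((hG p hp).mapsTo hx₀)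
      have h3 : dist b z ≤ M := by
        rw [dist_comm]
        exact hM hz
      linarith [dist_triangle4 (G p b) (G p x₀) b z]
    have hnear : ‖g p (G p b) - p‖ ≤ c / 2 := by
      rw [← dist_eq_norm]
      calc dist (g p (G p b)) p = dist (g p (G p b)) (g p z) := by rw [hzp]
        _ = s p * dist (G p b) z := (hg p hp).dist_eq _ _
        _ ≤ c / 2 / (3 * M + 1) * (3 * M + 1) :=
            mul_le_mul ((hs p hp).trans (min_le_right _ _)) (by linarith) dist_nonneg
              (by positivity)
        _ = c / 2 := by field_simp
    have hinner := (abs_le.1 (abs_real_inner_le_norm (g p (G p b) - p) u)).1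
    have hsplit : ⟪g p (G p b) - b, u⟫ = ⟪g p (G p b) - p, u⟫ + ⟪p - b, u⟫ := by
      rw [← inner_add_left, sub_add_sub_cancel]
    simp only [Function.comp_apply]
    rw [hsplit]
    nlinarith [mul_le_mul_of_nonneg_right hnear (norm_nonneg u)]

/-- Refining `n` copies of a set at scale `ρ ^ k` to copies at scale `ρ ^ (k + 1)`, the sum of the
base points can be kept close to a target `y`. -/
lemma exists_similarities_norm_sub_sum_le [FiniteDimensional ℝ V] {E : Set V} {t : Finset V}
    {ψ : V → V → V} {b : V} {c D ρ : ℝ} {n : ℕ} (hc : 0 < c) (hcD : c ≤ D) (hρ : 0 < ρ)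
    (hψ : ∀ p ∈ t, IsSimilarityInto E ρ (ψ p)) (hD : ∀ p ∈ t, ‖ψ p b - b‖ ≤ D)
    (ht : ∀ u, ∃ p ∈ t, c * ‖u‖ ≤ ⟪ψ p b - b, u⟫)
    (hn : (D ^ 2 / c + D) / ρ ≤ n * (c / 2)) {y : V}
    (hy : ‖y - n • b‖ ≤ (D ^ 2 / c + D) / ρ) (k : ℕ) :
    ∃ g : Fin n → V → V, (∀ i, IsSimilarityInto E (ρ ^ k) (g i)) ∧
      ‖y - ∑ i, g i b‖ ≤ (D ^ 2 / c + D) / ρ * ρ ^ k := by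
  have hD0 : 0 < D := hc.trans_le hcD
  induction k with
  | zero => exact ⟨fun _ => id, fun _ => by simpa using IsSimilarityInto.id, by simpa using hy⟩
  | succ k ih =>
    obtain ⟨g, hg, hgy⟩ := ih
    have hk : 0 < ρ ^ k := pow_pos hρ k
    obtain ⟨a, haA, ha⟩ := exists_norm_sub_sum_le
      (fun i => {a | ∃ p ∈ t, a = g i (ψ p b) - g i b}) (c := ρ ^ k * c) (D := ρ ^ k * D)
      (mul_pos hk hc) (mul_le_mul_of_nonneg_left hcD hk.le)
      (by
        rintro i _ ⟨p, hp, rfl⟩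
        rw [← dist_eq_norm, (hg i).dist_eq, dist_eq_norm]
        exact mul_le_mul_of_nonneg_left (hD p hp) hk.le)
      (by
        intro i u
        obtain ⟨u', hu', hin⟩ := exists_inner_sub_eq_of_dist_eq hk (hg i).dist_eq u
        obtain ⟨p, hp, hpu⟩ := ht u'
        refine ⟨_, ⟨p, hp, rfl⟩, ?_⟩
        rw [hin, ← hu', mul_assoc]
        exact mul_le_mul_of_nonneg_left hpu hk.le)
      (y - ∑ i, g i b) Finset.univ
    choose p hp hap using fun i => haA i (Finset.mem_univ i)
    refine ⟨fun i => g i ∘ ψ (p i), fun i => ?_, ?_⟩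
    · rw [pow_succ]
      exact (hg i).comp (hψ _ (hp i))
    · have hsum : y - ∑ i, (g i ∘ ψ (p i)) b = y - ∑ i, g i b - ∑ i, a i := by
        simp only [hap, Function.comp_apply, Finset.sum_sub_distrib]
        abel
      have htarget : (D ^ 2 / c + D) / ρ * ρ ^ (k + 1) = (D ^ 2 / c + D) * ρ ^ k := by
        rw [pow_succ' ρ, ← mul_assoc, div_mul_cancel₀ _ hρ.ne']
      rw [hsum, htarget]
      refine ha.trans (max_le (le_of_eq ?_) ?_)
      · field_simp
      · rw [Finset.card_univ, Fintype.card_fin]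
        have hpos : 0 ≤ (D ^ 2 / c + D) * ρ ^ k := by positivity
        nlinarith [mul_le_mul_of_nonneg_right hn hk.le]

end InnerProductSpace

lemma isCompact_nfoldSum {d : ℕ} (n : ℕ) {E : Set (EuclideanSpace ℝ (Fin d))}
    (hE : IsCompact E) : IsCompact (nfoldSum n E) := by
  have h : nfoldSum n E = (fun x : Fin n → EuclideanSpace ℝ (Fin d) => ∑ i, x i) ''
      univ.pi fun _ => E := by
    ext y
    simp only [nfoldSum, mem_ofPred_eq, mem_image, mem_univ_pi, eq_comm]
  rw [h]
  exact (isCompact_univ_pi fun _ => hE).image (by fun_prop)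

/-- Every self-similar set in `ℝ^d` not contained in an affine hyperplane is
arithmetically thick. -/
theorem selfSimilar_arithmetically_thick {d ℓ : ℕ} (hl : 0 < ℓ)
    (φ : Fin ℓ → EuclideanSpace ℝ (Fin d) → EuclideanSpace ℝ (Fin d))
    (hsim : ∀ i, ∃ r : ℝ, 0 < r ∧ r < 1 ∧
      ∀ x y, dist (φ i x) (φ i y) = r * dist x y)
    (E : Set (EuclideanSpace ℝ (Fin d))) (hne : E.Nonempty) (hcomp : IsCompact E)
    (hattr : E = ⋃ i, φ i '' E)
    (hhyp : ¬ ∃ (v : EuclideanSpace ℝ (Fin d)) (c : ℝ), v ≠ 0 ∧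
      ∀ x ∈ E, ⟪x, v⟫ = c) :
    ArithmeticallyThick E := by
  have : Nonempty (Fin ℓ) := ⟨⟨0, hl⟩⟩
  choose r hr0 hr1 hdist using hsim
  have hφ : ∀ i, IsSimilarityInto E (r i) (φ i) := fun i =>
    ⟨hr0 i, (hr1 i).le, hdist i, fun x hx => by
      rw [hattr]
      exact mem_iUnion.2 ⟨i, x, hx, rfl⟩⟩
  obtain ⟨t, ψ, b, c, ρ, hc, hρ1, hψ, ht⟩ := exists_similarities_common_ratio hφ hr1 hattr.subset
    hcomp hne (affineSpan_eq_top_of_not_subset_hyperplane hne hhyp)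
  have hρ : 0 < ρ := by
    obtain ⟨p, hp, -⟩ := ht 0
    exact (hψ p hp).pos
  obtain ⟨D, hcD, hD⟩ : ∃ D, c ≤ D ∧ ∀ p ∈ t, ‖ψ p b - b‖ ≤ D := by
    obtain ⟨B, hB⟩ := (t.image fun p => ‖ψ p b - b‖).exists_le
    exact ⟨max c B, le_max_left _ _, fun p hp =>
      (hB _ (Finset.mem_image_of_mem _ hp)).trans (le_max_right _ _)⟩
  have hD0 : 0 < D := hc.trans_le hcD
  set C : ℝ := (D ^ 2 / c + D) / ρ
  have hC0 : 0 < C := by positivity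
  obtain ⟨n, hn⟩ := exists_nat_ge (C / (c / 2))
  have hn' : C ≤ n * (c / 2) := (div_le_iff₀ (by positivity)).1 hn
  refine ⟨n, ?_, n • b, ?_⟩
  · have : (0 : ℝ) < n := lt_of_lt_of_le (by positivity) hn
    exact_mod_cast this
  rw [mem_interior_iff_mem_nhds]
  refine Filter.mem_of_superset (closedBall_mem_nhds _ hC0) fun y hy => ?_
  obtain ⟨x₀, hx₀⟩ := hne
  rw [← (isCompact_nfoldSum n hcomp).isClosed.closure_eq, Metric.mem_closure_iff]
  intro ε hε
  obtain ⟨k, hk⟩ := exists_pow_lt_of_lt_one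
    (show 0 < ε / (C + n * dist b x₀) by positivity) hρ1
  obtain ⟨g, hg, hgy⟩ := exists_similarities_norm_sub_sum_le hc hcD hρ hψ hD ht hn'
    (by rwa [mem_closedBall, dist_eq_norm] at hy) k
  refine ⟨∑ i, g i x₀, ⟨fun i => g i x₀, fun i => (hg i).mapsTo hx₀, rfl⟩, ?_⟩
  have hsum : dist (∑ i, g i b) (∑ i, g i x₀) ≤ n * dist b x₀ * ρ ^ k := by
    refine (dist_sum_sum_le _ _ _).trans (le_of_eq ?_)
    simp only [(hg _).dist_eq, Finset.sum_const, Finset.card_univ, Fintype.card_fin, nsmul_eq_mul]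
    ring
  rw [← dist_eq_norm] at hgy
  rw [lt_div_iff₀ (by positivity)] at hk
  calc dist y (∑ i, g i x₀) ≤ C * ρ ^ k + n * dist b x₀ * ρ ^ k :=
        (dist_triangle _ _ _).trans (add_le_add hgy hsum)
    _ = ρ ^ k * (C + n * dist b x₀) := by ring
    _ < ε := hk
end

section
/- Let E be the attractor of an affine iterated function system Φ = {φ_i(x) = T_i x + a_i}_{i=1}^ℓ on ℝ^d with d ≥ 2, where each T_i is an invertible d×d real matrix with operator norm strictly less than 1. Suppose E is not contained in an affine hyperplane of ℝ^d and that T_i T_j = T_j T_i for all 1 ≤ i, j ≤ ℓ. Then E is arithmetically thick. -/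
open Metric Set
open scoped RealInnerProductSpace

section Contraction

variable {V : Type*} [NormedAddCommGroup V] [NormedSpace ℝ V]

/-- A bounded set `B` each of whose points is the image of a point of `B` under a uniformly
contracting affine map preserving the closed set `S` is contained in `S`. -/
theorem subset_of_forall_exists_contracting [ProperSpace V] {S B : Set V} {c : ℝ}
    (hS : IsClosed S) (hne : S.Nonempty) (hB : Bornology.IsBounded B) (hc0 : 0 ≤ c) (hc1 : c < 1)
    (h : ∀ x ∈ B, ∃ (L : V →L[ℝ] V) (q y : V), ‖L‖ ≤ c ∧ (∀ w ∈ S, L w + q ∈ S) ∧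
      y ∈ B ∧ x = L y + q) :
    B ⊆ S := by
  obtain ⟨s, hs⟩ := hne
  obtain ⟨r, hr⟩ := hB.subset_closedBall s
  have key : ∀ (k : ℕ), ∀ x ∈ B, infDist x S ≤ c ^ k * r := by
    intro k
    induction k with
    | zero =>
      intro x hx
      simpa using (infDist_le_dist_of_mem hs).trans (mem_closedBall.1 (hr hx))
    | succ k ih =>
      intro x hx
      obtain ⟨L, q, y, hL, hLS, hy, rfl⟩ := h x hx
      obtain ⟨w, hw, hyw⟩ := hS.exists_infDist_eq_dist ⟨s, hs⟩ y
      calc infDist (L y + q) S ≤ dist (L y + q) (L w + q) := infDist_le_dist_of_mem (hLS w hw)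
        _ = ‖L (y - w)‖ := by rw [dist_add_right, dist_eq_norm, map_sub]
        _ ≤ c * ‖y - w‖ := L.le_of_opNorm_le hL _
        _ = c * infDist y S := by rw [hyw, dist_eq_norm]
        _ ≤ c * (c ^ k * r) := by gcongr; exact ih y hy
        _ = c ^ (k + 1) * r := by ring
  intro x hx
  rw [hS.mem_iff_infDist_zero ⟨s, hs⟩]
  refine le_antisymm ?_ infDist_nonneg
  have hlim : Filter.Tendsto (fun k : ℕ => c ^ k * r) Filter.atTop (nhds (0 * r)) :=
    (tendsto_pow_atTop_nhds_zero_of_lt_one hc0 hc1).mul_const r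
  rw [zero_mul] at hlim
  exact ge_of_tendsto' hlim fun k => key k x hx

end Contraction

section Translations

variable {V : Type*} [NormedAddCommGroup V] [NormedSpace ℝ V]

/-- The translation vectors `t` for which the affine map `x ↦ L x + t` maps `E` into itself. -/
def selfMapTranslations (E : Set V) (L : V →L[ℝ] V) : Set V :=
  {t | ∀ x ∈ E, L x + t ∈ E}

theorem add_map_mem_selfMapTranslations {E : Set V} {L K : V →L[ℝ] V} {t s : V}
    (ht : t ∈ selfMapTranslations E L) (hs : s ∈ selfMapTranslations E K) :
    t + L s ∈ selfMapTranslations E (L * K) := by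
  intro x hx
  have := ht _ (hs x hx)
  rwa [map_add, add_assoc, add_comm (L s)] at this

theorem vectorSpan_selfMapTranslations_le_mul {E : Set V} (L : V →L[ℝ] V) {K : V →L[ℝ] V}
    (hK : (selfMapTranslations E K).Nonempty) :
    vectorSpan ℝ (selfMapTranslations E L) ≤ vectorSpan ℝ (selfMapTranslations E (L * K)) := by
  obtain ⟨s, hs⟩ := hK
  refine Submodule.span_le.2 ?_
  rintro _ ⟨t, ht, t', ht', rfl⟩
  have := vsub_mem_vectorSpan ℝ (add_map_mem_selfMapTranslations ht hs)
    (add_map_mem_selfMapTranslations ht' hs)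
  simpa using this

theorem map_vectorSpan_selfMapTranslations_le_mul {E : Set V} {L : V →L[ℝ] V} (K : V →L[ℝ] V)
    (hL : (selfMapTranslations E L).Nonempty) :
    (vectorSpan ℝ (selfMapTranslations E K)).map (L : V →ₗ[ℝ] V) ≤
      vectorSpan ℝ (selfMapTranslations E (L * K)) := by
  obtain ⟨s, hs⟩ := hL
  rw [Submodule.map_le_iff_le_comap]
  refine Submodule.span_le.2 ?_
  rintro _ ⟨t, ht, t', ht', rfl⟩
  have := vsub_mem_vectorSpan ℝ (add_map_mem_selfMapTranslations hs ht)
    (add_map_mem_selfMapTranslations hs ht')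
  simpa using this

/-- The invertible contraction `L` maps a suitable ball onto a set whose translates by the points
of a large box in the lattice spanned by `b`, shifted by `τ N`, cover that ball. -/
theorem exists_closedBall_covered_by_lattice_translates [CompleteSpace V] {ι : Type*} [Fintype ι]
    (b : Module.Basis ι ℝ V) {L : V →L[ℝ] V} (hunit : IsUnit L) (hL : ‖L‖ < 1) (τ : ℕ → V) :
    ∃ (N : ℕ) (x₀ : V) (R : ℝ), 0 < N ∧ 0 < R ∧ ∀ x ∈ closedBall x₀ R,
      ∃ m : ι → ℕ, (∀ i, m i ≤ N) ∧ ∃ y ∈ closedBall x₀ R,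
        x = L y + (τ N + ∑ i, m i • b i) := by
  obtain ⟨u, rfl⟩ := hunit
  set K : V →L[ℝ] V := ↑u⁻¹
  have hLK : ∀ v, (u : V →L[ℝ] V) (K v) = v := fun v =>
    congrArg (fun f : V →L[ℝ] V => f v) u.mul_inv
  set R : ℝ := ‖K‖ * ∑ i, ‖b i‖ + 1
  have hRpos : 0 < R := by positivity
  set e : V →L[ℝ] (ι → ℝ) := (b.equivFunL : V →L[ℝ] (ι → ℝ))
  have hsum : ∀ v, ∑ i, e v i • b i = v := fun v => b.sum_equivFun v
  obtain ⟨M, hM⟩ := exists_nat_gt (‖e‖ * R)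
  obtain ⟨w, hw⟩ := isUnit_one_sub_of_norm_lt_one hL
  set x₀ : V := (↑w⁻¹ : V →L[ℝ] V) (τ (2 * M) + ∑ i, (M : ℝ) • b i)
  have hfix : x₀ - (u : V →L[ℝ] V) x₀ = τ (2 * M) + ∑ i, (M : ℝ) • b i := by
    have := congrArg (fun f : V →L[ℝ] V => f (τ (2 * M) + ∑ i, (M : ℝ) • b i)) w.mul_inv
    rw [hw] at this
    exact this
  have hMpos : 0 < M := by
    have : (0 : ℝ) < M := lt_of_le_of_lt (by positivity) hM
    exact_mod_cast this
  refine ⟨2 * M, x₀, R, by omega, hRpos, fun x hx => ?_⟩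
  have hcoord : ∀ i, |e (x - x₀) i| ≤ M := fun i =>
    calc |e (x - x₀) i| ≤ ‖e (x - x₀)‖ := norm_le_pi_norm (e (x - x₀)) i
      _ ≤ ‖e‖ * ‖x - x₀‖ := e.le_opNorm _
      _ ≤ ‖e‖ * R := by gcongr; exact mem_closedBall_iff_norm.1 hx
      _ ≤ M := hM.le
  have hnonneg : ∀ i, 0 ≤ e (x - x₀) i + M := fun i => by
    linarith [(abs_le.1 (hcoord i)).1]
  set m : ι → ℕ := fun i => ⌊e (x - x₀) i + M⌋₊
  set r : V := ∑ i, (e (x - x₀) i + M - m i) • b i with hr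
  have hrnorm : ‖r‖ ≤ ∑ i, ‖b i‖ := by
    refine (norm_sum_le _ _).trans (Finset.sum_le_sum fun i _ => ?_)
    rw [norm_smul]
    refine mul_le_of_le_one_left (norm_nonneg _) ?_
    rw [Real.norm_eq_abs, abs_le]
    constructor
    · linarith [Nat.floor_le (hnonneg i)]
    · linarith [Nat.lt_floor_add_one (e (x - x₀) i + M)]
  refine ⟨m, fun i => ?_, x₀ + K r, ?_, ?_⟩
  · refine Nat.floor_le_of_le ?_
    push_cast
    linarith [(abs_le.1 (hcoord i)).2]
  · rw [mem_closedBall_iff_norm, add_sub_cancel_left]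
    calc ‖K r‖ ≤ ‖K‖ * ‖r‖ := K.le_opNorm r
      _ ≤ ‖K‖ * ∑ i, ‖b i‖ := by gcongr
      _ ≤ R := by linarith
  · have hr' : r = (x - x₀) + ∑ i, (M : ℝ) • b i - ∑ i, m i • b i := by
      simp only [hr, sub_smul, add_smul, Finset.sum_sub_distrib, Finset.sum_add_distrib, hsum,
        Nat.cast_smul_eq_nsmul]
    rw [map_add, hLK, hr', eq_sub_of_add_eq' hfix.symm]
    abel

/-- Adding up `ι × Fin N` self-maps of `E` with translation parts `t` or `b i + t`. -/
theorem map_add_lattice_mem_sums {ι : Type*} [Fintype ι] {E : Set V} {L : V →L[ℝ] V} {t : V}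
    {b : ι → V} (ht : t ∈ selfMapTranslations E L)
    (hb : ∀ i, b i + t ∈ selfMapTranslations E L) {N : ℕ} {m : ι → ℕ} (hm : ∀ i, m i ≤ N)
    {s : V} (hs : ∃ x : ι × Fin N → V, (∀ i, x i ∈ E) ∧ s = ∑ i, x i) :
    ∃ x : ι × Fin N → V, (∀ i, x i ∈ E) ∧
      L s + ((Fintype.card ι * N) • t + ∑ i, m i • b i) = ∑ i, x i := by
  obtain ⟨x, hx, rfl⟩ := hs
  refine ⟨fun p => L (x p) + ((if p.2.val < m p.1 then b p.1 else 0) + t), fun p => ?_, ?_⟩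
  · dsimp only
    split_ifs
    · exact hb _ _ (hx p)
    · simpa using ht _ (hx p)
  · have hcount : ∀ i, ∑ k : Fin N, (if k.val < m i then b i else 0) = m i • b i := by
      intro i
      rw [← Finset.sum_filter, Finset.sum_const, Fin.card_filter_val_lt, min_eq_right (hm i)]
    rw [Finset.sum_add_distrib, Finset.sum_add_distrib, map_sum, Fintype.sum_prod_type
      (fun p : ι × Fin N => if p.2.val < m p.1 then b p.1 else 0)]
    simp only [hcount, Finset.sum_const, Finset.card_univ, Fintype.card_prod, Fintype.card_fin]
    abel

/-- If the translation parts of the self-maps of `E` with a fixed invertible contracting linear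
part `L` affinely span the space, then some iterated sum of `E` contains a ball. -/
theorem exists_closedBall_subset_sums_of_vectorSpan_eq_top [FiniteDimensional ℝ V] [Nontrivial V]
    {E : Set V} (hne : E.Nonempty) (hcomp : IsCompact E) {L : V →L[ℝ] V} (hunit : IsUnit L)
    (hL : ‖L‖ < 1) (hspan : vectorSpan ℝ (selfMapTranslations E L) = ⊤) :
    ∃ n : ℕ, 0 < n ∧ ∃ (x₀ : V) (R : ℝ), 0 < R ∧
      closedBall x₀ R ⊆ {y | ∃ x : Fin n → V, (∀ i, x i ∈ E) ∧ y = ∑ i, x i} := by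
  have : ProperSpace V := FiniteDimensional.proper_real V
  have hU : (selfMapTranslations E L).Nonempty := by
    rw [Set.nonempty_iff_ne_empty]
    intro h
    rw [h, vectorSpan_empty] at hspan
    exact bot_ne_top hspan
  obtain ⟨t, ht⟩ := hU
  rw [vectorSpan_eq_span_vsub_set_right ℝ ht] at hspan
  obtain ⟨ι, b, hb⟩ : ∃ (ι : Set V) (b : Module.Basis ι ℝ V),
      ∀ i, b i + t ∈ selfMapTranslations E L := by
    refine ⟨_, Module.Basis.ofSpan hspan.ge, fun i => ?_⟩
    obtain ⟨u, hu, hui⟩ := Module.Basis.ofSpan_subset hspan.ge ⟨i, rfl⟩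
    rw [← hui]
    simpa using hu
  have : Fintype ι := FiniteDimensional.fintypeBasisIndex b
  have := b.index_nonempty
  obtain ⟨N, x₀, R, hN, hR, hcover⟩ :=
    exists_closedBall_covered_by_lattice_translates b hunit hL (fun N => (Fintype.card ι * N) • t)
  refine ⟨Fintype.card ι * N, Nat.mul_pos Fintype.card_pos hN, x₀, R, hR, ?_⟩
  set S : Set V := {y | ∃ x : ι × Fin N → V, (∀ i, x i ∈ E) ∧ y = ∑ i, x i} with hS
  have hScomp : IsCompact S := by
    have himage : S = (fun x : ι × Fin N → V => ∑ i, x i) '' Set.univ.pi fun _ => E := by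
      ext y
      simp [hS, eq_comm]
    rw [himage]
    exact (isCompact_univ_pi fun _ => hcomp).image (by fun_prop)
  have hSne : S.Nonempty := by
    obtain ⟨x, hx⟩ := hne
    exact ⟨_, fun _ => x, fun _ => hx, rfl⟩
  have hsub : closedBall x₀ R ⊆ S :=
    subset_of_forall_exists_contracting hScomp.isClosed hSne isBounded_closedBall (norm_nonneg L)
      hL fun x hx => by
        obtain ⟨m, hm, y, hy, hxy⟩ := hcover x hx
        exact ⟨L, _, y, le_rfl, fun w hw => map_add_lattice_mem_sums ht hb hm hw, hy, hxy⟩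
  intro y hy
  obtain ⟨x, hx, hxy⟩ := hsub hy
  let f := Fintype.equivFinOfCardEq (by rw [Fintype.card_prod, Fintype.card_fin] :
    Fintype.card (ι × Fin N) = Fintype.card ι * N)
  exact ⟨x ∘ f.symm, fun i => hx _, by rw [hxy]; exact (Equiv.sum_comp f.symm x).symm⟩

end Translations

/-- For a self-affine set not contained in an affine hyperplane and whose maps have commuting
linear parts, the self-maps with some common linear part have affinely spanning translations. -/
theorem exists_vectorSpan_selfMapTranslations_eq_top {V ι : Type*} [NormedAddCommGroup V]
    [InnerProductSpace ℝ V] [FiniteDimensional ℝ V] [Finite ι] [Nonempty ι]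
    {T : ι → V →L[ℝ] V} {a : ι → V} (hinv : ∀ i, IsUnit (T i)) (hnorm : ∀ i, ‖T i‖ < 1)
    (hcomm : ∀ i j, T i * T j = T j * T i) {E : Set V} (hcomp : IsCompact E)
    (hattr : E = ⋃ i, (fun x => T i x + a i) '' E)
    (hhyp : ¬ ∃ (v : V) (c : ℝ), v ≠ 0 ∧ ∀ x ∈ E, ⟪x, v⟫ = c) :
    ∃ L : V →L[ℝ] V, IsUnit L ∧ ‖L‖ < 1 ∧ vectorSpan ℝ (selfMapTranslations E L) = ⊤ := by
  have ha : ∀ i, a i ∈ selfMapTranslations E (T i) := by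
    intro i x hx
    rw [hattr]
    exact mem_iUnion.2 ⟨i, x, hx, rfl⟩
  have hE : ∀ x ∈ E, ∃ i, ∃ y ∈ E, x = T i y + a i := by
    intro x hx
    rw [hattr] at hx
    obtain ⟨i, y, hy, rfl⟩ := mem_iUnion.1 hx
    exact ⟨i, y, hy, rfl⟩
  set Z := Subsemigroup.closure (range T)
  have hTZ : ∀ i, T i ∈ Z := fun i => Subsemigroup.subset_closure ⟨i, rfl⟩
  have hZunit : ∀ L ∈ Z, IsUnit L := fun L hL => by
    induction hL using Subsemigroup.closure_induction with
    | mem L h => obtain ⟨i, rfl⟩ := h; exact hinv i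
    | mul K L _ _ hK hL => exact hK.mul hL
  have hZnorm : ∀ L ∈ Z, ‖L‖ < 1 := fun L hL => by
    induction hL using Subsemigroup.closure_induction with
    | mem L h => obtain ⟨i, rfl⟩ := h; exact hnorm i
    | mul K L _ _ hK hL =>
      exact (norm_mul_le K L).trans_lt (mul_lt_one_of_nonneg_of_lt_one_left (norm_nonneg K) hK hL.le)
  have hZne : ∀ L ∈ Z, (selfMapTranslations E L).Nonempty := fun L hL => by
    induction hL using Subsemigroup.closure_induction with
    | mem L h => obtain ⟨i, rfl⟩ := h; exact ⟨_, ha i⟩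
    | mul K L _ _ hK hL =>
      exact ⟨_, add_map_mem_selfMapTranslations hK.some_mem hL.some_mem⟩
  have hZcomm : ∀ K ∈ Z, ∀ L ∈ Z, K * L = L * K := by
    have := Subsemigroup.isMulCommutative_closure (V →L[ℝ] V) (s := range T)
      (by rintro _ ⟨i, rfl⟩ _ ⟨j, rfl⟩; exact hcomm i j)
    intro K hK L hL
    exact congrArg Subtype.val (mul_comm' (⟨K, hK⟩ : Z) ⟨L, hL⟩)
  -- choose a linear part with the largest possible span; it contains all the other spans
  obtain ⟨L, hLZ, hmax⟩ : ∃ L ∈ Z, ∀ K ∈ Z,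
      vectorSpan ℝ (selfMapTranslations E K) ≤ vectorSpan ℝ (selfMapTranslations E L) := by
    let f : (V →L[ℝ] V) → ℕ := fun L => Module.finrank ℝ (vectorSpan ℝ (selfMapTranslations E L))
    have hfin : (f '' Z).Finite := (Set.finite_Iic (Module.finrank ℝ V)).subset (by
      rintro _ ⟨L, -, rfl⟩
      exact Submodule.finrank_le _)
    obtain ⟨_, ⟨L, hLZ, rfl⟩, hLmax⟩ := Set.exists_max_image (f '' Z) id hfin
      ⟨_, T (Classical.arbitrary ι), hTZ _, rfl⟩
    refine ⟨L, hLZ, fun K hK => ?_⟩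
    have hle := vectorSpan_selfMapTranslations_le_mul (E := E) L (hZne K hK)
    rw [Submodule.eq_of_le_of_finrank_le hle (hLmax _ ⟨L * K, mul_mem hLZ hK, rfl⟩),
      hZcomm L hLZ K hK]
    exact vectorSpan_selfMapTranslations_le_mul K (hZne L hLZ)
  refine ⟨L, hZunit L hLZ, hZnorm L hLZ, ?_⟩
  set W := vectorSpan ℝ (selfMapTranslations E L)
  have hTW : ∀ i, ∀ w ∈ W, T i w ∈ W := fun i w hw =>
    hmax _ (mul_mem (hTZ i) hLZ)
      (map_vectorSpan_selfMapTranslations_le_mul L ⟨_, ha i⟩ ⟨w, hw, rfl⟩)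
  have hcommutator : ∀ i j, (a i - T j (a i)) - (a j - T i (a j)) ∈ W := by
    intro i j
    have h := vsub_mem_vectorSpan ℝ (add_map_mem_selfMapTranslations (ha i) (ha j))
      (hcomm i j ▸ add_map_mem_selfMapTranslations (ha j) (ha i))
    convert hmax _ (mul_mem (hTZ i) (hTZ j)) h using 1
    rw [vsub_eq_sub]
    abel
  let o : ι := Classical.arbitrary ι
  obtain ⟨u, hu⟩ := isUnit_one_sub_of_norm_lt_one (hnorm o)
  have hu_apply : ∀ v, (u : V →L[ℝ] V) v = v - T o v := fun v => by rw [hu]; rfl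
  set p : V := (↑u⁻¹ : V →L[ℝ] V) (a o)
  have hpfix : p - T o p = a o := by
    rw [← hu_apply]
    exact congrArg (fun f : V →L[ℝ] V => f (a o)) u.mul_inv
  have hinj : Function.Injective (u : V →L[ℝ] V) :=
    Function.LeftInverse.injective (g := (↑u⁻¹ : V →L[ℝ] V)) fun v =>
      congrArg (fun f : V →L[ℝ] V => f v) u.inv_mul
  have hmapW : W.map ((u : V →L[ℝ] V) : V →ₗ[ℝ] V) = W := by
    refine Submodule.eq_of_le_of_finrank_le ?_ ?_
    · rintro _ ⟨w, hw, rfl⟩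
      have : w - T o w ∈ W := W.sub_mem hw (hTW o w hw)
      rwa [← hu_apply] at this
    · exact (Submodule.equivMapOfInjective _ hinj W).finrank_eq.le
  have hq : ∀ i, T i p + a i - p ∈ W := by
    intro i
    have h : (u : V →L[ℝ] V) (T i p + a i - p) ∈ W := by
      have hTT : T o (T i p) = T i (T o p) :=
        congrArg (fun f : V →L[ℝ] V => f p) (hcomm o i)
      convert hcommutator i o using 1
      rw [hu_apply, ← hpfix]
      simp only [map_add, map_sub, hTT]
      abel
    rw [← hmapW] at h
    obtain ⟨w, hw, hwq⟩ := h
    rwa [← hinj hwq]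
  have hsub : E ⊆ {x | x - p ∈ W} := by
    obtain ⟨k, hk⟩ := Finite.exists_max fun i => ‖T i‖
    refine subset_of_forall_exists_contracting
      (W.closed_of_finiteDimensional.preimage (by fun_prop : Continuous fun x : V => x - p))
      ⟨p, by simp⟩ hcomp.isBounded (norm_nonneg (T k)) (hnorm k) fun x hx => ?_
    obtain ⟨i, y, hy, rfl⟩ := hE x hx
    refine ⟨T i, a i, y, hk i, fun w hw => ?_, hy, rfl⟩
    have : T i w + a i - p = T i (w - p) + (T i p + a i - p) := by
      rw [map_sub]
      abel
    rw [mem_ofPred_eq, this]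
    exact W.add_mem (hTW i _ hw) (hq i)
  by_contra hWtop
  rw [← Submodule.orthogonal_eq_bot_iff, Submodule.eq_bot_iff] at hWtop
  push Not at hWtop
  obtain ⟨v, hv, hv0⟩ := hWtop
  refine hhyp ⟨v, ⟪p, v⟫, hv0, fun x hx => ?_⟩
  rw [← sub_eq_zero, ← inner_sub_left]
  exact Submodule.inner_right_of_mem_orthogonal (hsub hx) hv

/-- The attractor of an affine IFS `{x ↦ T_i x + a_i}` on `ℝ^d`, `d ≥ 2`, with commuting
linear parts, is arithmetically thick provided it is not contained in an affine
hyperplane. -/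
theorem selfAffine_commuting_arithmetically_thick {d ℓ : ℕ} (hd : 2 ≤ d) (hl : 0 < ℓ)
    (T : Fin ℓ → Matrix (Fin d) (Fin d) ℝ) (a : Fin ℓ → EuclideanSpace ℝ (Fin d))
    (hinv : ∀ i, IsUnit (T i))
    (hnorm : ∀ i, ∃ c : ℝ, 0 ≤ c ∧ c < 1 ∧
      ∀ x : EuclideanSpace ℝ (Fin d), ‖Matrix.toEuclideanLin (T i) x‖ ≤ c * ‖x‖)
    (E : Set (EuclideanSpace ℝ (Fin d))) (hne : E.Nonempty) (hcomp : IsCompact E)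
    (hattr : E = ⋃ i, (fun x => Matrix.toEuclideanLin (T i) x + a i) '' E)
    (hhyp : ¬ ∃ (v : EuclideanSpace ℝ (Fin d)) (c : ℝ), v ≠ 0 ∧ ∀ x ∈ E, ⟪x, v⟫ = c)
    (hcomm : ∀ i j, T i * T j = T j * T i) :
    ArithmeticallyThick E := by
  have : Nonempty (Fin ℓ) := ⟨⟨0, hl⟩⟩
  have : Nonempty (Fin d) := ⟨⟨0, by omega⟩⟩
  obtain ⟨L, hunit, hL, hspan⟩ := exists_vectorSpan_selfMapTranslations_eq_top
    (T := fun i => Matrix.toEuclideanCLM (𝕜 := ℝ) (T i)) (a := a)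
    (fun i => (hinv i).map Matrix.toEuclideanCLM)
    (fun i => by
      obtain ⟨c, hc0, hc1, hc⟩ := hnorm i
      exact (ContinuousLinearMap.opNorm_le_bound _ hc0 hc).trans_lt hc1)
    (fun i j => by rw [← map_mul, ← map_mul, hcomm i j])
    hcomp hattr hhyp
  obtain ⟨n, hn, x₀, R, hR, hsub⟩ :=
    exists_closedBall_subset_sums_of_vectorSpan_eq_top hne hcomp hunit hL hspan
  exact ⟨n, hn, x₀, interior_mono hsub (ball_subset_interior_closedBall (mem_ball_self hR))⟩
end

section
/- Let E be the attractor of an affine iterated function system Φ = {φ_i(x) = T_i x + a_i}_{i=1}^ℓ on ℝ^2, where each T_i is an invertible 2×2 real matrix with operator norm strictly less than 1. If E is not contained in a straight line in ℝ^2, then E is arithmetically thick. -/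
open Metric Set
open scoped RealInnerProductSpace

namespace PlanarThick

open Filter Topology

/-- The Euclidean plane. -/
abbrev Plane := EuclideanSpace ℝ (Fin 2)

/-! ### Steering -/

section Steering

lemma norm_sub_le_max {H : Type*} [NormedAddCommGroup H] [InnerProductSpace ℝ H]
    {e q : H} {c C : ℝ} (hc : 0 < c) (hq : ‖q‖ ≤ C) (hin : c * ‖e‖ ≤ ⟪q, e⟫) :
    ‖e - q‖ ≤ max (‖e‖ - c / 2) (C ^ 2 / c + c + C) := by
  have hC : 0 ≤ C := (norm_nonneg q).trans hq
  rcases le_or_gt (C ^ 2 / c + c) ‖e‖ with h | h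
  · refine le_max_of_le_left ?_
    have hpos : 0 ≤ C ^ 2 / c := by positivity
    refine abs_le_of_sq_le_sq' ?_ (by linarith) |>.2
    have h1 : ‖e - q‖ ^ 2 = ‖e‖ ^ 2 - 2 * ⟪q, e⟫ + ‖q‖ ^ 2 := by
      rw [norm_sub_sq_real, real_inner_comm]
    have h2 : C ^ 2 + c * c ≤ c * ‖e‖ := by
      have := mul_le_mul_of_nonneg_left h hc.le
      rwa [mul_add, mul_div_cancel₀ _ hc.ne'] at this
    have h3 : ‖q‖ ^ 2 ≤ C ^ 2 := pow_le_pow_left₀ (norm_nonneg q) hq 2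
    nlinarith
  · refine le_max_of_le_right ?_
    have := norm_sub_le e q
    linarith

/-- The sum of finitely many points of `E` indexed by a finite type is a point of the
corresponding multiple sum. -/
lemma sum_mem_nfoldSum {ι : Type*} [Fintype ι] {E : Set Plane} (y : ι → Plane)
    (hy : ∀ i, y i ∈ E) : ∑ i, y i ∈ nfoldSum (Fintype.card ι) E :=
  ⟨fun i => y ((Fintype.equivFin ι).symm i), fun _ => hy _,
    ((Fintype.equivFin ι).symm.sum_comp y).symm⟩

lemma isCompact_nfoldSum {E : Set Plane} (hE : IsCompact E) (n : ℕ) :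
    IsCompact (nfoldSum n E) := by
  have h : nfoldSum n E = (fun x : Fin n → Plane => ∑ i, x i) '' (Set.univ.pi fun _ => E) := by
    ext y
    simp only [nfoldSum, mem_ofPred_eq, mem_image, Set.mem_pi, mem_univ, true_imp_iff]
    exact ⟨fun ⟨x, hx, hy⟩ => ⟨x, hx, hy.symm⟩, fun ⟨x, hx, hy⟩ => ⟨x, hx, hy.symm⟩⟩
  rw [h]
  exact (isCompact_univ_pi fun _ => hE).image (by fun_prop)

/-- One round of steering: every player `j ∈ s` moves once, and the error decreases by a definite
amount unless it is already bounded. -/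
lemma exists_round {X ι : Type*} [DecidableEq ι] {P Q : X → Prop} {x : X → Plane}
    {N : Plane →L[ℝ] Plane} {c C : ℝ} (hc : 0 < c)
    (hstep : ∀ s e, P s → ∃ s', Q s' ∧ ‖N (x s' - x s)‖ ≤ C ∧ c * ‖e‖ ≤ ⟪N (x s' - x s), e⟫)
    (S : ι → X) (hS : ∀ j, P (S j)) (e : Plane) (s : Finset ι) :
    ∃ S' : ι → X, (∀ j ∈ s, Q (S' j)) ∧
      ‖e - ∑ j ∈ s, N (x (S' j) - x (S j))‖ ≤
        max (‖e‖ - s.card * (c / 2)) (C ^ 2 / c + c + C) := by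
  induction s using Finset.induction_on with
  | empty => exact ⟨S, by simp, by simp⟩
  | insert i s his ih =>
    obtain ⟨S', hQ, hS'⟩ := ih
    set e' := e - ∑ j ∈ s, N (x (S' j) - x (S j)) with he'
    obtain ⟨t, ht, htC, hte⟩ := hstep (S i) e' (hS i)
    refine ⟨Function.update S' i t, ?_, ?_⟩
    · intro j hj
      by_cases hji : j = i
      · subst hji; simpa using ht
      · rw [Function.update_of_ne hji]
        exact hQ j (Finset.mem_of_mem_insert_of_ne hj hji)
    · have hsum : ∑ j ∈ s, N (x (Function.update S' i t j) - x (S j)) =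
          ∑ j ∈ s, N (x (S' j) - x (S j)) := by
        refine Finset.sum_congr rfl fun j hj => ?_
        have hji : j ≠ i := fun h => his (h ▸ hj)
        rw [Function.update_of_ne hji]
      rw [Finset.sum_insert his, hsum, Function.update_self, Finset.card_insert_of_notMem his,
        add_comm, ← sub_sub, ← he']
      refine (norm_sub_le_max hc htC hte).trans (max_le ?_ (le_max_right _ _))
      rcases le_max_iff.1 hS' with h | h
      · refine le_max_of_le_left ?_
        push_cast
        linarith
      · exact le_max_of_le_right (by linarith)

/-- The steering principle. States `s` carry positions `x s`; in round `k` every admissible state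
can be moved in any prescribed direction by an amount which, measured by `N k`, is bounded from
above and below. If the positions are approximated by sums of points of `E`, then `E` is
arithmetically thick. -/
theorem thick_of_steering {X τ : Type*} [Fintype τ] [Nonempty τ] {E : Set Plane}
    (hE : IsCompact E) (P : ℕ → X → Prop) (x : X → Plane) (N : ℕ → Plane →L[ℝ] Plane)
    (t η : ℕ → ℝ) {c C B : ℝ} (hc : 0 < c) (hB : 0 < B) (hinit : ∃ s, P 0 s)
    (hstep : ∀ k s e, P k s → ∃ s', P (k + 1) s' ∧ ‖N k (x s' - x s)‖ ≤ C ∧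
      c * ‖e‖ ≤ ⟪N k (x s' - x s), e⟫)
    (hN : ∀ k v, ‖N (k + 1) v‖ ≤ B * ‖N k v‖)
    (hNt : ∀ k v, ‖v‖ ≤ t k * ‖N k v‖) (ht : Tendsto t atTop (𝓝 0))
    (happrox : ∀ k s, P k s → ∃ y : τ → Plane, (∀ i, y i ∈ E) ∧ ‖∑ i, y i - x s‖ ≤ η k)
    (hη : Tendsto η atTop (𝓝 0)) : ArithmeticallyThick E := by
  obtain ⟨s₀, hs₀⟩ := hinit
  have hC : 0 ≤ C := by
    obtain ⟨s', -, h, -⟩ := hstep 0 s₀ 0 hs₀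
    exact (norm_nonneg _).trans h
  set R := C ^ 2 / c + c + C with hR
  have hRpos : 0 < R := by positivity
  obtain ⟨n, hn⟩ := exists_nat_gt (B * R / (c / 2))
  have hn' : B * R < n * (c / 2) := (div_lt_iff₀ (by positivity)).1 hn
  have hnpos : 0 < n := by
    rcases Nat.eq_zero_or_pos n with h | h
    · subst h
      have : 0 < B * R := by positivity
      simp at hn'; linarith
    · exact h
  have hmain : ∀ z : Plane, ‖N 0 (z - n • x s₀)‖ ≤ B * R → ∀ k, ∃ S : Fin n → X,
      (∀ j, P k (S j)) ∧ ‖N k (z - ∑ j, x (S j))‖ ≤ B * R := by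
    intro z hz k
    induction k with
    | zero => exact ⟨fun _ => s₀, fun _ => hs₀, by simpa using hz⟩
    | succ k ih =>
      obtain ⟨S, hS, hSz⟩ := ih
      obtain ⟨S', hS', h⟩ := exists_round (P := P k) (Q := P (k + 1)) (x := x) (N := N k) hc
        (hstep k) S hS (N k (z - ∑ j, x (S j))) Finset.univ
      refine ⟨S', fun j => hS' j (Finset.mem_univ j), (hN k _).trans ?_⟩
      gcongr
      have heq : N k (z - ∑ j, x (S' j)) =
          N k (z - ∑ j, x (S j)) - ∑ j, N k (x (S' j) - x (S j)) := by
        rw [← map_sum, ← map_sub, Finset.sum_sub_distrib]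
        congr 1
        abel
      rw [heq]
      refine h.trans (max_le ?_ le_rfl)
      simp only [Finset.card_univ, Fintype.card_fin]
      linarith
  have ht0 : ∀ k, 0 ≤ t k := by
    intro k
    obtain ⟨v, hv⟩ := exists_ne (0 : Plane)
    by_contra! hneg
    have h := mul_nonpos_of_nonpos_of_nonneg hneg.le (norm_nonneg (N k v))
    exact hv (norm_le_zero_iff.1 ((hNt k v).trans h))
  refine ⟨Fintype.card (Fin n × τ), by simp [hnpos, Fintype.card_pos], ?_⟩
  have hopen : IsOpen {z : Plane | ‖N 0 (z - n • x s₀)‖ < B * R} :=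
    isOpen_lt (by fun_prop) continuous_const
  refine ⟨n • x s₀, interior_maximal ?_ hopen (by simp; positivity)⟩
  intro z hz
  have hclosed := (isCompact_nfoldSum hE (Fintype.card (Fin n × τ))).isClosed
  have key : ∀ k, ∃ y ∈ nfoldSum (Fintype.card (Fin n × τ)) E,
      dist y z ≤ t k * (B * R) + n * η k := by
    intro k
    obtain ⟨S, hS, hSz⟩ := hmain z (le_of_lt hz) k
    choose y hyE hy using fun j => happrox k (S j) (hS j)
    refine ⟨∑ p : Fin n × τ, y p.1 p.2, sum_mem_nfoldSum _ fun p => hyE _ _, ?_⟩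
    rw [Fintype.sum_prod_type, dist_eq_norm]
    have h1 : ∑ j, ∑ i, y j i - z =
        ∑ j, (∑ i, y j i - x (S j)) - (z - ∑ j, x (S j)) := by
      rw [Finset.sum_sub_distrib]; abel
    rw [h1]
    have h2 : ‖∑ j, (∑ i, y j i - x (S j))‖ ≤ n * η k := by
      refine (norm_sum_le _ _).trans ((Finset.sum_le_sum fun j _ => hy j).trans ?_)
      simp
    have h3 : ‖z - ∑ j, x (S j)‖ ≤ t k * (B * R) := by
      refine (hNt k _).trans ?_
      have := ht0 k
      gcongr
    refine (norm_sub_le _ _).trans ?_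
    linarith
  choose y hyE hy using key
  refine hclosed.mem_of_tendsto (f := y) (b := atTop) ?_ (Eventually.of_forall hyE)
  refine tendsto_iff_dist_tendsto_zero.2 (squeeze_zero (fun _ => dist_nonneg) hy ?_)
  simpa using (ht.mul_const (B * R)).add (hη.const_mul (n : ℝ))

end Steering

/-! ### Linear algebra of the plane -/

section Cross

/-- The determinant of a pair of plane vectors. -/
def cross (u v : Plane) : ℝ := u 0 * v 1 - u 1 * v 0

lemma cross_sub_left (u u' v : Plane) : cross (u - u') v = cross u v - cross u' v := by
  simp [cross]; ring

lemma cross_add_left (u u' v : Plane) : cross (u + u') v = cross u v + cross u' v := by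
  simp [cross]; ring

lemma cross_add_right (u v v' : Plane) : cross u (v + v') = cross u v + cross u v' := by
  simp [cross]; ring

lemma cross_smul_left (a : ℝ) (u v : Plane) : cross (a • u) v = a * cross u v := by
  simp [cross]; ring

lemma cross_smul_right (a : ℝ) (u v : Plane) : cross u (a • v) = a * cross u v := by
  simp [cross]; ring

lemma cross_self (u : Plane) : cross u u = 0 := by
  simp [cross]; ring

lemma cross_swap (u v : Plane) : cross u v = -cross v u := by
  simp only [cross]; ring

@[fun_prop]
lemma continuous_cross {X : Type*} [TopologicalSpace X] {f g : X → Plane} (hf : Continuous f)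
    (hg : Continuous g) : Continuous fun x => cross (f x) (g x) := by
  unfold cross
  fun_prop

lemma tendsto_cross {X : Type*} {l : Filter X} {f g : X → Plane} {u v : Plane}
    (hf : Tendsto f l (𝓝 u)) (hg : Tendsto g l (𝓝 v)) :
    Tendsto (fun x => cross (f x) (g x)) l (𝓝 (cross u v)) := by
  have h : Continuous fun p : Plane × Plane => cross p.1 p.2 := by fun_prop
  exact (h.tendsto (u, v)).comp (hf.prodMk_nhds hg)

/-- Two plane vectors with nonzero determinant form a basis. -/
lemma exists_coords {e e' : Plane} (h : cross e e' ≠ 0) : ∃ ξ η : Plane →L[ℝ] ℝ,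
    (∀ v, v = ξ v • e + η v • e') ∧ ξ e = 1 ∧ ξ e' = 0 ∧ η e = 0 ∧ η e' = 1 := by
  let π (i : Fin 2) : Plane →L[ℝ] ℝ := EuclideanSpace.proj i
  refine ⟨(cross e e')⁻¹ • (e' 1 • π 0 - e' 0 • π 1), (cross e e')⁻¹ • (e 0 • π 1 - e 1 • π 0),
    fun v => ?_, ?_, ?_, ?_, ?_⟩
  · ext i
    have h' : e 0 * e' 1 - e 1 * e' 0 ≠ 0 := h
    fin_cases i <;> simp [π, cross] <;> field_simp <;> ring
  · refine (inv_mul_eq_one₀ h).2 ?_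
    simp [π, cross]; ring
  · simp [π, mul_comm]
  · simp [π, mul_comm]
  · refine (inv_mul_eq_one₀ h).2 ?_
    simp [π, cross]

/-- The determinant of an endomorphism of the plane. -/
noncomputable def detp (L : Plane →L[ℝ] Plane) : ℝ :=
  cross (L (EuclideanSpace.single 0 1)) (L (EuclideanSpace.single 1 1))

/-- The trace of an endomorphism of the plane. -/
noncomputable def trp (L : Plane →L[ℝ] Plane) : ℝ :=
  L (EuclideanSpace.single 0 1) 0 + L (EuclideanSpace.single 1 1) 1

lemma map_eq (L : Plane →L[ℝ] Plane) (v : Plane) :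
    L v = v 0 • L (EuclideanSpace.single 0 1) + v 1 • L (EuclideanSpace.single 1 1) := by
  rw [← map_smul, ← map_smul, ← map_add]
  congr 1
  ext i
  fin_cases i <;> simp

lemma cross_map (L : Plane →L[ℝ] Plane) (u v : Plane) :
    cross (L u) (L v) = detp L * cross u v := by
  rw [map_eq L u, map_eq L v, detp]
  simp [cross]
  ring

lemma trp_mul_cross (L : Plane →L[ℝ] Plane) (u v : Plane) :
    trp L * cross u v = cross (L u) v + cross u (L v) := by
  rw [map_eq L u, map_eq L v, trp]
  simp [cross]
  ring

lemma map_map_eq (L : Plane →L[ℝ] Plane) (v : Plane) :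
    L (L v) = trp L • L v - detp L • v := by
  rw [map_eq L (L v), map_eq L v, trp, detp]
  ext i
  fin_cases i <;> simp [cross] <;> ring

lemma detp_mul (L M : Plane →L[ℝ] Plane) : detp (L * M) = detp L * detp M := by
  conv_lhs => rw [detp]
  simp only [mul_apply_eq_comp]
  rw [cross_map, ← detp]

lemma detp_one : detp 1 = 1 := by simp [detp, cross]

lemma detp_pow (L : Plane →L[ℝ] Plane) (n : ℕ) : detp (L ^ n) = detp L ^ n := by
  induction n with
  | zero => simp [detp_one]
  | succ n ih => rw [pow_succ, pow_succ, detp_mul, ih]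

lemma detp_smul (a : ℝ) (L : Plane →L[ℝ] Plane) : detp (a • L) = a ^ 2 * detp L := by
  simp [detp, cross]; ring

lemma trp_smul (a : ℝ) (L : Plane →L[ℝ] Plane) : trp (a • L) = a * trp L := by
  simp [trp]; ring

lemma detp_ne_zero {L : Plane →L[ℝ] Plane} (hL : IsUnit L) : detp L ≠ 0 := by
  obtain ⟨M, hM⟩ := hL.exists_right_inv
  intro h
  have := detp_mul L M
  rw [hM, detp_one, h, zero_mul] at this
  exact one_ne_zero this

@[fun_prop]
lemma continuous_detp : Continuous detp := by
  unfold detp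
  fun_prop

@[fun_prop]
lemma continuous_trp : Continuous trp := by
  unfold trp
  fun_prop

lemma exists_cross_ne_zero {e : Plane} (he : e ≠ 0) : ∃ e', cross e e' ≠ 0 := by
  by_contra! h
  apply he
  have h0 := h (EuclideanSpace.single 0 1)
  have h1 := h (EuclideanSpace.single 1 1)
  ext i
  fin_cases i
  · simpa [cross] using h1
  · simpa [cross] using h0

lemma ne_zero_of_cross_left {u v : Plane} (h : cross u v ≠ 0) : u ≠ 0 := by
  rintro rfl; simp [cross] at h

/-- Vectors with vanishing determinant are proportional. -/
lemma exists_smul_of_cross_eq_zero {x y : Plane} (hx : x ≠ 0) (h : cross y x = 0) :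
    ∃ a : ℝ, y = a • x := by
  obtain ⟨e', he'⟩ := exists_cross_ne_zero hx
  obtain ⟨ξ, η, hdec, -⟩ := exists_coords he'
  refine ⟨ξ y, ?_⟩
  have h1 := h
  rw [hdec y, cross_add_left, cross_smul_left, cross_smul_left, cross_self, cross_swap e' x] at h1
  have h2 : η y = 0 := by
    rcases mul_eq_zero.1 (by linarith : η y * cross x e' = 0) with h | h
    · exact h
    · exact absurd h he'
  conv_lhs => rw [hdec y, h2, zero_smul, add_zero]

lemma exists_ne_zero_map_eq_zero {L : Plane →L[ℝ] Plane} (h : detp L = 0) :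
    ∃ v, v ≠ 0 ∧ L v = 0 := by
  by_contra! hcon
  obtain ⟨x, y, hxy⟩ : ∃ x y : Plane, cross x y ≠ 0 :=
    ⟨EuclideanSpace.single 0 1, EuclideanSpace.single 1 1, by simp [cross]⟩
  have hx : L x ≠ 0 := hcon x (ne_zero_of_cross_left hxy)
  obtain ⟨a, ha⟩ := exists_smul_of_cross_eq_zero (y := L y) hx (by rw [cross_map, h, zero_mul])
  refine hcon (y - a • x) ?_ (by rw [map_sub, map_smul, ha, sub_self])
  intro h0
  rw [sub_eq_zero.1 h0, cross_smul_right, cross_self, mul_zero] at hxy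
  exact hxy rfl

end Cross

/-! ### Synchronised systems -/

section Sync

/-- Three affine maps preserving `E`, whose displacements `q h` of a common centre `m` have
barycentre zero and span the plane, and whose iterated linear parts are uniformly comparable with
the inverses of the normalisations `N k`, force `E` to be arithmetically thick. -/
theorem thick_of_sync {E : Set Plane} (hE : IsCompact E) (hne : E.Nonempty)
    (A : Fin 3 → Plane →L[ℝ] Plane) (p q : Fin 3 → Plane)
    (hpres : ∀ h, ∀ y ∈ E, p h + A h (y - p h) ∈ E) (m : Plane)
    (hq : ∀ h, q h = p h + A h (m - p h) - m) (hsum : q 0 + q 1 + q 2 = 0)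
    (hcross : cross (q 0) (q 1) ≠ 0) (N : ℕ → Plane →L[ℝ] Plane) (t : ℕ → ℝ) {B C : ℝ}
    (hB : 0 < B) (hC : 0 ≤ C) (hN : ∀ k v, ‖N (k + 1) v‖ ≤ B * ‖N k v‖)
    (hNt : ∀ k v, ‖v‖ ≤ t k * ‖N k v‖) (ht0 : ∀ k, 0 ≤ t k) (ht : Tendsto t atTop (𝓝 0))
    (𝓛 : ℕ → Set (Plane →L[ℝ] Plane)) (h𝓛0 : 1 ∈ 𝓛 0)
    (h𝓛 : ∀ k, ∀ L ∈ 𝓛 k, ∀ h, L * A h ∈ 𝓛 (k + 1))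
    (hle : ∀ k, ∀ L ∈ 𝓛 k, ∀ v, ‖N k (L v)‖ ≤ C * ‖v‖)
    (hsurj : ∀ k, ∀ L ∈ 𝓛 k, ∀ w, ∃ v, N k (L v) = w ∧ ‖v‖ ≤ C * ‖w‖) :
    ArithmeticallyThick E := by
  obtain ⟨ξ, η, hdec, -⟩ := exists_coords hcross
  obtain ⟨y₀, hy₀⟩ := hne
  set K := ‖ξ‖ + ‖η‖ with hK
  have hK0 : 0 ≤ K := by positivity
  set c := 1 / (2 * (K * C) + 1) with hc
  have hc0 : 0 < c := by positivity
  have hcK : K * C * (2 * c) < 1 := by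
    have h1 : c * (2 * (K * C) + 1) = 1 := by rw [hc]; field_simp
    nlinarith
  refine thick_of_steering (X := (Plane →L[ℝ] Plane) × Plane) (τ := Unit) hE
    (fun k s => s.1 ∈ 𝓛 k ∧ ∀ y ∈ E, s.2 + s.1 (y - m) ∈ E) (fun s => s.2) N t
    (fun k => t k * (C * ‖y₀ - m‖)) (c := c) (C := C * ∑ h, ‖q h‖) hc0 hB
    ⟨(1, m), h𝓛0, fun y hy => by simpa using hy⟩ ?_ hN hNt ht ?_
    (by simpa using ht.mul_const (C * ‖y₀ - m‖))
  · rintro k ⟨L, x⟩ e ⟨hL, hx⟩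
    obtain ⟨h, hh⟩ : ∃ h, c * ‖e‖ ≤ ⟪N k (L (q h)), e⟫ := by
      by_contra! hcon
      set ψ : Plane → ℝ := fun u => ⟪N k (L u), e⟫ with hψ
      have hadd : ψ (q 0) + ψ (q 1) + ψ (q 2) = 0 := by
        simp only [hψ, ← inner_add_left, ← map_add, hsum, map_zero, inner_zero_left]
      have h0 : |ψ (q 0)| ≤ 2 * (c * ‖e‖) := by
        rw [abs_le]
        constructor <;> nlinarith [hcon 0, hcon 1, hcon 2, norm_nonneg e]
      have h1 : |ψ (q 1)| ≤ 2 * (c * ‖e‖) := by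
        rw [abs_le]
        constructor <;> nlinarith [hcon 0, hcon 1, hcon 2, norm_nonneg e]
      obtain ⟨v, hv, hvC⟩ := hsurj k L hL e
      have hψv : ‖e‖ ^ 2 = ξ v * ψ (q 0) + η v * ψ (q 1) := by
        have : ψ v = ξ v * ψ (q 0) + η v * ψ (q 1) := by
          conv_lhs => rw [hdec v]
          simp only [hψ, map_add, map_smul, inner_add_left, real_inner_smul_left]
        rw [← this, hψ]
        simp only [hv, real_inner_self_eq_norm_sq]
      have hbound : ‖e‖ ^ 2 ≤ K * C * (2 * c) * ‖e‖ ^ 2 := by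
        calc ‖e‖ ^ 2 ≤ |ξ v| * |ψ (q 0)| + |η v| * |ψ (q 1)| := by
              rw [hψv, ← abs_mul, ← abs_mul]
              exact add_le_add (le_abs_self _) (le_abs_self _)
          _ ≤ (‖ξ‖ * (C * ‖e‖)) * (2 * (c * ‖e‖)) + (‖η‖ * (C * ‖e‖)) * (2 * (c * ‖e‖)) := by
              gcongr
              · exact (ξ.le_opNorm v).trans (by gcongr)
              · exact (η.le_opNorm v).trans (by gcongr)
          _ = K * C * (2 * c) * ‖e‖ ^ 2 := by rw [hK]; ring
      have he : ‖e‖ = 0 := by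
        by_contra hne
        have : 0 < ‖e‖ ^ 2 := by positivity
        nlinarith
      have := hcon 0
      rw [norm_eq_zero.1 he] at this
      simp at this
    refine ⟨(L * A h, x + L (q h)), ⟨h𝓛 k L hL h, fun y hy => ?_⟩, ?_, ?_⟩
    · have := hx _ (hpres h y hy)
      convert this using 1
      simp only [mul_apply_eq_comp, add_assoc, ← map_add]
      congr 2
      rw [hq h, add_sub_right_comm, add_assoc, ← map_add]
      abel_nf
    · simp only [add_sub_cancel_left]
      refine (hle k L hL _).trans ?_
      gcongr
      exact Finset.single_le_sum (f := fun h => ‖q h‖) (fun _ _ => norm_nonneg _)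
        (Finset.mem_univ h)
    · simpa using hh
  · rintro k ⟨L, x⟩ ⟨hL, hx⟩
    refine ⟨fun _ => x + L (y₀ - m), fun _ => hx y₀ hy₀, ?_⟩
    simp only [Finset.univ_unique, Finset.sum_const, Finset.card_singleton, one_smul,
      add_sub_cancel_left]
    refine (hNt k _).trans ?_
    have := ht0 k
    gcongr
    exact hle k L hL _

end Sync

/-! ### Affine contractions preserving a set -/

section Fix

/-- The affine contraction with invertible linear part `A` and fixed point `p` preserves `E`. -/
def IsFix (E : Set Plane) (A : Plane →L[ℝ] Plane) (p : Plane) : Prop :=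
  IsUnit A ∧ ‖A‖ < 1 ∧ ∀ y ∈ E, p + A (y - p) ∈ E

/-- `A` is the linear part of an invertible affine contraction preserving `E`. -/
def IsLin (E : Set Plane) (A : Plane →L[ℝ] Plane) : Prop := ∃ p, IsFix E A p

lemma exists_fixedPoint {A : Plane →L[ℝ] Plane} (hA : ‖A‖ < 1) (b : Plane) :
    ∃ p, p = A p + b := by
  obtain ⟨M, hM⟩ := (isUnit_one_sub_of_norm_lt_one hA).exists_right_inv
  refine ⟨M b, ?_⟩
  have := congrArg (fun L : Plane →L[ℝ] Plane => L b) hM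
  simp only [mul_apply_eq_comp, sub_apply, one_apply_eq_self] at this
  exact sub_eq_iff_eq_add'.1 this

lemma IsFix.of_fixedPoint {E : Set Plane} {A : Plane →L[ℝ] Plane} {b p : Plane} (hu : IsUnit A)
    (hA : ‖A‖ < 1) (h : ∀ y ∈ E, A y + b ∈ E) (hp : p = A p + b) : IsFix E A p := by
  refine ⟨hu, hA, fun y hy => ?_⟩
  convert h y hy using 1
  rw [map_sub]
  nth_rw 1 [hp]
  abel

lemma pow_preserves {E : Set Plane} {A : Plane →L[ℝ] Plane} {p : Plane}
    (h : ∀ y ∈ E, p + A (y - p) ∈ E) (n : ℕ) : ∀ y ∈ E, p + (A ^ n) (y - p) ∈ E := by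
  induction n with
  | zero => intro y hy; simpa using hy
  | succ n ih =>
    intro y hy
    have := ih _ (h y hy)
    rwa [add_sub_cancel_left, ← mul_apply_eq_comp, ← pow_succ] at this

lemma IsFix.pow {E : Set Plane} {A : Plane →L[ℝ] Plane} {p : Plane} (h : IsFix E A p) {n : ℕ}
    (hn : n ≠ 0) : IsFix E (A ^ n) p :=
  ⟨h.1.pow n, (norm_pow_le' A (Nat.pos_of_ne_zero hn)).trans_lt
    (pow_lt_one₀ (norm_nonneg A) h.2.1 hn), pow_preserves h.2.2 n⟩

lemma tendsto_pow_zero {A : Plane →L[ℝ] Plane} (hA : ‖A‖ < 1) :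
    Tendsto (fun n => A ^ n) atTop (𝓝 0) :=
  tendsto_pow_atTop_nhds_zero_of_norm_lt_one hA

lemma tendsto_apply {X : Type*} {l : Filter X} {f : X → Plane →L[ℝ] Plane} {g : X → Plane}
    {L : Plane →L[ℝ] Plane} {v : Plane} (hf : Tendsto f l (𝓝 L)) (hg : Tendsto g l (𝓝 v)) :
    Tendsto (fun x => f x (g x)) l (𝓝 (L v)) :=
  (isBoundedBilinearMap_apply.continuous.tendsto (L, v)).comp (hf.prodMk_nhds hg)

lemma IsFix.mem {E : Set Plane} {A : Plane →L[ℝ] Plane} {p : Plane} (h : IsFix E A p)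
    (hE : IsClosed E) (hne : E.Nonempty) : p ∈ E := by
  obtain ⟨y, hy⟩ := hne
  refine hE.mem_of_tendsto (f := fun n => p + (A ^ n) (y - p)) (b := atTop) ?_
    (Eventually.of_forall fun n => pow_preserves h.2.2 n y hy)
  simpa using tendsto_const_nhds.add
    (tendsto_apply (tendsto_pow_zero h.2.1) (tendsto_const_nhds (x := y - p)))

lemma IsLin.mul {E : Set Plane} {A B : Plane →L[ℝ] Plane} (hA : IsLin E A) (hB : IsLin E B) :
    IsLin E (A * B) := by
  obtain ⟨p, hp⟩ := hA
  obtain ⟨q, hq⟩ := hB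
  have hlt : ‖A * B‖ < 1 := (norm_mul_le A B).trans_lt
    (mul_lt_one_of_nonneg_of_lt_one_left (norm_nonneg A) hp.2.1 hq.2.1.le)
  obtain ⟨r, hr⟩ := exists_fixedPoint hlt (p + A (q - B q - p))
  refine ⟨r, IsFix.of_fixedPoint (hp.1.mul hq.1) hlt (fun y hy => ?_) hr⟩
  convert hp.2.2 _ (hq.2.2 y hy) using 1
  simp only [mul_apply_eq_comp, map_sub, map_add]
  abel

lemma IsLin.pow {E : Set Plane} {A : Plane →L[ℝ] Plane} (hA : IsLin E A) {n : ℕ} (hn : n ≠ 0) :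
    IsLin E (A ^ n) :=
  let ⟨p, hp⟩ := hA
  ⟨p, hp.pow hn⟩

lemma IsLin.detp_ne_zero {E : Set Plane} {A : Plane →L[ℝ] Plane} (hA : IsLin E A) :
    detp A ≠ 0 :=
  PlanarThick.detp_ne_zero hA.choose_spec.1

/-- Fixed points of affine maps whose linear parts tend to zero converge. -/
lemma tendsto_fixedPoint {C : ℕ → Plane →L[ℝ] Plane} {b P : ℕ → Plane} {b₀ : Plane}
    (hC : Tendsto C atTop (𝓝 0)) (hb : Tendsto b atTop (𝓝 b₀))
    (hP : ∀ᶠ n in atTop, P n = C n (P n) + b n) : Tendsto P atTop (𝓝 b₀) := by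
  have hCn : Tendsto (fun n => ‖C n‖) atTop (𝓝 0) := by simpa using hC.norm
  have hsmall : ∀ᶠ n in atTop, ‖C n‖ < 1 / 2 := hCn.eventually_lt_const (by norm_num)
  have hdiff : Tendsto (fun n => P n - b n) atTop (𝓝 0) := by
    refine squeeze_zero_norm' (a := fun n => ‖C n‖ * (2 * ‖b n‖)) ?_
      (by simpa using hCn.mul (hb.norm.const_mul 2))
    filter_upwards [hP, hsmall] with n hn hs
    have h1 : ‖C n (P n)‖ ≤ ‖C n‖ * ‖P n‖ := (C n).le_opNorm _
    have h2 : ‖P n‖ ≤ ‖C n (P n)‖ + ‖b n‖ := by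
      conv_lhs => rw [hn]
      exact norm_add_le _ _
    have h3 : ‖P n‖ ≤ 2 * ‖b n‖ := by nlinarith [norm_nonneg (P n)]
    have h4 : P n - b n = C n (P n) := sub_eq_iff_eq_add.2 hn
    rw [h4]
    exact h1.trans (by gcongr)
  simpa using hdiff.add hb

/-- Three affine contractions preserving `E` with non-collinear fixed points. -/
def IsSpread (E : Set Plane) (A : Fin 3 → Plane →L[ℝ] Plane) (p : Fin 3 → Plane) : Prop :=
  (∀ h, IsFix E (A h) (p h)) ∧ cross (p 1 - p 0) (p 2 - p 0) ≠ 0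

/-- The displacements of a point `m` by three affine maps have barycentre zero and span the
plane. -/
def IsCentre (A : Fin 3 → Plane →L[ℝ] Plane) (p : Fin 3 → Plane) (m : Plane) : Prop :=
  (p 0 + A 0 (m - p 0) - m) + (p 1 + A 1 (m - p 1) - m) + (p 2 + A 2 (m - p 2) - m) = 0 ∧
    cross (p 0 + A 0 (m - p 0) - m) (p 1 + A 1 (m - p 1) - m) ≠ 0

/-- The products of `n`-th powers of three maps in the three cyclic orders. -/
def cyc (A : Fin 3 → Plane →L[ℝ] Plane) (n : ℕ) (h : Fin 3) : Plane →L[ℝ] Plane :=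
  A h ^ n * A (h + 1) ^ n * A (h + 2) ^ n

lemma IsSpread.eventually_cyc {E : Set Plane} {A : Fin 3 → Plane →L[ℝ] Plane} {p : Fin 3 → Plane}
    (hA : IsSpread E A p) :
    ∀ᶠ n in atTop, ∃ P m, IsSpread E (cyc A n) P ∧ IsCentre (cyc A n) P m := by
  obtain ⟨hfix, hcr⟩ := hA
  let b (h : Fin 3) (n : ℕ) : Plane := p h + (A h ^ n) (p (h + 1) - p h +
    (A (h + 1) ^ n) (p (h + 2) - p (h + 1) - (A (h + 2) ^ n) (p (h + 2))))
  have hpow : ∀ h, Tendsto (fun n => A h ^ n) atTop (𝓝 0) := fun h => tendsto_pow_zero (hfix h).2.1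
  have hb : ∀ h, Tendsto (b h) atTop (𝓝 (p h)) := by
    intro h
    have h2 := tendsto_apply (hpow (h + 2)) (tendsto_const_nhds (x := p (h + 2)))
    have h1 := tendsto_apply (hpow (h + 1))
      ((tendsto_const_nhds (x := p (h + 2) - p (h + 1))).sub h2)
    have h0 := tendsto_apply (hpow h) ((tendsto_const_nhds (x := p (h + 1) - p h)).add h1)
    have h3 := (tendsto_const_nhds (x := p h)).add h0
    simp only [zero_apply, add_zero] at h3
    exact h3
  have hbE : ∀ h n, ∀ y ∈ E, cyc A n h y + b h n ∈ E := by
    intro h n y hy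
    have := pow_preserves (hfix h).2.2 n _ (pow_preserves (hfix (h + 1)).2.2 n _
      (pow_preserves (hfix (h + 2)).2.2 n y hy))
    convert this using 1
    simp only [b, cyc, mul_apply_eq_comp, map_sub, map_add]
    abel
  have hC : ∀ h, Tendsto (fun n => cyc A n h) atTop (𝓝 0) := fun h => by
    simpa [cyc] using ((hpow h).mul (hpow (h + 1))).mul (hpow (h + 2))
  have hCsmall : ∀ h, ∀ᶠ n in atTop, ‖cyc A n h‖ < 1 := fun h =>
    (by simpa using (hC h).norm : Tendsto (fun n => ‖cyc A n h‖) atTop (𝓝 0)).eventually_lt_const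
      one_pos
  have hexP : ∀ h n, ∃ P, ‖cyc A n h‖ < 1 → P = cyc A n h P + b h n := by
    intro h n
    by_cases hlt : ‖cyc A n h‖ < 1
    · obtain ⟨P, hP⟩ := exists_fixedPoint hlt (b h n)
      exact ⟨P, fun _ => hP⟩
    · exact ⟨0, fun h' => absurd h' hlt⟩
  choose P hP using hexP
  have hPlim : ∀ h, Tendsto (P h) atTop (𝓝 (p h)) := fun h =>
    tendsto_fixedPoint (hC h) (hb h) ((hCsmall h).mono fun n hn => hP h n hn)
  let D (n : ℕ) : Plane →L[ℝ] Plane := (1 / 3 : ℝ) • (cyc A n 0 + cyc A n 1 + cyc A n 2)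
  let d (n : ℕ) : Plane := (1 / 3 : ℝ) • (b 0 n + b 1 n + b 2 n)
  let g : Plane := (1 / 3 : ℝ) • (p 0 + p 1 + p 2)
  have hD : Tendsto D atTop (𝓝 0) := by
    have h3 := (((hC 0).add (hC 1)).add (hC 2)).const_smul (1 / 3 : ℝ)
    have h0 : (1 / 3 : ℝ) • ((0 + 0 + 0) : Plane →L[ℝ] Plane) = 0 := by ext; simp
    rwa [h0] at h3
  have hd : Tendsto d atTop (𝓝 g) := (((hb 0).add (hb 1)).add (hb 2)).const_smul (1 / 3 : ℝ)
  have hDsmall : ∀ᶠ n in atTop, ‖D n‖ < 1 :=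
    (by simpa using hD.norm : Tendsto (fun n => ‖D n‖) atTop (𝓝 0)).eventually_lt_const one_pos
  have hexm : ∀ n, ∃ m, ‖D n‖ < 1 → m = D n m + d n := by
    intro n
    by_cases hlt : ‖D n‖ < 1
    · obtain ⟨m, hm⟩ := exists_fixedPoint hlt (d n)
      exact ⟨m, fun _ => hm⟩
    · exact ⟨0, fun h' => absurd h' hlt⟩
  choose m hm using hexm
  have hmlim : Tendsto m atTop (𝓝 g) := tendsto_fixedPoint hD hd (hDsmall.mono hm)
  have hq : ∀ h, Tendsto (fun n => cyc A n h (m n) + b h n - m n) atTop (𝓝 (p h - g)) := fun h => by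
    simpa using ((tendsto_apply (hC h) hmlim).add (hb h)).sub hmlim
  have hcrP : ∀ᶠ n in atTop, cross (P 1 n - P 0 n) (P 2 n - P 0 n) ≠ 0 :=
    (tendsto_cross ((hPlim 1).sub (hPlim 0)) ((hPlim 2).sub (hPlim 0))).eventually_ne hcr
  have hcrq : ∀ᶠ n in atTop, cross (cyc A n 0 (m n) + b 0 n - m n)
      (cyc A n 1 (m n) + b 1 n - m n) ≠ 0 := by
    refine (tendsto_cross (hq 0) (hq 1)).eventually_ne ?_
    have : cross (p 0 - g) (p 1 - g) = 1 / 3 * cross (p 1 - p 0) (p 2 - p 0) := by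
      simp [cross, g]; ring
    rw [this]
    exact mul_ne_zero (by norm_num) hcr
  filter_upwards [hCsmall 0, hCsmall 1, hCsmall 2, hDsmall, hcrP, hcrq] with n h0 h1 h2 hDn hcP hcq
  have hlt : ∀ h, ‖cyc A n h‖ < 1 := fun h => by fin_cases h <;> assumption
  have hfixP : ∀ h, P h n + cyc A n h (m n - P h n) = cyc A n h (m n) + b h n := fun h => by
    have := hP h n (hlt h)
    rw [map_sub]
    nth_rw 1 [this]
    abel
  refine ⟨fun h => P h n, m n, ⟨fun h => IsFix.of_fixedPoint ?_ (hlt h) (hbE h n) (hP h n (hlt h)),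
    hcP⟩, ?_, ?_⟩
  · exact (((hfix _).1.pow n).mul ((hfix _).1.pow n)).mul ((hfix _).1.pow n)
  · simp only [hfixP]
    have h3 := hm n hDn
    have h4 : (3 : ℝ) • m n = (cyc A n 0 + cyc A n 1 + cyc A n 2) (m n) + (b 0 n + b 1 n + b 2 n) := by
      have h4 : D n (m n) = (1 / 3 : ℝ) • (cyc A n 0 + cyc A n 1 + cyc A n 2) (m n) := rfl
      conv_lhs => rw [h3, h4]
      simp only [d]
      module
    simp only [add_apply] at h4
    have h5 : (3 : ℝ) • m n = m n + m n + m n := by module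
    rw [h5] at h4
    rw [← sub_eq_zero] at h4
    rw [← neg_eq_zero, ← h4]
    abel
  · simpa only [hfixP] using hcq

end Fix

/-! ### Eigenvectors and bounded distortion -/

section Eigen

lemma detp_sub_smul_one (A : Plane →L[ℝ] Plane) (x : ℝ) :
    detp (A - x • 1) = x ^ 2 - trp A * x + detp A := by
  simp [detp, trp, cross]
  ring

lemma exists_eigenvector {A : Plane →L[ℝ] Plane} {x : ℝ} (h : x ^ 2 - trp A * x + detp A = 0) :
    ∃ v, v ≠ 0 ∧ A v = x • v := by
  obtain ⟨v, hv, hAv⟩ := exists_ne_zero_map_eq_zero ((detp_sub_smul_one A x).trans h)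
  exact ⟨v, hv, by simpa [sub_eq_zero] using hAv⟩

/-- A map with `4 |det| < tr ^ 2` has two real eigenvalues of distinct absolute values. -/
lemma exists_eigenvectors {A : Plane →L[ℝ] Plane} (h : 4 * |detp A| < trp A ^ 2) :
    ∃ (α β : ℝ) (e e' : Plane), |β| < |α| ∧ A e = α • e ∧ A e' = β • e' ∧ cross e e' ≠ 0 := by
  have hΔ : 0 < trp A ^ 2 - 4 * detp A := by linarith [le_abs_self (detp A)]
  have hs := Real.sqrt_pos.2 hΔ
  have hs2 := Real.sq_sqrt hΔ.le
  set s := √(trp A ^ 2 - 4 * detp A)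
  have htr : trp A ≠ 0 := by
    intro h0
    rw [h0] at h
    linarith [abs_nonneg (detp A)]
  obtain ⟨α, β, hadd, hmul, hlt⟩ : ∃ α β : ℝ, α + β = trp A ∧ α * β = detp A ∧ |β| < |α| := by
    rcases lt_or_gt_of_ne htr with h0 | h0
    · refine ⟨(trp A - s) / 2, (trp A + s) / 2, by ring, by linear_combination (-1 / 4) * hs2,
        sq_lt_sq.1 ?_⟩
      nlinarith
    · refine ⟨(trp A + s) / 2, (trp A - s) / 2, by ring, by linear_combination (-1 / 4) * hs2,
        sq_lt_sq.1 ?_⟩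
      nlinarith
  obtain ⟨e, he, hAe⟩ := exists_eigenvector (A := A) (x := α) (by rw [← hadd, ← hmul]; ring)
  obtain ⟨e', he', hAe'⟩ := exists_eigenvector (A := A) (x := β) (by rw [← hadd, ← hmul]; ring)
  refine ⟨α, β, e, e', hlt, hAe, hAe', fun hcr => ?_⟩
  obtain ⟨a, rfl⟩ := exists_smul_of_cross_eq_zero he' hcr
  rw [map_smul, hAe', smul_comm, ← sub_eq_zero, ← sub_smul] at hAe
  rcases smul_eq_zero.1 hAe with h0 | h0
  · rw [sub_eq_zero.1 h0] at hlt
    exact hlt.false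
  · exact he h0

/-- A semigroup of planar maps without a common eigenvector and without hyperbolic elements has
bounded distortion. -/
lemma exists_norm_sq_le {S : Set (Plane →L[ℝ] Plane)} (hmul : ∀ L ∈ S, ∀ M ∈ S, L * M ∈ S)
    (hirr : ∀ x : Plane, x ≠ 0 → ∃ M ∈ S, cross (M x) x ≠ 0)
    (htr : ∀ L ∈ S, trp L ^ 2 ≤ 4 * |detp L|) : ∃ C : ℝ, ∀ L ∈ S, ‖L‖ ^ 2 ≤ C * |detp L| := by
  by_contra! hcon
  choose L hLS hL using fun n : ℕ => hcon (n + 1)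
  have hpos : ∀ n, 0 < ‖L n‖ := fun n => by
    have : 0 < ‖L n‖ ^ 2 := lt_of_le_of_lt (by positivity) (hL n)
    exact lt_of_le_of_ne (norm_nonneg _) fun h => by simp [← h] at this
  have : ProperSpace (Plane →L[ℝ] Plane) := FiniteDimensional.proper ℝ _
  let B (n : ℕ) : Plane →L[ℝ] Plane := ‖L n‖⁻¹ • L n
  have hBmem : ∀ n, B n ∈ sphere (0 : Plane →L[ℝ] Plane) 1 := fun n => by
    simp only [mem_sphere_zero_iff_norm, B]
    rw [norm_smul, norm_inv, norm_norm, inv_mul_cancel₀ (hpos n).ne']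
  obtain ⟨b, hb, φ, hφ, hlim⟩ := (isCompact_sphere (0 : Plane →L[ℝ] Plane) 1).tendsto_subseq hBmem
  have hdetB : ∀ n, |detp (B n)| ≤ 1 / ((n : ℝ) + 1) := fun n => by
    have h1 := hL n
    have h2 := hpos n
    rw [detp_smul, abs_mul, abs_of_nonneg (by positivity), le_div_iff₀ (by positivity), inv_pow,
      mul_assoc, inv_mul_le_iff₀ (by positivity)]
    linarith
  have hdet0 : Tendsto (fun n => detp (B (φ n))) atTop (𝓝 0) :=
    (squeeze_zero_norm (f := fun n => detp (B n)) hdetB tendsto_one_div_add_atTop_nhds_zero_nat).comp hφ.tendsto_atTop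
  have hdetb : detp b = 0 :=
    tendsto_nhds_unique ((continuous_detp.tendsto b).comp hlim) hdet0
  have htrB : ∀ M, (∀ K ∈ S, K * M ∈ S) → trp (b * M) = 0 := by
    intro M hM
    have h1 : Tendsto (fun n => trp (B (φ n) * M) ^ 2) atTop (𝓝 (trp (b * M) ^ 2)) :=
      ((continuous_trp.tendsto _).comp (hlim.mul_const M)).pow 2
    have h2 : ∀ n, trp (B (φ n) * M) ^ 2 ≤ 4 * (|detp (B (φ n))| * |detp M|) := fun n => by
      have h3 := htr _ (hM _ (hLS (φ n)))
      have h4 : B (φ n) * M = ‖L (φ n)‖⁻¹ • (L (φ n) * M) := rfl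
      rw [← abs_mul, ← detp_mul, h4, trp_smul, detp_smul, abs_mul, abs_of_nonneg (by positivity)]
      rw [mul_pow]
      nlinarith [sq_nonneg ‖L (φ n)‖⁻¹]
    have h5 : trp (b * M) ^ 2 ≤ 4 * (|0| * |detp M|) :=
      le_of_tendsto_of_tendsto' h1 ((hdet0.abs.mul_const _).const_mul 4) h2
    rw [abs_zero, zero_mul, mul_zero] at h5
    exact pow_eq_zero_iff two_ne_zero |>.1 (le_antisymm h5 (sq_nonneg _))
  have htrb : trp b = 0 := by simpa using htrB 1 (fun K hK => by simpa using hK)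
  have hbb : ∀ v, b (b v) = 0 := fun v => by rw [map_map_eq, htrb, hdetb]; simp
  obtain ⟨v, hv⟩ : ∃ v, b v ≠ 0 := by
    by_contra! h0
    have : b = 0 := ContinuousLinearMap.ext h0
    rw [this] at hb
    simp at hb
  have hxv : cross (b v) v ≠ 0 := by
    intro h0
    have hv0 : v ≠ 0 := by rintro rfl; simp at hv
    obtain ⟨a, ha⟩ := exists_smul_of_cross_eq_zero hv0 h0
    have h1 := hbb v
    rw [ha, map_smul, ha, smul_smul] at h1
    rcases smul_eq_zero.1 h1 with h2 | h2
    · rw [mul_self_eq_zero.1 h2, zero_smul] at ha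
      exact hv ha
    · exact hv0 h2
  obtain ⟨M, hMS, hM⟩ := hirr (b v) hv
  have h1 := trp_mul_cross (b * M) (b v) v
  rw [htrB M (fun K hK => hmul K hK M hMS), zero_mul, mul_apply_eq_comp, mul_apply_eq_comp,
    cross_map b v (M v), hdetb, zero_mul, add_zero] at h1
  obtain ⟨a, ha⟩ := exists_smul_of_cross_eq_zero (x := b v) (y := b (M (b v))) hv
    (by rw [cross_map, hdetb, zero_mul])
  rw [ha, cross_smul_left] at h1
  have ha0 : a = 0 := by
    rcases mul_eq_zero.1 h1.symm with h | h
    · exact h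
    · exact absurd h hxv
  rw [ha0, zero_smul] at ha
  obtain ⟨ξ, η, hdec, -⟩ := exists_coords hxv
  have h2 := hdec (M (b v))
  have h3 : η (M (b v)) = 0 := by
    have h4 := congrArg b h2
    rw [ha, map_add, map_smul, map_smul, hbb, smul_zero, zero_add] at h4
    exact (smul_eq_zero.1 h4.symm).resolve_right hv
  rw [h3, zero_smul, add_zero] at h2
  apply hM
  rw [h2, cross_smul_left, cross_self, mul_zero]

end Eigen

/-! ### Systems of bounded distortion -/

section Bounded

lemma abs_detp_lt_one {A : Plane →L[ℝ] Plane} (hA : ‖A‖ < 1) : |detp A| < 1 := by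
  refine tendsto_pow_atTop_nhds_zero_iff.1 ?_
  have h := (continuous_detp.tendsto 0).comp (tendsto_pow_zero hA)
  have h0 : detp 0 = 0 := by simp [detp, cross]
  rw [h0] at h
  exact h.congr fun n => detp_pow A n

lemma detp_cyc (A : Fin 3 → Plane →L[ℝ] Plane) (n : ℕ) (h : Fin 3) :
    detp (cyc A n h) = (detp (A 0) * detp (A 1) * detp (A 2)) ^ n := by
  fin_cases h <;> simp [cyc, detp_mul, detp_pow, mul_pow] <;> ring

lemma thick_of_isCentre {E : Set Plane} (hE : IsCompact E) (hne : E.Nonempty)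
    {A : Fin 3 → Plane →L[ℝ] Plane} {p : Fin 3 → Plane} {m : Plane} (hA : IsSpread E A p)
    (hm : IsCentre A p m) (N : ℕ → Plane →L[ℝ] Plane) (t : ℕ → ℝ) {B C : ℝ}
    (hB : 0 < B) (hC : 0 ≤ C) (hN : ∀ k v, ‖N (k + 1) v‖ ≤ B * ‖N k v‖)
    (hNt : ∀ k v, ‖v‖ ≤ t k * ‖N k v‖) (ht0 : ∀ k, 0 ≤ t k) (ht : Tendsto t atTop (𝓝 0))
    (𝓛 : ℕ → Set (Plane →L[ℝ] Plane)) (h𝓛0 : 1 ∈ 𝓛 0)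
    (h𝓛 : ∀ k, ∀ L ∈ 𝓛 k, ∀ h, L * A h ∈ 𝓛 (k + 1))
    (hle : ∀ k, ∀ L ∈ 𝓛 k, ∀ v, ‖N k (L v)‖ ≤ C * ‖v‖)
    (hsurj : ∀ k, ∀ L ∈ 𝓛 k, ∀ w, ∃ v, N k (L v) = w ∧ ‖v‖ ≤ C * ‖w‖) : ArithmeticallyThick E :=
  thick_of_sync hE hne A p (fun h => p h + A h (m - p h) - m) (fun h => (hA.1 h).2.2) m
    (fun _ => rfl) hm.1 hm.2 N t hB hC hN hNt ht0 ht 𝓛 h𝓛0 h𝓛 hle hsurj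

lemma thick_of_bounded {E : Set Plane} (hE : IsCompact E) (hne : E.Nonempty)
    {A : Fin 3 → Plane →L[ℝ] Plane} {p : Fin 3 → Plane} (hA : IsSpread E A p)
    (htr : ∀ L, IsLin E L → trp L ^ 2 ≤ 4 * |detp L|)
    {C : ℝ} (hC : ∀ L, IsLin E L → ‖L‖ ^ 2 ≤ C * |detp L|) : ArithmeticallyThick E := by
  obtain ⟨n, P, m, hP, hm⟩ := hA.eventually_cyc.exists
  have hlin : ∀ h, IsLin E (cyc A n h) := fun h => ⟨P h, hP.1 h⟩
  set δ := (detp (A 0) * detp (A 1) * detp (A 2)) ^ n with hδ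
  have hdet : ∀ h, detp (cyc A n h) = δ := detp_cyc A n
  have hδ0 : δ ≠ 0 := hdet 0 ▸ (hlin 0).detp_ne_zero
  have hδ1 : |δ| < 1 := hdet 0 ▸ abs_detp_lt_one (hP.1 0).2.1
  set s := √|δ| with hs
  have hs0 : 0 < s := Real.sqrt_pos.2 (abs_pos.2 hδ0)
  have hs2 : s ^ 2 = |δ| := Real.sq_sqrt (abs_nonneg δ)
  have hs1 : s < 1 := by nlinarith
  let D := max C 1
  have hD1 : 1 ≤ D := le_max_right _ _
  let 𝓛 (k : ℕ) : Set (Plane →L[ℝ] Plane) := {L | (L = 1 ∨ IsLin E L) ∧ |detp L| = (s ^ k) ^ 2}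
  have hnorm : ∀ k, ∀ L ∈ 𝓛 k, ‖L‖ ≤ √D * s ^ k := by
    rintro k L ⟨hL, hd⟩
    have h1 : ‖L‖ ^ 2 ≤ D * |detp L| := by
      rcases hL with rfl | hL
      · have : ‖(1 : Plane →L[ℝ] Plane)‖ ≤ 1 := ContinuousLinearMap.norm_id_le
        rw [detp_one, abs_one]
        nlinarith [norm_nonneg (1 : Plane →L[ℝ] Plane)]
      · exact (hC L hL).trans (mul_le_mul_of_nonneg_right (le_max_left _ _) (abs_nonneg _))
    rw [← abs_of_nonneg (norm_nonneg L), ← abs_of_nonneg (by positivity : 0 ≤ √D * s ^ k)]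
    refine sq_le_sq.1 ?_
    rw [mul_pow, Real.sq_sqrt (by positivity), ← hd]
    exact h1
  have htrace : ∀ k, ∀ L ∈ 𝓛 k, |trp L| ≤ 2 * s ^ k := by
    rintro k L ⟨hL, hd⟩
    have h1 : trp L ^ 2 ≤ 4 * |detp L| := by
      rcases hL with rfl | hL
      · rw [detp_one, abs_one]
        simp [trp]; norm_num
      · exact htr L hL
    rw [← abs_of_nonneg (by positivity : 0 ≤ 2 * s ^ k)]
    refine sq_le_sq.1 ?_
    rw [mul_pow, ← hd]
    linarith
  refine thick_of_isCentre hE hne hP hm (fun k => (s ^ k)⁻¹ • 1) (fun k => s ^ k) (B := s⁻¹)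
    (C := 2 + √D) (by positivity) (by positivity) (fun k v => ?_) (fun k v => ?_)
    (fun k => by positivity) (tendsto_pow_atTop_nhds_zero_of_lt_one hs0.le hs1) 𝓛
    ⟨Or.inl rfl, by simp [detp_one]⟩ ?_ ?_ ?_
  · simp only [smul_apply, one_apply_eq_self, norm_smul, norm_inv, norm_pow]
    rw [pow_succ, mul_inv, Real.norm_of_nonneg hs0.le]
    exact le_of_eq (by ring)
  · simp only [smul_apply, one_apply_eq_self, norm_smul, norm_inv, norm_pow]
    rw [Real.norm_of_nonneg hs0.le, mul_inv_cancel_left₀ (by positivity)]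
  · rintro k L ⟨hL, hd⟩ h
    refine ⟨Or.inr ?_, ?_⟩
    · rcases hL with rfl | hL
      · simpa using hlin h
      · exact hL.mul (hlin h)
    · rw [detp_mul, abs_mul, hd, hdet, ← hs2]
      ring
  · intro k L hL v
    simp only [smul_apply, one_apply_eq_self, norm_smul, norm_inv, norm_pow]
    rw [Real.norm_of_nonneg hs0.le, inv_mul_le_iff₀ (by positivity)]
    have h1 := (L.le_opNorm v).trans
      (mul_le_mul_of_nonneg_right (hnorm k L hL) (norm_nonneg v))
    have h2 : 0 ≤ s ^ k * ‖v‖ := by positivity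
    nlinarith
  · intro k L hL w
    have hd0 : detp L ≠ 0 := by
      rw [← abs_pos, hL.2]
      positivity
    refine ⟨(s ^ k / detp L) • (trp L • w - L w), ?_, ?_⟩
    · simp only [smul_apply, one_apply_eq_self]
      rw [map_smul, map_sub, map_smul, map_map_eq, sub_sub_cancel, smul_smul, smul_smul]
      have : (s ^ k)⁻¹ * (s ^ k / detp L) * detp L = 1 := by field_simp
      rw [this, one_smul]
    · rw [norm_smul, norm_div, Real.norm_eq_abs (detp L), hL.2, norm_pow,
        Real.norm_of_nonneg hs0.le]
      have h1 : ‖trp L • w - L w‖ ≤ s ^ k * ((2 + √D) * ‖w‖) := by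
        refine (norm_sub_le _ _).trans ?_
        rw [norm_smul, Real.norm_eq_abs]
        have h2 := mul_le_mul_of_nonneg_right (htrace k L hL) (norm_nonneg w)
        have h3 := (L.le_opNorm w).trans
          (mul_le_mul_of_nonneg_right (hnorm k L hL) (norm_nonneg w))
        linarith
      have h4 : s ^ k / (s ^ k) ^ 2 * (s ^ k * ((2 + √D) * ‖w‖)) = (2 + √D) * ‖w‖ := by
        field_simp
      rw [← h4]
      gcongr

end Bounded

/-! ### Systems with a common eigenvector -/

section Triangular

lemma triangular_form {A : Plane →L[ℝ] Plane} {x x' : Plane} {a c : ℝ} {ξ η : Plane →L[ℝ] ℝ}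
    (hcr : cross x x' ≠ 0) (hdec : ∀ v, v = ξ v • x + η v • x') (hξ : ξ x = 1)
    (ha : a ≠ 0) (hx : A x = a • x) (hdet : detp A = a * c) (v : Plane) :
    η (A v) = c * η v ∧ ξ (A v) = a * ξ v + ξ (A x') * η v := by
  have hη : ∀ w, cross x w = η w * cross x x' := fun w => by
    conv_lhs => rw [hdec w, cross_add_right, cross_smul_right, cross_smul_right, cross_self]
    ring
  constructor
  · have h1 := cross_map A x v
    rw [hx, cross_smul_left, hη, hη v, hdet] at h1
    have h2 : a * cross x x' * (η (A v) - c * η v) = 0 := by linear_combination h1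
    rcases mul_eq_zero.1 h2 with h3 | h3
    · exact absurd h3 (mul_ne_zero ha hcr)
    · linarith
  · conv_lhs => rw [hdec v]
    simp only [map_add, map_smul, hx, smul_eq_mul, hξ]
    ring

lemma thick_of_triangular {E : Set Plane} (hE : IsCompact E) (hne : E.Nonempty)
    {A : Fin 3 → Plane →L[ℝ] Plane} {p : Fin 3 → Plane} {m : Plane} (hA : IsSpread E A p)
    (hm : IsCentre A p m) {x : Plane} {a c : ℝ} (hx0 : x ≠ 0) (hx : ∀ h, A h x = a • x)
    (hdet : ∀ h, detp (A h) = a * c) (hc : 0 < c) (hca : c < a) (ha1 : a < 1) :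
    ArithmeticallyThick E := by
  have ha : 0 < a := hc.trans hca
  obtain ⟨x', hcr⟩ := exists_cross_ne_zero hx0
  obtain ⟨ξ, η, hdec, hξx, hξx', hηx, hηx'⟩ := exists_coords hcr
  have hη : ∀ h v, η (A h v) = c * η v := fun h v =>
    (triangular_form hcr hdec hξx ha.ne' (hx h) (hdet h) v).1
  have hξ : ∀ h v, ξ (A h v) = a * ξ v + ξ (A h x') * η v := fun h v =>
    (triangular_form hcr hdec hξx ha.ne' (hx h) (hdet h) v).2
  let K := ‖ξ‖ * ‖x‖ + ‖η‖ * ‖x'‖ + 1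
  have hK0 : 0 < K := by positivity
  have hK : ∀ (r s t : ℝ) (v : Plane), |s| ≤ r → |t| ≤ r →
      ‖(s * ξ v) • x + (t * η v) • x'‖ ≤ r * K * ‖v‖ := by
    intro r s t v hs ht
    have hr : 0 ≤ r := (abs_nonneg s).trans hs
    have h1 : ‖(s * ξ v) • x‖ ≤ r * (‖ξ‖ * ‖v‖) * ‖x‖ := by
      rw [norm_smul, norm_mul]
      gcongr
      · exact hs
      · exact ξ.le_opNorm v
    have h2 : ‖(t * η v) • x'‖ ≤ r * (‖η‖ * ‖v‖) * ‖x'‖ := by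
      rw [norm_smul, norm_mul]
      gcongr
      · exact ht
      · exact η.le_opNorm v
    calc _ ≤ r * (‖ξ‖ * ‖v‖) * ‖x‖ + r * (‖η‖ * ‖v‖) * ‖x'‖ := (norm_add_le _ _).trans (by gcongr)
      _ ≤ r * K * ‖v‖ := by
        have : 0 ≤ r * ‖v‖ := by positivity
        simp only [K]
        linarith
  let N (k : ℕ) : Plane →L[ℝ] Plane := (a ^ k)⁻¹ • ξ.smulRight x + (c ^ k)⁻¹ • η.smulRight x'
  have hN : ∀ k v, N k v = ((a ^ k)⁻¹ * ξ v) • x + ((c ^ k)⁻¹ * η v) • x' := fun k v => by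
    simp only [mul_smul]
    rfl
  have hξN : ∀ k v, ξ (N k v) = (a ^ k)⁻¹ * ξ v := fun k v => by
    rw [hN]; simp [hξx, hξx']
  have hηN : ∀ k v, η (N k v) = (c ^ k)⁻¹ * η v := fun k v => by
    rw [hN]; simp [hηx, hηx']
  let b := |ξ (A 0 x')| + |ξ (A 1 x')| + |ξ (A 2 x')|
  have hb : ∀ h, |ξ (A h x')| ≤ b := fun h => by
    have h0 := abs_nonneg (ξ (A 0 x'))
    have h1 := abs_nonneg (ξ (A 1 x'))
    have h2 := abs_nonneg (ξ (A 2 x'))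
    fin_cases h <;> simp [b] <;> linarith
  let B := b / (a - c)
  have hb0 : 0 ≤ b := by positivity
  have hac : 0 < a - c := sub_pos.2 hca
  have hB0 : 0 ≤ B := by positivity
  have hBac : B * (a - c) = b := div_mul_cancel₀ _ hac.ne'
  let 𝓛 (k : ℕ) : Set (Plane →L[ℝ] Plane) :=
    {L | (∀ v, η (L v) = c ^ k * η v) ∧
      ∃ β : ℝ, |β| ≤ B * a ^ k ∧ ∀ v, ξ (L v) = a ^ k * ξ v + β * η v}
  have hshear : ∀ (β : ℝ) (k : ℕ) (v : Plane), |β| ≤ B * a ^ k →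
      ‖((a ^ k)⁻¹ * β * η v) • x‖ ≤ B * ‖η‖ * ‖x‖ * ‖v‖ := by
    intro β k v hβ
    rw [norm_smul, norm_mul, norm_mul, norm_inv, Real.norm_of_nonneg (by positivity : 0 ≤ a ^ k)]
    have h1 : (a ^ k)⁻¹ * ‖β‖ ≤ B := by
      rw [inv_mul_le_iff₀ (by positivity), mul_comm]
      exact hβ
    calc _ ≤ B * (‖η‖ * ‖v‖) * ‖x‖ := by
          gcongr
          exact η.le_opNorm v
      _ = _ := by ring
  refine thick_of_isCentre hE hne hA hm N (fun k => a ^ k * K) (B := c⁻¹ * K)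
    (C := 1 + B * ‖η‖ * ‖x‖) (by positivity) (by positivity) (fun k v => ?_) (fun k v => ?_)
    (fun k => by positivity) ?_ 𝓛 ⟨by simp, 0, by simpa using hB0, by simp⟩ ?_ ?_ ?_
  · have h1 : N (k + 1) v = (a⁻¹ * ξ (N k v)) • x + (c⁻¹ * η (N k v)) • x' := by
      rw [hN (k + 1), hξN, hηN, pow_succ, pow_succ, mul_inv, mul_inv]
      congr 2 <;> ring
    rw [h1]
    refine hK _ _ _ _ ?_ ?_
    · rw [abs_of_pos (by positivity)]
      gcongr
    · rw [abs_of_pos (by positivity)]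
  · have h1 : v = (a ^ k * ξ (N k v)) • x + (c ^ k * η (N k v)) • x' := by
      rw [hξN, hηN, mul_inv_cancel_left₀ (by positivity), mul_inv_cancel_left₀ (by positivity)]
      exact hdec v
    conv_lhs => rw [h1]
    refine hK _ _ _ _ ?_ ?_
    · rw [abs_of_pos (by positivity)]
    · rw [abs_of_pos (by positivity)]
      gcongr
  · simpa using (tendsto_pow_atTop_nhds_zero_of_lt_one ha.le ha1).mul_const K
  · rintro k L ⟨hLη, β, hβ, hLξ⟩ h
    refine ⟨fun v => ?_, a ^ k * ξ (A h x') + c * β, ?_, fun v => ?_⟩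
    · rw [mul_apply_eq_comp, hLη, hη]; ring
    · calc _ ≤ |a ^ k * ξ (A h x')| + |c * β| := abs_add_le _ _
        _ = a ^ k * |ξ (A h x')| + c * |β| := by
          rw [abs_mul, abs_mul, abs_of_pos hc, abs_of_pos (by positivity : 0 < a ^ k)]
        _ ≤ a ^ k * b + c * (B * a ^ k) := by
          gcongr
          exact hb h
        _ = B * a ^ (k + 1) := by rw [← hBac]; ring
    · rw [mul_apply_eq_comp, hLξ, hη, hξ]; ring
  · rintro k L ⟨hLη, β, hβ, hLξ⟩ v
    have h1 : N k (L v) = v + ((a ^ k)⁻¹ * β * η v) • x := by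
      rw [hN, hLη, hLξ, inv_mul_cancel_left₀ (by positivity), mul_add,
        inv_mul_cancel_left₀ (by positivity)]
      conv_rhs => rw [hdec v]
      simp [hηx, hηx']
      module
    rw [h1]
    calc _ ≤ ‖v‖ + B * ‖η‖ * ‖x‖ * ‖v‖ := (norm_add_le _ _).trans (by gcongr; exact hshear β k v hβ)
      _ = _ := by ring
  · rintro k L ⟨hLη, β, hβ, hLξ⟩ w
    refine ⟨w - ((a ^ k)⁻¹ * β * η w) • x, ?_, ?_⟩
    · rw [hN, hLη, hLξ, inv_mul_cancel_left₀ (by positivity), mul_add,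
        inv_mul_cancel_left₀ (by positivity)]
      conv_rhs => rw [hdec w]
      simp only [map_sub, map_smul, hξx, hηx, smul_eq_mul]
      module
    · calc _ ≤ ‖w‖ + B * ‖η‖ * ‖x‖ * ‖w‖ :=
            (norm_sub_le _ _).trans (by gcongr; exact hshear β k w hβ)
        _ = _ := by ring

lemma thick_of_equal {E : Set Plane} (hE : IsCompact E) (hne : E.Nonempty)
    {A : Fin 3 → Plane →L[ℝ] Plane} {p : Fin 3 → Plane} {m : Plane} (hA : IsSpread E A p)
    (hm : IsCentre A p m) (heq : ∀ h, A h = A 0) : ArithmeticallyThick E := by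
  obtain ⟨M, hM⟩ := (hA.1 0).1.exists_left_inv
  obtain ⟨M', hM'⟩ := (hA.1 0).1.exists_right_inv
  have hMM : M = M' := left_inv_eq_right_inv hM hM'
  have hcomm : Commute M (A 0) := by rw [Commute, SemiconjBy, hM, hMM, hM']
  have hinv : ∀ k v, (M ^ k) ((A 0 ^ k) v) = v := fun k v => by
    rw [← mul_apply_eq_comp, ← hcomm.mul_pow, hM, one_pow, one_apply_eq_self]
  have hinv' : ∀ k v, (A 0 ^ k) ((M ^ k) v) = v := fun k v => by
    rw [← mul_apply_eq_comp, ← hcomm.symm.mul_pow, ← hcomm.eq, hM, one_pow, one_apply_eq_self]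
  refine thick_of_isCentre hE hne hA hm (fun k => M ^ k) (fun k => ‖A 0 ^ k‖) (B := ‖M‖ + 1)
    (C := 1) (by positivity) zero_le_one (fun k v => ?_) (fun k v => ?_)
    (fun k => norm_nonneg _) ?_ (fun k => {A 0 ^ k}) (by simp) ?_ ?_ ?_
  · rw [pow_succ', mul_apply_eq_comp]
    exact (M.le_opNorm _).trans (by gcongr; linarith)
  · conv_lhs => rw [← hinv' k v]
    exact (A 0 ^ k).le_opNorm _
  · simpa using (tendsto_pow_zero (hA.1 0).2.1).norm
  · rintro k L rfl h
    rw [heq h]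
    exact (pow_succ _ _).symm
  · rintro k L rfl v
    rw [hinv, one_mul]
  · rintro k L rfl w
    exact ⟨w, hinv k w, by rw [one_mul]⟩

lemma abs_eigenvalue_lt_one {A : Plane →L[ℝ] Plane} {x : Plane} {a : ℝ} (hA : ‖A‖ < 1)
    (hx0 : x ≠ 0) (hx : A x = a • x) : |a| < 1 := by
  have h1 := A.le_opNorm x
  rw [hx, norm_smul] at h1
  exact (le_of_mul_le_mul_right h1 (norm_pos_iff.2 hx0)).trans_lt hA

lemma IsSpread.sq {E : Set Plane} {A : Fin 3 → Plane →L[ℝ] Plane} {p : Fin 3 → Plane}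
    (hA : IsSpread E A p) : IsSpread E (fun h => A h ^ 2) p :=
  ⟨fun h => (hA.1 h).pow two_ne_zero, hA.2⟩

lemma pow_apply_eigenvector {A : Plane →L[ℝ] Plane} {x : Plane} {a : ℝ} (hx : A x = a • x)
    (n : ℕ) : (A ^ n) x = a ^ n • x := by
  induction n with
  | zero => simp
  | succ n ih => rw [pow_succ, mul_apply_eq_comp, hx, map_smul, ih, smul_smul, pow_succ']

lemma cyc_eq_of_commute {A : Fin 3 → Plane →L[ℝ] Plane} (hA : ∀ g h, Commute (A g) (A h)) (n : ℕ)
    (h : Fin 3) : cyc A n h = cyc A n 0 := by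
  have hc : ∀ g h, A g ^ n * A h ^ n = A h ^ n * A g ^ n := fun g h => ((hA g h).pow_pow n n).eq
  fin_cases h
  · rfl
  · change A 1 ^ n * A 2 ^ n * A 0 ^ n = A 0 ^ n * A 1 ^ n * A 2 ^ n
    rw [mul_assoc, hc 2 0, ← mul_assoc, hc 1 0]
  · change A 2 ^ n * A 0 ^ n * A 1 ^ n = A 0 ^ n * A 1 ^ n * A 2 ^ n
    rw [hc 2 0, mul_assoc, hc 2 1, ← mul_assoc]

/-- Thickness in the presence of a common eigenvector of all linear parts, provided dominant
eigenvectors are common as well. -/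
theorem thick_of_common_eigenvector {E : Set Plane} (hE : IsCompact E) (hne : E.Nonempty)
    {A : Fin 3 → Plane →L[ℝ] Plane} {p : Fin 3 → Plane} (hA : IsSpread E A p)
    (hdom : ∀ L, IsLin E L → ∀ (α β : ℝ) (e e' : Plane), |β| < |α| → L e = α • e →
      L e' = β • e' → cross e e' ≠ 0 → ∀ M, IsLin E M → cross (M e) e = 0)
    {x : Plane} (hx0 : x ≠ 0) (hx : ∀ M, IsLin E M → cross (M x) x = 0) :
    ArithmeticallyThick E := by
  obtain ⟨n, P, m, hP, hm⟩ := hA.sq.eventually_cyc.exists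
  set L := cyc (fun h => A h ^ 2) n with hL
  have hlin : ∀ h, IsLin E (L h) := fun h => ⟨P h, hP.1 h⟩
  choose α hα using fun h => exists_smul_of_cross_eq_zero hx0 (hx (A h) ⟨p h, hA.1 h⟩)
  set a := ((α 0 * α 1 * α 2) ^ n) ^ 2 with ha
  set δ := (detp (A 0 ^ 2) * detp (A 1 ^ 2) * detp (A 2 ^ 2)) ^ n with hδ
  have hdet : ∀ h, detp (L h) = δ := detp_cyc _ n
  have hLx : ∀ h, L h x = a • x := by
    intro h
    have h1 : ∀ h, ((A h ^ 2) ^ n) x = (α h ^ 2) ^ n • x := fun h =>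
      pow_apply_eigenvector (pow_apply_eigenvector (hα h) 2) n
    simp only [L, cyc, mul_apply_eq_comp, h1, map_smul, smul_smul]
    congr 1
    fin_cases h <;> simp [a] <;> ring
  have hδ0 : 0 < δ := by
    refine lt_of_le_of_ne ?_ (hdet 0 ▸ (hlin 0).detp_ne_zero).symm
    simp only [δ, detp_pow]
    positivity
  have ha0 : 0 < a := by
    refine lt_of_le_of_ne (sq_nonneg _) fun h0 => ?_
    obtain ⟨x', hcr⟩ := exists_cross_ne_zero hx0
    have h1 := cross_map (L 0) x x'
    rw [hLx, ← h0, cross_smul_left, zero_mul, hdet] at h1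
    exact mul_ne_zero hδ0.ne' hcr h1.symm
  have ha1 : a < 1 := (le_abs_self a).trans_lt (abs_eigenvalue_lt_one (hP.1 0).2.1 hx0 (hLx 0))
  obtain ⟨c, hc⟩ : ∃ c, δ = a * c := ⟨δ / a, (mul_div_cancel₀ δ ha0.ne').symm⟩
  have hc0 : 0 < c := by
    rw [hc] at hδ0
    exact (mul_pos_iff_of_pos_left ha0).1 hδ0
  obtain ⟨x', hcr⟩ := exists_cross_ne_zero hx0
  obtain ⟨ξ, η, hdec, hξx, hξx', hηx, hηx'⟩ := exists_coords hcr
  have hη : ∀ h v, η (L h v) = c * η v := fun h v =>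
    (triangular_form hcr hdec hξx ha0.ne' (hLx h) ((hdet h).trans hc) v).1
  have hξ : ∀ h v, ξ (L h v) = a * ξ v + ξ (L h x') * η v := fun h v =>
    (triangular_form hcr hdec hξx ha0.ne' (hLx h) ((hdet h).trans hc) v).2
  rcases lt_trichotomy a c with hac | hac | hac
  · obtain ⟨e, he0, he⟩ : ∃ e, e ≠ 0 ∧ L 0 e = c • e := by
      refine ⟨ξ (L 0 x') • x + (c - a) • x', fun h0 => ?_, ?_⟩
      · have h1 := congrArg η h0
        simp [hηx, hηx'] at h1
        linarith
      · rw [hdec (L 0 _), hη, hξ]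
        simp only [map_add, map_smul, hξx, hξx', hηx, hηx', smul_eq_mul]
        module
    have hex : cross e x ≠ 0 := by
      intro h0
      obtain ⟨r, rfl⟩ := exists_smul_of_cross_eq_zero hx0 h0
      rw [map_smul, hLx, smul_comm, ← sub_eq_zero, ← sub_smul] at he
      rcases smul_eq_zero.1 he with h1 | h1
      · linarith
      · exact he0 h1
    have hcom := hdom (L 0) (hlin 0) c a e x (by rwa [abs_of_pos ha0, abs_of_pos hc0]) he (hLx 0) hex
    have hLe : ∀ h, L h e = c • e := by
      intro h
      obtain ⟨r, hr⟩ := exists_smul_of_cross_eq_zero he0 (hcom (L h) (hlin h))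
      have h1 := cross_map (L h) e x
      rw [hr, hLx, cross_smul_left, cross_smul_right, hdet, hc, ← mul_assoc] at h1
      have h2 := mul_right_cancel₀ hex h1
      rw [hr, mul_left_cancel₀ ha0.ne' ((mul_comm a r).trans h2)]
    have hc1 : c < 1 := (le_abs_self c).trans_lt (abs_eigenvalue_lt_one (hP.1 0).2.1 he0 he)
    exact thick_of_triangular hE hne hP hm he0 hLe
      (fun h => (hdet h).trans (hc.trans (mul_comm a c))) ha0 hac hc1
  · have hcomm : ∀ g h, Commute (L g) (L h) := by
      intro g h
      refine ContinuousLinearMap.ext fun v => ?_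
      rw [mul_apply_eq_comp, mul_apply_eq_comp, hdec (L g (L h v)), hdec (L h (L g v))]
      rw [hξ g (L h v), hξ h (L g v), hξ h v, hξ g v, hη g (L h v), hη h (L g v), hη h v, hη g v,
        ← hac]
      congr 2
      ring
    obtain ⟨n', P', m', hP', hm'⟩ := hP.eventually_cyc.exists
    exact thick_of_equal hE hne hP' hm' (cyc_eq_of_commute hcomm n')
  · exact thick_of_triangular hE hne hP hm hx0 hLx (fun h => (hdet h).trans hc) hc0 hac ha1

end Triangular

/-! ### Cones and the refinement of scales -/

section Cone

/-- The vectors whose second coordinate is controlled by the first one. -/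
def InCone (ξ η : Plane →L[ℝ] ℝ) (ε : ℝ) (v : Plane) : Prop := |η v| ≤ ε * ξ v

variable {ξ η : Plane →L[ℝ] ℝ} {ε : ℝ} {v w : Plane}

lemma InCone.nonneg (h : InCone ξ η ε v) (hε : 0 < ε) : 0 ≤ ξ v :=
  nonneg_of_mul_nonneg_right ((abs_nonneg _).trans h) hε

lemma InCone.add (hv : InCone ξ η ε v) (hw : InCone ξ η ε w) : InCone ξ η ε (v + w) := by
  unfold InCone at *
  rw [map_add, map_add]
  linarith [abs_add_le (η v) (η w)]

lemma InCone.smul (hv : InCone ξ η ε v) {a : ℝ} (ha : 0 ≤ a) : InCone ξ η ε (a • v) := by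
  unfold InCone at *
  rw [map_smul, map_smul, smul_eq_mul, smul_eq_mul, abs_mul, abs_of_nonneg ha]
  nlinarith

variable {F : Plane →L[ℝ] Plane} {κ : ℝ}

lemma InCone.map (hF : ∀ v, InCone ξ η ε v → InCone ξ η ε (F v - κ • v)) (hκ : 0 ≤ κ)
    (hv : InCone ξ η ε v) : InCone ξ η ε (F v) := by
  simpa using (hF v hv).add (hv.smul hκ)

lemma InCone.map_pow (hF : ∀ v, InCone ξ η ε v → InCone ξ η ε (F v - κ • v)) (hκ : 0 ≤ κ)
    (hv : InCone ξ η ε v) (n : ℕ) : InCone ξ η ε ((F ^ n) v) := by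
  induction n with
  | zero => exact hv
  | succ n ih =>
    rw [pow_succ', mul_apply_eq_comp]
    exact ih.map hF hκ

lemma le_map_of_cone {L : Plane →L[ℝ] Plane} (hε : 0 < ε)
    (hF : ∀ v, InCone ξ η ε v → InCone ξ η ε (F v - κ • v))
    (hL : ∀ v, InCone ξ η ε v → InCone ξ η ε (L v)) (hv : InCone ξ η ε v) :
    κ * ξ (L v) ≤ ξ (L (F v)) := by
  have h := (hL _ (hF v hv)).nonneg hε
  rw [map_sub, map_sub, map_smul, map_smul, smul_eq_mul] at h
  linarith

/-- Composing with powers of a contraction brings the size of a cone vector to any prescribed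
smaller scale, up to the factor `κ`. -/
lemma exists_pow_refine {L : Plane →L[ℝ] Plane} {r : ℝ} (hε : 0 < ε) (hκ : 0 < κ)
    (hF : ∀ v, InCone ξ η ε v → InCone ξ η ε (F v - κ • v)) (hF1 : ‖F‖ < 1)
    (hL : ∀ v, InCone ξ η ε v → InCone ξ η ε (L v)) (hv : InCone ξ η ε v) (hr : 0 < r)
    (hLv : κ * r ≤ ξ (L v)) : ∃ n : ℕ, κ * r ≤ ξ (L ((F ^ n) v)) ∧ ξ (L ((F ^ n) v)) ≤ r := by
  have hex : ∃ n : ℕ, ξ (L ((F ^ n) v)) ≤ r := by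
    have h1 : Tendsto (fun n => (ξ ∘L L) ((F ^ n) v)) atTop (𝓝 ((ξ ∘L L) 0)) :=
      ((ξ ∘L L).continuous.tendsto 0).comp
        (tendsto_apply (tendsto_pow_zero hF1) (tendsto_const_nhds (x := v)))
    rw [map_zero] at h1
    obtain ⟨n, hn⟩ := (h1.eventually_lt_const hr).exists
    exact ⟨n, hn.le⟩
  classical
  refine ⟨Nat.find hex, ?_, Nat.find_spec hex⟩
  rcases hn : Nat.find hex with _ | n
  · exact hLv
  · have h1 : r < ξ (L ((F ^ n) v)) := not_le.1 (Nat.find_min hex (by omega))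
    have h2 := le_map_of_cone hε hF hL (hv.map_pow hF hκ.le n)
    rw [← mul_apply_eq_comp F, ← pow_succ'] at h2
    nlinarith

end Cone

/-! ### Steering inside a cone -/

section Game

/-- The sign attached to a Boolean. -/
def sgn (i : Bool) : ℝ := if i then 1 else -1

lemma abs_sgn (i : Bool) : |sgn i| = 1 := by
  cases i <;> simp [sgn]

lemma exists_sgn_mul (x : ℝ) : ∃ i, sgn i * x = |x| := by
  rcases le_total 0 x with h | h
  · exact ⟨true, by simp [sgn, abs_of_nonneg h]⟩
  · exact ⟨false, by simp [sgn, abs_of_nonpos h]⟩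

/-- Two affine contractions moving each other's fixed points in opposite directions inside a narrow
cone, viewed through two charts spreading the cone axis, force thickness. -/
theorem thick_of_cone {E : Set Plane} (hE : IsCompact E) {ξ η : Plane →L[ℝ] ℝ} {e e' : Plane}
    (hdec : ∀ v, v = ξ v • e + η v • e') {ε κ c : ℝ} (hε : 0 < ε) (hκ : 0 < κ) (hκ1 : κ < 1)
    (F : Bool → Plane →L[ℝ] Plane) (q w : Bool → Plane) (hF1 : ∀ i, ‖F i‖ < 1)
    (hFE : ∀ i, ∀ y ∈ E, q i + F i (y - q i) ∈ E) (hq : ∀ i, q i ∈ E)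
    (hw : ∀ i, q (!i) + F (!i) (q i - q (!i)) - q i = sgn i • w i)
    (hwC : ∀ i, InCone ξ η ε (w i)) (hw0 : ∀ i, 0 < ξ (w i))
    (hF : ∀ i v, InCone ξ η ε v → InCone ξ η ε (F i v - κ • v))
    (R : Bool → Plane →L[ℝ] Plane) (b : Bool → Plane) (hR : ∀ j, ∀ y ∈ E, R j y + b j ∈ E)
    (hc : 0 < c) (hRe : ∀ u, ∃ j, c * ‖u‖ ≤ |⟪R j e, u⟫|) (hεR : ∀ j, ε * ‖R j e'‖ ≤ c / 2) :
    ArithmeticallyThick E := by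
  let r₀ := min (ξ (w true)) (ξ (w false))
  have hr₀ : 0 < r₀ := lt_min (hw0 _) (hw0 _)
  have hr₀w : ∀ i, r₀ ≤ ξ (w i) := fun i => by
    cases i
    · exact min_le_right _ _
    · exact min_le_left _ _
  let r (k : ℕ) : ℝ := r₀ * (κ ^ 2) ^ k
  have hr : ∀ k, 0 < r k := fun k => by positivity
  have hrs : ∀ k, r (k + 1) = κ * (κ * r k) := fun k => by simp only [r]; ring
  -- admissible states of a single player at scale `r`
  let Adm (i : Bool) (ρ : ℝ) (s : (Plane →L[ℝ] Plane) × Plane) : Prop :=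
    (∀ v, InCone ξ η ε v → InCone ξ η ε (s.1 v)) ∧ (∀ y ∈ E, s.2 + s.1 (y - q i) ∈ E) ∧
      κ * ρ ≤ ξ (s.1 (w i)) ∧ ξ (s.1 (w i)) ≤ ρ
  have hAdm_mem : ∀ i ρ s, Adm i ρ s → s.2 ∈ E := fun i ρ s hs => by
    simpa using hs.2.1 _ (hq i)
  have hrefine : ∀ (i : Bool) (ρ : ℝ) (L : Plane →L[ℝ] Plane) (x : Plane), 0 < ρ →
      (∀ v, InCone ξ η ε v → InCone ξ η ε (L v)) →
      (∀ y ∈ E, x + L (y - q i) ∈ E) → κ * ρ ≤ ξ (L (w i)) →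
      ∃ L', Adm i ρ (L', x) := by
    intro i ρ L x hρ hL hx hLw
    obtain ⟨n, hn, hn'⟩ := exists_pow_refine hε hκ (hF i) (hF1 i) hL (hwC i) hρ hLw
    refine ⟨L * F i ^ n, fun v hv => ?_, fun y hy => ?_, hn, hn'⟩
    · exact hL _ (hv.map_pow (hF i) hκ.le n)
    · simpa only [add_sub_cancel_left, mul_apply_eq_comp] using hx _ (pow_preserves (hFE i) n y hy)
  have hcomp : ∀ i h ρ L x, 0 < ρ → Adm i ρ (L, x) →
      (∀ v, InCone ξ η ε v → InCone ξ η ε ((L * F h) v)) ∧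
        κ * (κ * (κ * ρ)) ≤ ξ ((L * F h) (w i)) := by
    intro i h ρ L x hρ hs
    refine ⟨fun v hv => hs.1 _ (hv.map (hF h) hκ.le), ?_⟩
    have h1 := le_map_of_cone hε (hF h) hs.1 (hwC i)
    have h2 : κ * (κ * (κ * ρ)) ≤ κ * (κ * ρ) := mul_le_of_le_one_left (by positivity) hκ1.le
    have h3 : κ * (κ * ρ) ≤ κ * ξ (L (w i)) := mul_le_mul_of_nonneg_left hs.2.2.1 hκ.le
    exact h2.trans (h3.trans h1)
  have hstay : ∀ i k L x, Adm i (r k) (L, x) → ∃ L', Adm i (r (k + 1)) (L', x) := by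
    intro i k L x hs
    obtain ⟨h1, h2⟩ := hcomp i i (r k) L x (hr k) hs
    refine hrefine i (r (k + 1)) (L * F i) x (hr _) h1 (fun y hy => ?_) (by rw [hrs]; exact h2)
    simpa only [add_sub_cancel_left, mul_apply_eq_comp] using hs.2.1 _ (hFE i y hy)
  have hmove : ∀ i k L x, Adm i (r k) (L, x) →
      ∃ L', Adm i (r (k + 1)) (L', x + sgn i • L (w i)) := by
    intro i k L x hs
    obtain ⟨h1, h2⟩ := hcomp i (!i) (r k) L x (hr k) hs
    refine hrefine i (r (k + 1)) (L * F (!i)) _ (hr _) h1 (fun y hy => ?_) (by rw [hrs]; exact h2)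
    convert hs.2.1 _ (hFE (!i) y hy) using 1
    rw [← map_smul, ← hw i, mul_apply_eq_comp, add_assoc, ← map_add]
    congr 2
    rw [map_sub, map_sub, map_sub]
    abel
  let P (k : ℕ) (s : Bool × Bool → (Plane →L[ℝ] Plane) × Plane) : Prop := ∀ j, Adm j.2 (r k) (s j)
  let pos (s : Bool × Bool → (Plane →L[ℝ] Plane) × Plane) : Plane := ∑ j, (R j.1 (s j).2 + b j.1)
  have hκ2 : 0 < κ ^ 2 := by positivity
  let K := ‖R true e‖ + ‖R false e‖ + c
  have hK : ∀ j, ‖R j e‖ + ε * ‖R j e'‖ ≤ K := fun j => by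
    have h1 := hεR j
    have h2 := norm_nonneg (R true e)
    have h3 := norm_nonneg (R false e)
    cases j <;> simp only [K] <;> linarith
  have hκlt1 : κ ^ 2 < 1 := pow_lt_one₀ hκ.le hκ1 two_ne_zero
  refine thick_of_steering (X := Bool × Bool → (Plane →L[ℝ] Plane) × Plane) (τ := Bool × Bool)
    hE P pos (fun k => (r k)⁻¹ • 1) r (fun _ => 0)
    (c := κ * (c / 2)) (C := K) (B := (κ ^ 2)⁻¹) (by positivity) (by positivity) ?_ ?_ ?_ ?_ ?_ ?_
    tendsto_const_nhds
  · have h1 : ∀ j : Bool × Bool, ∃ s, Adm j.2 (r 0) s := fun j => by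
      obtain ⟨L, hL⟩ := hrefine j.2 (r 0) 1 (q j.2) (hr 0) (fun v hv => hv)
        (fun y hy => by simpa using hy) (by
          have h2 := hr₀w j.2
          simp only [r, pow_zero, mul_one]
          exact (mul_le_of_le_one_left hr₀.le hκ1.le).trans h2)
      exact ⟨_, hL⟩
    choose s hs using h1
    exact ⟨s, hs⟩
  · intro k s u hs
    obtain ⟨j, hj⟩ := hRe u
    obtain ⟨i, hi⟩ := exists_sgn_mul ⟪R j e, u⟫
    have hnext : ∀ l, ∃ L', Adm l.2 (r (k + 1))
        (L', (s l).2 + if l = (j, i) then sgn i • (s (j, i)).1 (w i) else 0) := by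
      intro l
      by_cases hl : l = (j, i)
      · subst hl
        simpa using hmove i k _ _ (hs (j, i))
      · simpa [hl] using hstay l.2 k _ _ (hs l)
    choose L' hL' using hnext
    refine ⟨fun l => (L' l, _), hL', ?_⟩
    set z := (s (j, i)).1 (w i) with hz
    have hdiff : pos (fun l => (L' l, (s l).2 + if l = (j, i) then sgn i • z else 0)) - pos s =
        sgn i • R j z := by
      simp only [pos, ← Finset.sum_sub_distrib]
      rw [Finset.sum_eq_single (j, i)]
      · simp
      · intro l _ hl
        simp [hl]
      · simp
    rw [hdiff]
    have hzC : |η z| ≤ ε * ξ z := (hs (j, i)).1 _ (hwC i)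
    have hz1 : κ * r k ≤ ξ z := (hs (j, i)).2.2.1
    have hz2 : ξ z ≤ r k := (hs (j, i)).2.2.2
    have hz0 : 0 ≤ ξ z := le_trans (mul_pos hκ (hr k)).le hz1
    have hRz : R j z = ξ z • R j e + η z • R j e' := by
      conv_lhs => rw [hdec z, map_add, map_smul, map_smul]
    have hrk := hr k
    constructor
    · simp only [smul_apply, one_apply_eq_self, norm_smul, norm_inv]
      rw [Real.norm_of_nonneg hrk.le, Real.norm_eq_abs, abs_sgn, one_mul,
        inv_mul_le_iff₀ hrk, hRz]
      calc _ ≤ ‖ξ z • R j e‖ + ‖η z • R j e'‖ := norm_add_le _ _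
        _ = ξ z * ‖R j e‖ + |η z| * ‖R j e'‖ := by
          rw [norm_smul, norm_smul, Real.norm_of_nonneg hz0, Real.norm_eq_abs]
        _ ≤ ξ z * ‖R j e‖ + ε * ξ z * ‖R j e'‖ := by gcongr
        _ = ξ z * (‖R j e‖ + ε * ‖R j e'‖) := by ring
        _ ≤ r k * K := mul_le_mul hz2 (hK j) (by positivity) hrk.le
    · simp only [smul_apply, one_apply_eq_self]
      rw [inner_smul_left, inner_smul_left, hRz, inner_add_left, inner_smul_left, inner_smul_left]
      simp only [conj_trivial]
      have h1 : |sgn i * (η z * ⟪R j e', u⟫)| ≤ ξ z * (c / 2 * ‖u‖) := by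
        rw [abs_mul, abs_sgn, one_mul, abs_mul]
        calc _ ≤ ε * ξ z * (‖R j e'‖ * ‖u‖) := by
              gcongr
              exact abs_real_inner_le_norm _ _
          _ = ξ z * (ε * ‖R j e'‖ * ‖u‖) := by ring
          _ ≤ _ := by
              gcongr
              exact hεR j
      have h2 : ξ z * (c * ‖u‖) ≤ sgn i * (ξ z * ⟪R j e, u⟫) := by
        rw [mul_left_comm (sgn i), hi]
        gcongr
      have h3 := neg_abs_le (sgn i * (η z * ⟪R j e', u⟫))
      have h4 : κ * r k * (c / 2 * ‖u‖) ≤ ξ z * (c / 2 * ‖u‖) := by gcongr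
      rw [le_inv_mul_iff₀ hrk]
      linarith
  · intro k v
    simp only [smul_apply, one_apply_eq_self, norm_smul, norm_inv]
    rw [Real.norm_of_nonneg (hr k).le, Real.norm_of_nonneg (hr _).le, hrs, mul_inv, mul_inv]
    exact le_of_eq (by ring)
  · intro k v
    simp only [smul_apply, one_apply_eq_self, norm_smul, norm_inv]
    rw [Real.norm_of_nonneg (hr k).le, mul_inv_cancel_left₀ (hr k).ne']
  · simpa [r] using (tendsto_pow_atTop_nhds_zero_of_lt_one hκ2.le hκlt1).const_mul r₀
  · intro k s hs
    exact ⟨fun j => R j.1 (s j).2 + b j.1, fun j => hR _ _ (hAdm_mem _ _ _ (hs j)), by simp [pos]⟩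

end Game

/-! ### Systems with a dominated splitting -/

section Dominated

variable {ξ η : Plane →L[ℝ] ℝ} {e e' : Plane}

lemma tendsto_normalized_pow (hdec : ∀ v, v = ξ v • e + η v • e') {A : Plane →L[ℝ] Plane} {α β : ℝ}
    (hα : 0 < α) (hβα : |β| < α) (hAe : A e = α • e) (hAe' : A e' = β • e') :
    Tendsto (fun m : ℕ => (α ^ m)⁻¹ • A ^ m) atTop (𝓝 (ξ.smulRight e)) := by
  have h1 : ∀ m : ℕ, (α ^ m)⁻¹ • A ^ m = ξ.smulRight e + (β / α) ^ m • η.smulRight e' := by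
    intro m
    refine ContinuousLinearMap.ext fun v => ?_
    have h2 : (A ^ m) v = (α ^ m * ξ v) • e + (β ^ m * η v) • e' := by
      conv_lhs => rw [hdec v]
      rw [map_add, map_smul, map_smul, pow_apply_eigenvector hAe, pow_apply_eigenvector hAe']
      module
    change (α ^ m)⁻¹ • (A ^ m) v = ξ v • e + (β / α) ^ m • η v • e'
    rw [h2, smul_add, smul_smul, smul_smul, smul_smul, inv_mul_cancel_left₀ (by positivity), div_pow]
    congr 2
    ring
  simp only [h1]
  have h3 : |β / α| < 1 := by
    rwa [abs_div, abs_of_pos hα, div_lt_one hα]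
  have h4 := ((tendsto_pow_atTop_nhds_zero_of_abs_lt_one h3).smul_const (η.smulRight e')).const_add
    (ξ.smulRight e)
  have h5 : ξ.smulRight e + (0 : ℝ) • η.smulRight e' = ξ.smulRight e := by ext; simp
  rwa [h5] at h4

variable {ε : ℝ}

lemma eventually_inCone (hε : 0 < ε) (hξe : ξ e = 1) (hηe : η e = 0) {u : ℕ → Plane} {x : ℝ}
    (hx : 0 < x) (hu : Tendsto u atTop (𝓝 (x • e))) :
    ∀ᶠ m in atTop, InCone ξ η ε (u m) ∧ 0 < ξ (u m) := by
  have h1 : Tendsto (fun m => ξ (u m)) atTop (𝓝 x) := by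
    simpa [hξe, Function.comp_def] using (ξ.continuous.tendsto _).comp hu
  have h2 : Tendsto (fun m => |η (u m)|) atTop (𝓝 0) := by
    simpa [hηe] using ((η.continuous.tendsto _).comp hu).abs
  filter_upwards [h2.eventually_lt (h1.const_mul ε) (by positivity),
    h1.eventually_const_lt hx] with m h3 h4
  exact ⟨h3.le, h4⟩

lemma eventually_maps_cone (hε : 0 < ε) (hdec : ∀ v, v = ξ v • e + η v • e') (hξe : ξ e = 1)
    (hηe : η e = 0) {G : ℕ → Plane →L[ℝ] Plane} {H : Plane →L[ℝ] Plane} {τ κ : ℝ} (hτ : 0 < τ)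
    (hκ : 0 ≤ κ) (hκτ : 4 * κ ≤ τ) (hG : Tendsto G atTop (𝓝 H))
    (hH : ∀ v, H v = (τ * ξ v) • e) :
    ∀ᶠ m in atTop, ∀ v, InCone ξ η ε v → InCone ξ η ε (G m v - κ • v) := by
  let K := ‖e‖ + ε * ‖e'‖
  have hω : Tendsto (fun m => ‖G m - H‖) atTop (𝓝 0) := tendsto_iff_norm_sub_tendsto_zero.1 hG
  have hlim : Tendsto (fun m => ‖G m - H‖ * (K * (‖η‖ + ε * ‖ξ‖))) atTop (𝓝 0) := by
    simpa using hω.mul_const (K * (‖η‖ + ε * ‖ξ‖))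
  filter_upwards [hlim.eventually_lt_const (by positivity : 0 < ε * τ / 2)] with m hm v hv
  have hx := hv.nonneg hε
  have hvn : ‖v‖ ≤ K * ξ v := by
    conv_lhs => rw [hdec v]
    calc _ ≤ ‖ξ v • e‖ + ‖η v • e'‖ := norm_add_le _ _
      _ = ξ v * ‖e‖ + |η v| * ‖e'‖ := by
        rw [norm_smul, norm_smul, Real.norm_of_nonneg hx, Real.norm_eq_abs]
      _ ≤ ξ v * ‖e‖ + ε * ξ v * ‖e'‖ := by
        gcongr
        exact hv
      _ = K * ξ v := by simp only [K]; ring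
  have hd : ‖(G m - H) v‖ ≤ ‖G m - H‖ * (K * ξ v) :=
    ((G m - H).le_opNorm v).trans (by gcongr)
  have hdecomp : G m v - κ • v = (G m - H) v + ((τ * ξ v) • e - κ • v) := by
    rw [sub_apply, hH]
    abel
  have hξd : |ξ ((G m - H) v)| ≤ ‖ξ‖ * (‖G m - H‖ * (K * ξ v)) :=
    (ξ.le_opNorm _).trans (by gcongr)
  have hηd : |η ((G m - H) v)| ≤ ‖η‖ * (‖G m - H‖ * (K * ξ v)) :=
    (η.le_opNorm _).trans (by gcongr)
  unfold InCone at hv ⊢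
  rw [hdecomp]
  simp only [map_add, map_sub, map_smul, hξe, hηe, smul_eq_mul, mul_one, mul_zero, zero_sub]
  have h1 : |η ((G m - H) v) + -(κ * η v)| ≤ ‖η‖ * (‖G m - H‖ * (K * ξ v)) + κ * (ε * ξ v) := by
    refine (abs_add_le _ _).trans ?_
    rw [abs_neg, abs_mul, abs_of_nonneg hκ]
    gcongr
  have h2 := neg_abs_le (ξ ((G m - H) v))
  have h3 : ε * (τ * ξ v - κ * ξ v - ‖ξ‖ * (‖G m - H‖ * (K * ξ v))) ≤
      ε * (ξ ((G m - H) v) + (τ * ξ v - κ * ξ v)) := by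
    gcongr
    linarith
  have h4 := mul_le_mul_of_nonneg_right hm.le hx
  have h5 : 4 * κ * (ε * ξ v) ≤ τ * (ε * ξ v) := by gcongr
  nlinarith

/-- Thickness from an affine contraction with dominated splitting, a map shifting its fixed point in
the dominant direction, and charts spreading that direction. -/
theorem thick_of_shift {E : Set Plane} (hE : IsCompact E) (hne : E.Nonempty)
    (hdec : ∀ v, v = ξ v • e + η v • e') (hξe : ξ e = 1) (hηe : η e = 0)
    {A : Plane →L[ℝ] Plane} {p : Plane} (hA : IsFix E A p) {α β : ℝ} (hα : 0 < α) (hα1 : α < 1)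
    (hβα : |β| < α) (hAe : A e = α • e) (hAe' : A e' = β • e') {T : Plane →L[ℝ] Plane} {t : Plane}
    (hTu : IsUnit T) (hT : ∀ y ∈ E, T y + t ∈ E) (hTe : 0 < ξ (T e)) (hD : 0 < ξ (T p + t - p))
    (R : Bool → Plane →L[ℝ] Plane) (b : Bool → Plane) (hR : ∀ j, ∀ y ∈ E, R j y + b j ∈ E)
    {c : ℝ} (hc : 0 < c) (hRe : ∀ u, ∃ j, c * ‖u‖ ≤ |⟪R j e, u⟫|) : ArithmeticallyThick E := by
  let ε := c / (2 * (‖R true e'‖ + ‖R false e'‖ + 1))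
  have hε : 0 < ε := by positivity
  have hεR : ∀ j, ε * ‖R j e'‖ ≤ c / 2 := fun j => by
    have h1 : ‖R j e'‖ ≤ ‖R true e'‖ + ‖R false e'‖ + 1 := by
      cases j <;> linarith [norm_nonneg (R true e'), norm_nonneg (R false e')]
    calc ε * ‖R j e'‖ ≤ ε * (‖R true e'‖ + ‖R false e'‖ + 1) := by gcongr
      _ = c / 2 := by simp only [ε]; field_simp
  set D := T p + t - p with hDdef
  let Q (m : ℕ) : Plane →L[ℝ] Plane := (α ^ m)⁻¹ • A ^ m
  have hQ : Tendsto Q atTop (𝓝 (ξ.smulRight e)) := tendsto_normalized_pow hdec hα hβα hAe hAe'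
  have hQA : ∀ m v, (A ^ m) v = α ^ m • Q m v := fun m v => by
    change (A ^ m) v = α ^ m • (α ^ m)⁻¹ • (A ^ m) v
    rw [smul_inv_smul₀ (by positivity)]
  have hApow := tendsto_pow_zero hA.2.1
  let U (i : Bool) : Plane →L[ℝ] Plane := if i then 1 else T
  have hUe : ∀ i, 0 < ξ (U i e) := fun i => by
    cases i
    · exact hTe
    · simp [U, hξe]
  let F (m : ℕ) (i : Bool) : Plane →L[ℝ] Plane := A ^ m * U i * A ^ m
  have hFlim : ∀ i, Tendsto (fun m => F m i) atTop (𝓝 0) := fun i => by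
    simpa [F] using (hApow.mul_const (U i)).mul hApow
  have hFsmall : ∀ i, ∀ᶠ m in atTop, ‖F m i‖ < 1 := fun i =>
    (by simpa using (hFlim i).norm : Tendsto (fun m => ‖F m i‖) atTop (𝓝 0)).eventually_lt_const
      one_pos
  let κ' := min 1 (ξ (T e)) / 4
  have hκ'0 : 0 < κ' := div_pos (lt_min one_pos hTe) (by norm_num)
  have hκ'U : ∀ i, 4 * κ' ≤ ξ (U i e) := fun i => by
    have h1 : 4 * κ' = min 1 (ξ (T e)) := by simp only [κ']; ring
    rw [h1]
    cases i
    · exact min_le_right _ _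
    · simp [U, hξe]
  have hκ'1 : κ' < 1 := by
    have := min_le_left 1 (ξ (T e))
    simp only [κ']
    linarith
  have hcone : ∀ i, ∀ᶠ m in atTop, ∀ v, InCone ξ η ε v →
      InCone ξ η ε ((Q m * U i * Q m) v - κ' • v) := fun i => by
    refine eventually_maps_cone hε hdec hξe hηe (hUe i) hκ'0.le (hκ'U i) ((hQ.mul_const (U i)).mul hQ)
      fun v => ?_
    simp only [mul_apply_eq_comp, ContinuousLinearMap.smulRight_apply, map_smul, smul_smul]
    rw [mul_comm]
  have hexz : ∀ m, ∃ z, ‖F m false‖ < 1 → z = F m false z + (A ^ m) D := by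
    intro m
    by_cases hlt : ‖F m false‖ < 1
    · obtain ⟨z, hz⟩ := exists_fixedPoint hlt ((A ^ m) D)
      exact ⟨z, fun _ => hz⟩
    · exact ⟨0, fun h => absurd h hlt⟩
  choose z hz using hexz
  have hAD : Tendsto (fun m => (A ^ m) D) atTop (𝓝 0) :=
    tendsto_apply hApow (tendsto_const_nhds (x := D))
  have hzlim : Tendsto z atTop (𝓝 0) :=
    tendsto_fixedPoint (hFlim false) hAD ((hFsmall false).mono hz)
  have hQD : Tendsto (fun m => Q m D) atTop (𝓝 (ξ D • e)) :=
    tendsto_apply hQ (tendsto_const_nhds (x := D))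
  have hzs : Tendsto (fun m => (α ^ m)⁻¹ • z m) atTop (𝓝 (ξ D • e)) := by
    have h1 : Tendsto (fun m => Q m (T ((A ^ m) (z m)) + D)) atTop
        (𝓝 (ξ.smulRight e (T ((0 : Plane →L[ℝ] Plane) 0) + D))) :=
      tendsto_apply hQ (((T.continuous.tendsto _).comp (tendsto_apply hApow hzlim)).add_const D)
    have h2 : ξ.smulRight e (T ((0 : Plane →L[ℝ] Plane) 0) + D) = ξ D • e := by simp
    rw [h2] at h1
    refine h1.congr' ?_
    filter_upwards [hFsmall false] with m hm
    have h3 : z m = (A ^ m) (T ((A ^ m) (z m)) + D) := by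
      conv_lhs => rw [hz m hm]
      rw [map_add]
      rfl
    conv_rhs => rw [h3, hQA, inv_smul_smul₀ (by positivity)]
  have hws : Tendsto (fun m => (α ^ m)⁻¹ • (z m - F m true (z m))) atTop (𝓝 (ξ D • e)) := by
    have h1 := hzs.sub (tendsto_apply (hFlim true) hzs)
    rw [zero_apply, sub_zero] at h1
    refine h1.congr fun m => ?_
    rw [map_smul, smul_sub]
  have hwt : Tendsto (fun m => (α ^ m)⁻¹ • (A ^ m) D) atTop (𝓝 (ξ D • e)) := hQD
  have hscale : ∀ (m : ℕ) (w : Plane), InCone ξ η ε ((α ^ m)⁻¹ • w) ∧ 0 < ξ ((α ^ m)⁻¹ • w) →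
      InCone ξ η ε w ∧ 0 < ξ w := by
    intro m w hw
    refine ⟨?_, ?_⟩
    · have := hw.1.smul (a := α ^ m) (by positivity)
      rwa [smul_inv_smul₀ (by positivity)] at this
    · have := hw.2
      rw [map_smul, smul_eq_mul] at this
      exact (mul_pos_iff_of_pos_left (by positivity)).1 this
  obtain ⟨m, hm1, hm2, hm3, hm4, hm5, hm6⟩ := ((hFsmall true).and <| (hFsmall false).and <|
    (hcone true).and <| (hcone false).and <| (eventually_inCone hε hξe hηe hD hws).and
      (eventually_inCone hε hξe hηe hD hwt)).exists
  have hz' := hz m hm2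
  have hfixF : IsFix E (F m false) (p + z m) := by
    refine ⟨((hA.1.pow m).mul hTu).mul (hA.1.pow m), hm2, fun y hy => ?_⟩
    have h1 := pow_preserves hA.2.2 m _ (hT _ (pow_preserves hA.2.2 m y hy))
    convert h1 using 1
    have h2 : T (p + (A ^ m) (y - p)) + t - p = T ((A ^ m) (y - p)) + D := by
      rw [map_add, hDdef]
      abel
    have h3 : F m false (y - p) = (A ^ m) (T ((A ^ m) (y - p))) := rfl
    rw [h2, map_add, ← h3, ← sub_sub, map_sub (F m false) (y - p)]
    nth_rw 1 [hz']
    abel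
  have hα2 : 0 < (α ^ m) ^ 2 := by positivity
  refine thick_of_cone hE hdec hε (mul_pos hα2 hκ'0) ?_ (F m)
    (fun i => if i then p else p + z m) (fun i => if i then (A ^ m) D else z m - F m true (z m))
    ?_ ?_ ?_ ?_ ?_ ?_ ?_ R b hR hc hRe hεR
  · have h1 : (α ^ m) ^ 2 ≤ 1 := pow_le_one₀ (by positivity) (pow_le_one₀ hα.le hα1.le)
    nlinarith
  · rintro (_ | _)
    · exact hm2
    · exact hm1
  · rintro (_ | _)
    · exact hfixF.2.2
    · intro y hy
      have h1 := pow_preserves hA.2.2 m _ (pow_preserves hA.2.2 m y hy)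
      rw [add_sub_cancel_left] at h1
      exact h1
  · rintro (_ | _)
    · exact hfixF.mem hE.isClosed hne
    · exact hA.mem hE.isClosed hne
  · rintro (_ | _)
    · simp [sgn]
    · have h1 : F m false (z m) = z m - (A ^ m) D := eq_sub_of_add_eq hz'.symm
      have h2 : p - (p + z m) = -z m := by abel
      simp only [Bool.not_true, Bool.false_eq_true, if_false, if_true, sgn, one_smul, h2, map_neg, h1]
      abel
  · rintro (_ | _)
    · exact (hscale m _ hm5).1
    · exact (hscale m _ hm6).1
  · rintro (_ | _)
    · exact (hscale m _ hm5).2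
    · exact (hscale m _ hm6).2
  · intro i v hv
    have h1 : InCone ξ η ε ((Q m * U i * Q m) v - κ' • v) := by
      cases i
      · exact hm4 v hv
      · exact hm3 v hv
    have h2 : F m i v - ((α ^ m) ^ 2 * κ') • v =
        (α ^ m) ^ 2 • ((Q m * U i * Q m) v - κ' • v) := by
      have h3 : F m i v = (A ^ m) (U i ((A ^ m) v)) := rfl
      rw [h3, hQA, hQA m v, map_smul, map_smul, mul_apply_eq_comp, mul_apply_eq_comp]
      module
    rw [h2]
    exact h1.smul hα2.le

end Dominated

/-! ### Twisted systems -/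

section Twisted

lemma exists_le_abs_inner {a b : Plane} (h : cross a b ≠ 0) :
    ∃ c : ℝ, 0 < c ∧ ∀ u : Plane, c * ‖u‖ ≤ |⟪a, u⟫| ∨ c * ‖u‖ ≤ |⟪b, u⟫| := by
  have ha : 0 < ‖a‖ := norm_pos_iff.2 (ne_zero_of_cross_left h)
  refine ⟨|cross a b| / (‖a‖ + ‖b‖), by positivity, fun u => ?_⟩
  have hkey : |cross a b| * ‖u‖ = ‖⟪a, u⟫ • b - ⟪b, u⟫ • a‖ := by
    rw [← sq_eq_sq₀ (by positivity) (by positivity), mul_pow, sq_abs, EuclideanSpace.norm_sq_eq,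
      EuclideanSpace.norm_sq_eq]
    simp [Fin.sum_univ_two, PiLp.inner_apply, cross]
    ring
  have hle : |cross a b| * ‖u‖ ≤ |⟪a, u⟫| * ‖b‖ + |⟪b, u⟫| * ‖a‖ := by
    rw [hkey]
    refine (norm_sub_le _ _).trans (le_of_eq ?_)
    rw [norm_smul, norm_smul, Real.norm_eq_abs, Real.norm_eq_abs]
  by_contra! hcon
  rw [div_mul_eq_mul_div, lt_div_iff₀ (by positivity), lt_div_iff₀ (by positivity)] at hcon
  nlinarith [norm_nonneg b, abs_nonneg ⟪a, u⟫, abs_nonneg ⟪b, u⟫]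

variable {ξ η : Plane →L[ℝ] ℝ} {e e' : Plane}

lemma cross_eq_zero_of_coord (hdec : ∀ v, v = ξ v • e + η v • e') {u v : Plane}
    (hu : ξ u = 0) (hv : ξ v = 0) : cross u v = 0 := by
  rw [hdec u, hdec v, hu, hv, zero_smul, zero_add, zero_add, cross_smul_left,
    cross_smul_right, cross_self, mul_zero, mul_zero]

/-- Some affine map preserving `E` shifts `p` in the direction of `e` without killing `e`. -/
lemma exists_shift {E : Set Plane} {A : Fin 3 → Plane →L[ℝ] Plane} {p : Fin 3 → Plane}
    (hA : IsSpread E A p) {M : Plane →L[ℝ] Plane} (hM : IsLin E M)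
    (hdec : ∀ v, v = ξ v • e + η v • e') (htw : cross (M e) e ≠ 0) (x : Plane) :
    ∃ (T : Plane →L[ℝ] Plane) (t : Plane), IsUnit T ∧ (∀ y ∈ E, T y + t ∈ E) ∧ ξ (T e) ≠ 0 ∧
      ξ (T x + t - x) ≠ 0 := by
  obtain ⟨h, hh⟩ : ∃ h, ξ (p h - x) ≠ 0 := by
    by_contra! hcon
    refine hA.2 (cross_eq_zero_of_coord hdec ?_ ?_)
    · have h1 := hcon 1
      have h0 := hcon 0
      rw [map_sub] at *
      linarith
    · have h1 := hcon 2
      have h0 := hcon 0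
      rw [map_sub] at *
      linarith
  obtain ⟨q, hq⟩ := hM
  have hfix := hA.1 h
  have hlim : ∀ v, ∀ᶠ n in atTop, ξ (p h + (A h ^ n) (v - p h) - x) ≠ 0 := by
    intro v
    have h1 : Tendsto (fun n => p h + (A h ^ n) (v - p h) - x) atTop
        (𝓝 (p h + (0 : Plane →L[ℝ] Plane) (v - p h) - x)) :=
      ((tendsto_apply (tendsto_pow_zero hfix.2.1) tendsto_const_nhds).const_add _).sub_const _
    rw [zero_apply, add_zero] at h1
    exact ((ξ.continuous.tendsto _).comp h1).eventually_ne hh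
  obtain ⟨n, hn1, hn2⟩ := ((hlim x).and (hlim (q + M (x - q)))).exists
  by_cases he : ξ ((A h ^ n) e) = 0
  · refine ⟨A h ^ n * M, p h + (A h ^ n) (q - M q - p h), (hfix.1.pow n).mul hq.1, fun y hy => ?_,
      fun h0 => ?_, ?_⟩
    · convert pow_preserves hfix.2.2 n _ (hq.2.2 y hy) using 1
      simp only [mul_apply_eq_comp, map_add, map_sub]
      abel
    · have h1 := cross_map (A h ^ n) (M e) e
      rw [mul_apply_eq_comp] at h0
      rw [cross_eq_zero_of_coord hdec h0 he] at h1
      exact mul_ne_zero (detp_ne_zero (hfix.1.pow n)) htw h1.symm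
    · convert hn2 using 2
      simp only [mul_apply_eq_comp, map_add, map_sub]
      abel
  · refine ⟨A h ^ n, p h - (A h ^ n) (p h), hfix.1.pow n, fun y hy => ?_, he, ?_⟩
    · convert pow_preserves hfix.2.2 n y hy using 1
      rw [map_sub]
      abel
    · convert hn1 using 2
      rw [map_sub]
      abel

/-- Thickness when some linear part has a dominant eigenvector that is not an eigenvector of all
the linear parts. -/
theorem thick_of_twisted {E : Set Plane} (hE : IsCompact E) (hne : E.Nonempty)
    {A : Fin 3 → Plane →L[ℝ] Plane} {p : Fin 3 → Plane} (hA : IsSpread E A p)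
    {L M : Plane →L[ℝ] Plane} (hL : IsLin E L) (hM : IsLin E M) {α β : ℝ} {e e' : Plane}
    (hβα : |β| < |α|) (hLe : L e = α • e) (hLe' : L e' = β • e') (hcr : cross e e' ≠ 0)
    (htw : cross (M e) e ≠ 0) : ArithmeticallyThick E := by
  obtain ⟨ξ, η, hdec, hξe, -, hηe, -⟩ := exists_coords hcr
  obtain ⟨x, hx⟩ := hL
  have hx2 := hx.pow two_ne_zero
  have he0 : e ≠ 0 := ne_zero_of_cross_left hcr
  have hα0 : 0 < α ^ 2 := by
    have : 0 < |α| := (abs_nonneg β).trans_lt hβα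
    rw [← sq_abs]
    positivity
  have hβα2 : |β ^ 2| < α ^ 2 := by
    rw [abs_of_nonneg (sq_nonneg β)]
    exact sq_lt_sq.2 hβα
  have he2 := pow_apply_eigenvector hLe 2
  have he2' := pow_apply_eigenvector hLe' 2
  have hα1 : α ^ 2 < 1 := (le_abs_self _).trans_lt (abs_eigenvalue_lt_one hx2.2.1 he0 he2)
  obtain ⟨T₀, t₀, hT₀u, hT₀, hT₀e, hT₀x⟩ := exists_shift hA hM hdec htw x
  obtain ⟨T, t, hTu, hT, hTe, hTx⟩ : ∃ (T : Plane →L[ℝ] Plane) (t : Plane), IsUnit T ∧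
      (∀ y ∈ E, T y + t ∈ E) ∧ 0 < ξ (T e) ∧ ξ (T x + t - x) ≠ 0 := by
    have h1 : Tendsto (fun m => ξ (T₀ (((α ^ 2) ^ m)⁻¹ • (((L ^ 2) ^ m) (T₀ e))))) atTop
        (𝓝 (ξ (T₀ (ξ.smulRight e (T₀ e))))) :=
      (((ξ ∘L T₀).continuous).tendsto _).comp (tendsto_apply
        (tendsto_normalized_pow hdec hα0 hβα2 he2 he2') (tendsto_const_nhds (x := T₀ e)))
    have h2 : 0 < ξ (T₀ (ξ.smulRight e (T₀ e))) := by
      rw [ContinuousLinearMap.smulRight_apply, map_smul, map_smul, smul_eq_mul]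
      exact mul_self_pos.2 hT₀e
    have h3 : Tendsto (fun m => T₀ (x + ((L ^ 2) ^ m) (T₀ x + t₀ - x)) + t₀ - x) atTop
        (𝓝 (T₀ (x + (0 : Plane →L[ℝ] Plane) (T₀ x + t₀ - x)) + t₀ - x)) :=
      (((T₀.continuous.tendsto _).comp ((tendsto_apply (tendsto_pow_zero hx2.2.1)
        tendsto_const_nhds).const_add x)).add_const t₀).sub_const x
    rw [zero_apply, add_zero] at h3
    obtain ⟨m, hm1, hm2⟩ := ((h1.eventually_const_lt h2).and
      (((ξ.continuous.tendsto _).comp h3).eventually_ne hT₀x)).exists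
    refine ⟨T₀ * (L ^ 2) ^ m * T₀, T₀ (x + ((L ^ 2) ^ m) (t₀ - x)) + t₀,
      (hT₀u.mul (hx2.1.pow m)).mul hT₀u, fun y hy => ?_, ?_, ?_⟩
    · convert hT₀ _ (pow_preserves hx2.2.2 m _ (hT₀ y hy)) using 1
      simp only [mul_apply_eq_comp, map_add, map_sub]
      abel
    · rw [map_smul, map_smul, smul_eq_mul] at hm1
      exact (mul_pos_iff_of_pos_left (by positivity)).1 hm1
    · convert hm2 using 1
      simp only [Function.comp_apply, mul_apply_eq_comp]
      congr 1
      simp only [map_add, map_sub]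
      abel
  obtain ⟨q, hq⟩ := hM
  let R (j : Bool) : Plane →L[ℝ] Plane := if j then 1 else M
  let b (j : Bool) : Plane := if j then 0 else q - M q
  have hR : ∀ j, ∀ y ∈ E, R j y + b j ∈ E := by
    rintro (_ | _) y hy
    · convert hq.2.2 y hy using 1
      simp only [R, b, Bool.false_eq_true, if_false, map_sub]
      abel
    · simpa [R, b] using hy
  obtain ⟨c, hc, hRe⟩ := exists_le_abs_inner htw
  have hRe' : ∀ u, ∃ j, c * ‖u‖ ≤ |⟪R j e, u⟫| := fun u => by
    rcases hRe u with h | h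
    · exact ⟨false, h⟩
    · exact ⟨true, h⟩
  rcases lt_or_gt_of_ne hTx with hneg | hpos
  · refine thick_of_shift (ξ := -ξ) (η := -η) (e := -e) (e' := -e') hE hne (fun v => ?_) ?_ ?_ hx2
      hα0 hα1 hβα2 ?_ ?_ hTu hT ?_ ?_ R b hR hc fun u => ?_
    · simpa using hdec v
    · simpa using hξe
    · simpa using hηe
    · rw [map_neg, he2, smul_neg]
    · rw [map_neg, he2', smul_neg]
    · simpa using hTe
    · rw [neg_apply]
      linarith
    · simpa using hRe' u
  · exact thick_of_shift hE hne hdec hξe hηe hx2 hα0 hα1 hβα2 he2 he2' hTu hT hTe hpos R b hR hc hRe'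

end Twisted

/-! ### The main theorem -/

section Main

/-- A compact set preserved by three invertible affine contractions with non-collinear fixed points
is arithmetically thick. -/
theorem IsSpread.thick {E : Set Plane} (hE : IsCompact E) (hne : E.Nonempty)
    {A : Fin 3 → Plane →L[ℝ] Plane} {p : Fin 3 → Plane} (hA : IsSpread E A p) :
    ArithmeticallyThick E := by
  by_cases hdom : ∀ L, IsLin E L → ∀ (α β : ℝ) (e e' : Plane), |β| < |α| → L e = α • e →
      L e' = β • e' → cross e e' ≠ 0 → ∀ M, IsLin E M → cross (M e) e = 0
  swap
  · push Not at hdom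
    obtain ⟨L, hL, α, β, e, e', hβα, hLe, hLe', hcr, M, hM, htw⟩ := hdom
    exact thick_of_twisted hE hne hA hL hM hβα hLe hLe' hcr htw
  by_cases hirr : ∀ x : Plane, x ≠ 0 → ∃ M, IsLin E M ∧ cross (M x) x ≠ 0
  swap
  · push Not at hirr
    obtain ⟨x, hx0, hx⟩ := hirr
    exact thick_of_common_eigenvector hE hne hA hdom hx0 hx
  have htr : ∀ L, IsLin E L → trp L ^ 2 ≤ 4 * |detp L| := by
    intro L hL
    by_contra! hlt
    obtain ⟨α, β, e, e', hβα, hLe, hLe', hcr⟩ := exists_eigenvectors hlt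
    obtain ⟨M, hM, htw⟩ := hirr e (ne_zero_of_cross_left hcr)
    exact htw (hdom L hL α β e e' hβα hLe hLe' hcr M hM)
  obtain ⟨C, hC⟩ := exists_norm_sq_le (S := {L | IsLin E L}) (fun L hL M hM => hL.mul hM) hirr htr
  exact thick_of_bounded hE hne hA htr hC

/-- If every point of `E` is the image of a point of `E` under one of finitely many contractions
preserving `E`, fixed points of contractions preserving `E` are dense in `E`. -/
lemma exists_isFix_dist_lt {E : Set Plane} (hE : IsCompact E) {ι : Type*} {c : ℝ} (hc0 : 0 ≤ c)
    (hc1 : c < 1) (L : ι → Plane →L[ℝ] Plane) (a : ι → Plane) (hu : ∀ i, IsUnit (L i))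
    (hLc : ∀ i, ‖L i‖ ≤ c) (hmem : ∀ i, ∀ y ∈ E, L i y + a i ∈ E)
    (hcov : ∀ x ∈ E, ∃ i, ∃ y ∈ E, x = L i y + a i) {x : Plane} (hx : x ∈ E) {r : ℝ}
    (hr : 0 < r) : ∃ A p, IsFix E A p ∧ ‖x - p‖ < r := by
  have hiter : ∀ n : ℕ, ∀ x ∈ E, ∃ (A : Plane →L[ℝ] Plane) (b : Plane), IsUnit A ∧ ‖A‖ ≤ c ^ n ∧
      (∀ y ∈ E, A y + b ∈ E) ∧ ∃ y ∈ E, x = A y + b := by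
    intro n
    induction n with
    | zero =>
      intro x hx
      exact ⟨1, 0, isUnit_one, by simp, by simp, x, hx, by simp⟩
    | succ n ih =>
      intro x hx
      obtain ⟨i, x', hx', rfl⟩ := hcov x hx
      obtain ⟨A, b, hA, hAc, hAE, y, hy, rfl⟩ := ih x' hx'
      refine ⟨L i * A, L i b + a i, (hu i).mul hA, ?_, fun y hy => ?_, y, hy, ?_⟩
      · rw [pow_succ']
        exact (norm_mul_le _ _).trans (mul_le_mul (hLc i) hAc (norm_nonneg _) hc0)
      · convert hmem i _ (hAE y hy) using 1
        rw [mul_apply_eq_comp, map_add]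
        abel
      · rw [mul_apply_eq_comp, map_add]
        abel
  obtain ⟨K, hK⟩ := hE.isBounded.exists_norm_le
  have hlim : Tendsto (fun n : ℕ => c ^ n * (2 * K)) atTop (𝓝 0) := by
    simpa using (tendsto_pow_atTop_nhds_zero_of_lt_one hc0 hc1).mul_const (2 * K)
  obtain ⟨n, hn, hn0⟩ := ((hlim.eventually_lt_const hr).and (eventually_ne_atTop 0)).exists
  obtain ⟨A, b, hA, hAc, hAE, y, hy, rfl⟩ := hiter n x hx
  have hA1 : ‖A‖ < 1 := hAc.trans_lt (pow_lt_one₀ hc0 hc1 hn0)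
  obtain ⟨p, hp⟩ := exists_fixedPoint hA1 b
  have hfix := IsFix.of_fixedPoint hA hA1 hAE hp
  refine ⟨A, p, hfix, ?_⟩
  have h1 : A y + b - p = A (y - p) := by
    nth_rw 1 [hp]
    rw [map_sub]
    abel
  have h2 : ‖y - p‖ ≤ 2 * K := by
    have := hK _ hy
    have := hK _ (hfix.mem hE.isClosed ⟨y, hy⟩)
    linarith [norm_sub_le y p]
  rw [h1]
  calc _ ≤ ‖A‖ * ‖y - p‖ := A.le_opNorm _
    _ ≤ c ^ n * (2 * K) := by gcongr
    _ < r := hn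

/-- A set all of whose triples of points are collinear lies on a line. -/
lemma exists_line_of_cross_eq_zero {E : Set Plane} (hne : E.Nonempty)
    (h : ∀ x ∈ E, ∀ y ∈ E, ∀ z ∈ E, cross (y - x) (z - x) = 0) :
    ∃ (v : Plane) (c : ℝ), v ≠ 0 ∧ ∀ x ∈ E, ⟪x, v⟫ = c := by
  obtain ⟨x, hx⟩ := hne
  by_cases hsub : ∀ y ∈ E, y = x
  · refine ⟨EuclideanSpace.single 0 1, ⟪x, EuclideanSpace.single 0 1⟫, ?_, fun y hy => by
      rw [hsub y hy]⟩
    intro h0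
    simpa using congrArg (fun v : Plane => v 0) h0
  · push Not at hsub
    obtain ⟨y, hy, hyx⟩ := hsub
    have hinner : ∀ z : Plane, ⟪z, !₂[-(y - x) 1, (y - x) 0]⟫ = cross (y - x) z := fun z => by
      simp [PiLp.inner_apply, Fin.sum_univ_two, cross]
      ring
    refine ⟨!₂[-(y - x) 1, (y - x) 0], cross (y - x) x, fun h0 => hyx ?_, fun z hz => ?_⟩
    · have h1 := congrArg (fun v : Plane => v 0) h0
      have h2 := congrArg (fun v : Plane => v 1) h0
      simp [sub_eq_zero] at h1 h2
      ext i
      fin_cases i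
      · exact h2
      · simp; linarith
    · have h1 := h x hx y hy z hz
      rw [hinner]
      rw [cross_swap, cross_sub_left] at h1
      rw [cross_swap, cross_swap (y - x) x]
      linarith

lemma exists_isSpread {E : Set Plane} (hne : E.Nonempty)
    (hfix : ∀ x ∈ E, ∀ r > 0, ∃ A p, IsFix E A p ∧ ‖x - p‖ < r)
    (hline : ¬ ∃ (v : Plane) (c : ℝ), v ≠ 0 ∧ ∀ x ∈ E, ⟪x, v⟫ = c) :
    ∃ A p, IsSpread E A p := by
  have hlim : ∀ x ∈ E, ∃ p : ℕ → Plane, Tendsto p atTop (𝓝 x) ∧ ∀ n, ∃ A, IsFix E A (p n) := by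
    intro x hx
    choose A p hA hp using fun n : ℕ => hfix x hx (1 / ((n : ℝ) + 1)) Nat.one_div_pos_of_nat
    refine ⟨p, tendsto_iff_norm_sub_tendsto_zero.2 ?_, fun n => ⟨A n, hA n⟩⟩
    refine squeeze_zero (fun n => norm_nonneg _) (fun n => ?_)
      tendsto_one_div_add_atTop_nhds_zero_nat
    rw [norm_sub_rev]
    exact (hp n).le
  by_contra! hcon
  refine hline (exists_line_of_cross_eq_zero hne fun x hx y hy z hz => ?_)
  obtain ⟨p, hpx, hp⟩ := hlim x hx
  obtain ⟨q, hqy, hq⟩ := hlim y hy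
  obtain ⟨s, hsz, hs⟩ := hlim z hz
  refine tendsto_nhds_unique (tendsto_cross (hqy.sub hpx) (hsz.sub hpx))
    (tendsto_const_nhds.congr fun n => ?_)
  obtain ⟨A, hA⟩ := hp n
  obtain ⟨B, hB⟩ := hq n
  obtain ⟨C, hC⟩ := hs n
  by_contra hne0
  refine hcon ![A, B, C] ![p n, q n, s n] ⟨fun h => ?_, fun h0 => hne0 h0.symm⟩
  fin_cases h
  exacts [hA, hB, hC]

end Main

end PlanarThick

/-- The attractor of a planar affine IFS `{x ↦ T_i x + a_i}` not contained in a straight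
line is arithmetically thick. -/
theorem planar_selfAffine_arithmetically_thick {ℓ : ℕ} (hl : 0 < ℓ)
    (T : Fin ℓ → Matrix (Fin 2) (Fin 2) ℝ) (a : Fin ℓ → EuclideanSpace ℝ (Fin 2))
    (hinv : ∀ i, IsUnit (T i))
    (hnorm : ∀ i, ∃ c : ℝ, 0 ≤ c ∧ c < 1 ∧
      ∀ x : EuclideanSpace ℝ (Fin 2), ‖Matrix.toEuclideanLin (T i) x‖ ≤ c * ‖x‖)
    (E : Set (EuclideanSpace ℝ (Fin 2))) (hne : E.Nonempty) (hcomp : IsCompact E)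
    (hattr : E = ⋃ i, (fun x => Matrix.toEuclideanLin (T i) x + a i) '' E)
    (hline : ¬ ∃ (v : EuclideanSpace ℝ (Fin 2)) (c : ℝ), v ≠ 0 ∧ ∀ x ∈ E, ⟪x, v⟫ = c) :
    ArithmeticallyThick E := by
  choose c hc0 hc1 hc using hnorm
  have : Nonempty (Fin ℓ) := ⟨⟨0, hl⟩⟩
  obtain ⟨i₀, hi₀⟩ := Finite.exists_max c
  let L (i : Fin ℓ) := Matrix.toEuclideanCLM (𝕜 := ℝ) (T i)
  have hfix := fun x (hx : x ∈ E) r (hr : 0 < r) =>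
    PlanarThick.exists_isFix_dist_lt hcomp (hc0 i₀) (hc1 i₀) L a
      (fun i => (hinv i).map (Matrix.toEuclideanCLM (n := Fin 2) (𝕜 := ℝ)))
      (fun i => (ContinuousLinearMap.opNorm_le_bound _ (hc0 i) (hc i)).trans (hi₀ i))
      (fun i y hy => by
        rw [hattr]
        exact mem_iUnion.2 ⟨i, y, hy, rfl⟩)
      (fun x hx => by
        rw [hattr] at hx
        obtain ⟨i, y, hy, rfl⟩ := mem_iUnion.1 hx
        exact ⟨i, y, hy, rfl⟩)
      hx hr
  obtain ⟨A, p, hA⟩ := PlanarThick.exists_isSpread hne hfix hline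
  exact hA.thick hcomp hne
end

section
/- Let A = {a_1, …, a_n} be a finite subset of ℝ^d with n points and let ε ∈ [0, 1/n]. Then conv(A) + conv(εA) = conv(A) + εA, where εA = {εa : a ∈ A} and the sums are Minkowski sums. -/
open Metric Set
open scoped Pointwise

/-- If the nonnegative weights `u` have total mass `1 + ε` and `u a ≥ ε` at a point `a ∈ s`, then
removing the mass `ε` from `a` leaves a convex combination of `s`. -/
theorem Finset.sum_smul_mem_convexHull_add_smul {E : Type*} [AddCommGroup E] [Module ℝ E]
    {s : Finset E} {ε : ℝ} {u : E → ℝ} (hu : ∀ y ∈ s, 0 ≤ u y) (hsum : ∑ y ∈ s, u y = 1 + ε)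
    {a : E} (ha : a ∈ s) (hle : ε ≤ u a) :
    ∑ y ∈ s, u y • y ∈ convexHull ℝ (s : Set E) + ε • (s : Set E) := by
  classical
  refine Set.mem_add.2 ⟨∑ y ∈ s, (u y - if y = a then ε else 0) • y, ?_, ε • a,
    Set.smul_mem_smul_set ha, ?_⟩
  · refine Finset.mem_convexHull'.2 ⟨fun y => u y - if y = a then ε else 0, fun y hy => ?_, ?_, rfl⟩
    · by_cases h : y = a
      · subst h
        simpa using hle
      · simpa [h] using hu y hy
    · simp [Finset.sum_sub_distrib, hsum, ha]
  · simp [sub_smul, Finset.sum_sub_distrib, ite_smul, ha]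

/-- For a finite set `A ⊆ ℝ^d` with `n` points and `ε ∈ [0, 1/n]`, one has
`conv(A) + conv(εA) = conv(A) + εA` (Minkowski sums). -/
theorem convexHull_add_smul_convexHull {d n : ℕ} (hn : 0 < n)
    (A : Finset (EuclideanSpace ℝ (Fin d))) (hcard : A.card = n)
    (ε : ℝ) (hε : ε ∈ Set.Icc (0 : ℝ) (1 / n)) :
    convexHull ℝ (A : Set (EuclideanSpace ℝ (Fin d))) +
        convexHull ℝ (ε • (A : Set (EuclideanSpace ℝ (Fin d)))) =
      convexHull ℝ (A : Set (EuclideanSpace ℝ (Fin d))) +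
        ε • (A : Set (EuclideanSpace ℝ (Fin d))) := by
  obtain ⟨hε0, hε1⟩ := hε
  refine Set.Subset.antisymm ?_ (Set.add_subset_add_left (subset_convexHull ℝ _))
  rintro _ ⟨x, hx, y, hy, rfl⟩
  rw [convexHull_smul] at hy
  obtain ⟨z, hz, rfl⟩ := hy
  obtain ⟨w, hw0, hw1, rfl⟩ := Finset.mem_convexHull'.1 hx
  obtain ⟨v, hv0, hv1, rfl⟩ := Finset.mem_convexHull'.1 hz
  have hsum : ∑ a ∈ A, (w a + ε * v a) = 1 + ε := by
    rw [Finset.sum_add_distrib, ← Finset.mul_sum, hw1, hv1, mul_one]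
  have hmass : ∑ _a ∈ A, ε ≤ ∑ a ∈ A, (w a + ε * v a) := by
    rw [hsum, Finset.sum_const, hcard, nsmul_eq_mul]
    have := (le_div_iff₀' (Nat.cast_pos.2 hn : (0 : ℝ) < n)).1 hε1
    linarith
  obtain ⟨a, ha, hle⟩ := Finset.exists_le_of_sum_le (Finset.card_pos.1 (hcard ▸ hn)) hmass
  have key := Finset.sum_smul_mem_convexHull_add_smul
    (fun y hy => add_nonneg (hw0 y hy) (mul_nonneg hε0 (hv0 y hy))) hsum ha hle
  simpa [add_smul, mul_smul, Finset.sum_add_distrib, ← Finset.smul_sum] using key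
end

section
/- Let A ⊂ ℝ^d be a bounded set and let R > 0. Suppose ‖a‖ ≥ R for every a ∈ A. Then for each z ∈ conv(A), ‖z‖ ≥ R − diam(A)²/(2R). -/
open Metric Set

/-- A lower bound for all pairwise inner products of points of `A` extends to `convexHull ℝ A`. -/
theorem le_inner_of_mem_convexHull {E : Type*} [NormedAddCommGroup E] [InnerProductSpace ℝ E]
    {A : Set E} {c : ℝ} (h : ∀ a ∈ A, ∀ b ∈ A, c ≤ inner ℝ a b) {x y : E}
    (hx : x ∈ convexHull ℝ A) (hy : y ∈ convexHull ℝ A) : c ≤ inner ℝ x y := by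
  have half (u : E) (hu : ∀ a ∈ A, c ≤ inner ℝ u a) {v : E} (hv : v ∈ convexHull ℝ A) :
      c ≤ inner ℝ u v :=
    convexHull_min (t := {v | c ≤ inner ℝ u v}) hu
      (convex_halfSpace_ge (innerₗ E u).isLinear c) hv
  refine half x (fun b hb => ?_) hy
  rw [real_inner_comm]
  exact half b (fun a ha => h b hb a ha) hx

/-- If `A ⊆ ℝ^d` is bounded and every `a ∈ A` satisfies `‖a‖ ≥ R`, then every point `z`
of the convex hull of `A` satisfies `‖z‖ ≥ R − diam(A)²/(2R)`. -/
theorem norm_ge_of_mem_convexHull {d : ℕ} (A : Set (EuclideanSpace ℝ (Fin d)))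
    (hA : Bornology.IsBounded A) (R : ℝ) (hR : 0 < R) (h : ∀ a ∈ A, R ≤ ‖a‖) :
    ∀ z ∈ convexHull ℝ A, R - Metric.diam A ^ 2 / (2 * R) ≤ ‖z‖ := by
  intro z hz
  have hinner : ∀ a ∈ A, ∀ b ∈ A, R ^ 2 - diam A ^ 2 / 2 ≤ inner ℝ a b := by
    intro a ha b hb
    have hab : ‖a - b‖ ≤ diam A := by
      rw [← dist_eq_norm]
      exact dist_le_diam_of_mem hA ha hb
    have hsq := pow_le_pow_left₀ (norm_nonneg _) hab 2
    have hRa := pow_le_pow_left₀ hR.le (h a ha) 2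
    have hRb := pow_le_pow_left₀ hR.le (h b hb) 2
    linarith [norm_sub_sq_real a b]
  have hz2 := le_inner_of_mem_convexHull hinner hz hz
  rw [real_inner_self_eq_norm_sq] at hz2
  set t := diam A ^ 2 / (2 * R) with ht
  have ht0 : 0 ≤ t := by positivity
  have hD : diam A ^ 2 / 2 = R * t := by
    rw [ht]
    field_simp
  rw [hD] at hz2
  by_contra! hlt
  nlinarith [norm_nonneg z]
end

section
/- Let A ⊂ ℝ^d be a bounded set and suppose conv(A) ⊇ B(y, r) for some y ∈ ℝ^d and r > 0. Then for every R > diam(A)²/r and every z ∈ ℝ^d, B(z, R) + A ⊇ B(z, R) + B(y, r/2), where the sums are Minkowski sums. -/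
open Metric Set
open scoped Pointwise

/-- If the convex hull of a bounded set in a nontrivial space contains a closed ball of radius `r`,
then the set has diameter at least `r`. -/
lemma le_diam_of_closedBall_subset_convexHull {E : Type*} [NormedAddCommGroup E]
    [NormedSpace ℝ E] {A : Set E} (hA : Bornology.IsBounded A) {y : E} {r : ℝ} (hr : 0 ≤ r)
    (hconv : closedBall y r ⊆ convexHull ℝ A) {w : E} (hw : w ≠ 0) : r ≤ diam A := by
  have hnorm : ‖(r / ‖w‖) • w‖ = r := by
    rw [norm_smul, norm_div, norm_norm, Real.norm_of_nonneg hr,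
      div_mul_cancel₀ _ (norm_ne_zero_iff.mpr hw)]
  have hmem : y + (r / ‖w‖) • w ∈ convexHull ℝ A :=
    hconv (by rw [mem_closedBall, dist_self_add_left, hnorm])
  have hdist := dist_le_diam_of_mem (isBounded_convexHull.mpr hA) hmem
    (hconv (mem_closedBall_self hr))
  rwa [convexHull_diam, dist_self_add_left, hnorm] at hdist

/-- If the convex hull of a set contains a closed ball of radius `r`, then in every direction `w`
the set has a point at least `r` ahead of the centre of the ball. -/
lemma exists_mul_norm_le_inner_of_closedBall_subset_convexHull {E : Type*} [NormedAddCommGroup E]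
    [InnerProductSpace ℝ E] {A : Set E} {y : E} {r : ℝ} (hr : 0 ≤ r)
    (hconv : closedBall y r ⊆ convexHull ℝ A) (w : E) :
    ∃ a ∈ A, r * ‖w‖ ≤ inner ℝ w (a - y) := by
  have hmem : y + (r / ‖w‖) • w ∈ convexHull ℝ A := by
    refine hconv ?_
    rw [mem_closedBall, dist_self_add_left, norm_smul, norm_div, norm_norm,
      Real.norm_of_nonneg hr]
    rw [div_mul_eq_mul_div]
    exact div_le_of_le_mul₀ (norm_nonneg w) hr le_rfl
  obtain ⟨a, ha, hle⟩ := ((innerₗ E w).convexOn (convex_convexHull ℝ A)).exists_ge_of_mem_convexHull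
    (subset_convexHull ℝ A) hmem
  refine ⟨a, ha, ?_⟩
  simp only [innerₗ_apply_apply, inner_add_right, inner_smul_right,
    real_inner_self_eq_norm_sq] at hle
  have hscale : r / ‖w‖ * ‖w‖ ^ 2 = r * ‖w‖ := by
    rcases eq_or_ne ‖w‖ 0 with h | h
    · simp [h]
    · field_simp
  rw [inner_sub_right]
  linarith

/-- Let `A ⊆ ℝ^d` be bounded with `conv(A) ⊇ B(y, r)`. Then for every `R > diam(A)²/r`
and every `z`, `B(z,R) + A ⊇ B(z,R) + B(y, r/2)` (Minkowski sums). -/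
theorem ball_add_set_contains_ball_add_ball {d : ℕ} (A : Set (EuclideanSpace ℝ (Fin d)))
    (hA : Bornology.IsBounded A) (y : EuclideanSpace ℝ (Fin d)) (r : ℝ) (hr : 0 < r)
    (hconv : Metric.closedBall y r ⊆ convexHull ℝ A) :
    ∀ R : ℝ, Metric.diam A ^ 2 / r < R → ∀ z : EuclideanSpace ℝ (Fin d),
      Metric.closedBall z R + Metric.closedBall y (r / 2) ⊆ Metric.closedBall z R + A := by
  rintro R hR z _ ⟨u, hu, v, hv, rfl⟩
  have hR0 : 0 < R := lt_of_le_of_lt (by positivity) hR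
  rw [div_lt_iff₀ hr] at hR
  obtain ⟨a, ha, hle⟩ := exists_mul_norm_le_inner_of_closedBall_subset_convexHull hr.le hconv
    ((u - z) + (v - y))
  refine ⟨u + v - a, ?_, a, ha, sub_add_cancel _ _⟩
  rw [mem_closedBall, dist_eq_norm] at hu hv ⊢
  rw [show u + v - a - z = ((u - z) + (v - y)) - (a - y) by abel]
  have hw : ‖(u - z) + (v - y)‖ ≤ R + r / 2 := (norm_add_le _ _).trans (add_le_add hu hv)
  generalize (u - z) + (v - y) = w at hle hw ⊢
  have hb : ‖a - y‖ ≤ diam A := by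
    rw [← dist_eq_norm, ← convexHull_diam A]
    exact dist_le_diam_of_mem (isBounded_convexHull.mpr hA) (subset_convexHull ℝ A ha)
      (hconv (mem_closedBall_self hr.le))
  by_cases htriv : w - (a - y) = 0
  · rw [htriv, norm_zero]
    exact hR0.le
  have hrD : r ≤ diam A := le_diam_of_closedBall_subset_convexHull hA hr.le hconv htriv
  have hDR : diam A ≤ R := by nlinarith
  refine le_of_sq_le_sq ?_ hR0.le
  rw [norm_sub_sq_real]
  have hb2 : ‖a - y‖ ^ 2 ≤ diam A ^ 2 := by gcongr
  have hw0 := norm_nonneg w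
  rcases le_total ‖w‖ (2 * r) with h | h
  · nlinarith [mul_nonneg hw0 (sub_nonneg.mpr h)]
  · nlinarith [mul_nonneg hw0 (sub_nonneg.mpr hw)]
end

section
/- Let E be a compact set in ℝ^d with τ(E) ≥ c > 0, and let N be the integer part of ((4 + c)/c)^d. Then for every x ∈ E and every 0 < r ≤ diam(E), there exist z ∈ ℝ^d and points y_1, …, y_N ∈ E ∩ B(x, r) such that conv({y_1, …, y_N}) ⊇ B(z, cr/2). -/
open Metric Set

/-- The thickness of a compact set `E ⊆ ℝ^d`. -/
noncomputable def thickness {d : ℕ} (E : Set (EuclideanSpace ℝ (Fin d))) : ℝ :=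
  sSup {c : ℝ | c ∈ Set.Icc (0 : ℝ) 1 ∧
    ∀ x ∈ E, ∀ r : ℝ, 0 < r → r ≤ Metric.diam E →
      ∃ y : EuclideanSpace ℝ (Fin d),
        Metric.closedBall y (c * r) ⊆ convexHull ℝ (Metric.closedBall x r ∩ E)}

open MeasureTheory

/-- Packing bound: an `s`-separated finite subset of a ball of radius `r` in `ℝ^d` has at most
`((2r + s) / s) ^ d` points. -/
theorem card_le_of_pairwise_le_dist {d : ℕ} {x : EuclideanSpace ℝ (Fin d)} {r s : ℝ}
    (hr : 0 < r) (hs : 0 < s) {T : Finset (EuclideanSpace ℝ (Fin d))}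
    (hT : (T : Set (EuclideanSpace ℝ (Fin d))) ⊆ closedBall x r)
    (hsep : (T : Set (EuclideanSpace ℝ (Fin d))).Pairwise fun a b => s ≤ dist a b) :
    (T.card : ℝ) ≤ ((2 * r + s) / s) ^ d := by
  let μ : Measure (EuclideanSpace ℝ (Fin d)) := volume
  have hdisj : (T : Set (EuclideanSpace ℝ (Fin d))).PairwiseDisjoint fun a => ball a (s / 2) :=
    fun a ha b hb hab => ball_disjoint_ball (by linarith [hsep ha hb hab])
  have hsub : (⋃ a ∈ T, ball a (s / 2)) ⊆ ball x (r + s / 2) :=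
    iUnion₂_subset fun a ha => ball_subset_ball' (by linarith [mem_closedBall.1 (hT ha)])
  have hvol : (T.card : ENNReal) * ENNReal.ofReal ((s / 2) ^ d) * μ (ball 0 1) ≤
      ENNReal.ofReal ((r + s / 2) ^ d) * μ (ball 0 1) := by
    calc
      (T.card : ENNReal) * ENNReal.ofReal ((s / 2) ^ d) * μ (ball 0 1)
          = μ (⋃ a ∈ T, ball a (s / 2)) := by
        rw [measure_biUnion_finset hdisj fun a _ => measurableSet_ball]
        simp [μ.addHaar_ball_of_pos _ (half_pos hs), mul_assoc]
      _ ≤ μ (ball x (r + s / 2)) := measure_mono hsub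
      _ = _ := by
        rw [μ.addHaar_ball_of_pos _ (by positivity)]
        simp
  have hle : (T.card : ENNReal) * ENNReal.ofReal ((s / 2) ^ d) ≤
      ENNReal.ofReal ((r + s / 2) ^ d) :=
    (ENNReal.mul_le_mul_iff_left (measure_ball_pos _ _ zero_lt_one).ne'
      measure_ball_lt_top.ne).1 hvol
  have hreal : (T.card : ℝ) * (s / 2) ^ d ≤ (r + s / 2) ^ d := by
    rw [← ENNReal.ofReal_natCast, ← ENNReal.ofReal_mul (by positivity)] at hle
    exact (ENNReal.ofReal_le_ofReal_iff (by positivity)).1 hle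
  have hratio : (2 * r + s) / s = (r + s / 2) / (s / 2) := by
    field_simp
  rw [hratio, div_pow, le_div_iff₀ (by positivity)]
  exact hreal

/-- If the cardinalities of the `s`-separated finite subsets of `K` are bounded, then one of these
subsets is an `s`-net of `K`. -/
theorem exists_separated_net {α : Type*} [PseudoMetricSpace α] {K : Set α} {s : ℝ} {N : ℕ}
    (hs : 0 < s)
    (hbound : ∀ T : Finset α, (T : Set α) ⊆ K →
      ((T : Set α).Pairwise fun a b => s ≤ dist a b) → T.card ≤ N) :
    ∃ T : Finset α, (T : Set α) ⊆ K ∧ T.card ≤ N ∧ ∀ k ∈ K, ∃ t ∈ T, dist k t < s := by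
  classical
  let P : ℕ → Prop := fun n => ∃ T : Finset α, (T : Set α) ⊆ K ∧
    ((T : Set α).Pairwise fun a b => s ≤ dist a b) ∧ T.card = n
  have hP : P (Nat.findGreatest P N) :=
    Nat.findGreatest_spec (m := 0) (Nat.zero_le N) ⟨∅, by simp, by simp, rfl⟩
  obtain ⟨T, hTK, hTsep, hTcard⟩ := hP
  refine ⟨T, hTK, hbound T hTK hTsep, fun k hk => ?_⟩
  by_contra! hfar
  have hkT : k ∉ T := fun h => by
    have := hfar k h
    rw [dist_self] at this
    linarith
  have hsub : ((insert k T : Finset α) : Set α) ⊆ K := by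
    rw [Finset.coe_insert]
    exact insert_subset hk hTK
  have hsep : ((insert k T : Finset α) : Set α).Pairwise fun a b => s ≤ dist a b := by
    rw [Finset.coe_insert]
    exact hTsep.insert fun b hb _ => ⟨hfar b hb, dist_comm k b ▸ hfar b hb⟩
  have hle := Nat.le_findGreatest (hbound _ hsub hsep) (show P _ from ⟨_, hsub, hsep, rfl⟩)
  rw [Finset.card_insert_of_notMem hkT] at hle
  omega

/-- Cancellation: if `K` lies in the `s`-neighbourhood of the finite set `T` and its convex hull
contains a ball of radius `ρ + s`, then the convex hull of `T` contains the concentric ball of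
radius `ρ`. -/
theorem closedBall_subset_convexHull_of_net {V : Type*} [NormedAddCommGroup V]
    [InnerProductSpace ℝ V] [CompleteSpace V] {K : Set V} {T : Finset V} {y : V} {ρ s : ℝ}
    (hs : 0 ≤ s) (hT : T.Nonempty) (hnet : ∀ k ∈ K, ∃ t ∈ T, dist k t ≤ s)
    (hball : closedBall y (ρ + s) ⊆ convexHull ℝ K) :
    closedBall y ρ ⊆ convexHull ℝ (T : Set V) := by
  intro p hp
  by_contra hpT
  obtain ⟨f, u, hfu, hup⟩ := geometric_hahn_banach_closed_point (convex_convexHull ℝ (T : Set V))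
    (T.finite_toSet.isCompact_convexHull (𝕜 := ℝ)).isClosed hpT
  obtain ⟨v, rfl⟩ := (InnerProductSpace.toDual ℝ V).surjective f
  simp only [InnerProductSpace.toDual_apply_apply] at hfu hup
  have hv : v ≠ 0 := by
    rintro rfl
    obtain ⟨t, ht⟩ := hT
    have := hfu t (subset_convexHull ℝ _ ht)
    simp only [inner_zero_left] at this hup
    linarith
  have hv' : 0 < ‖v‖ := norm_pos_iff.2 hv
  have hq : p + (s / ‖v‖) • v ∈ convexHull ℝ K := by
    apply hball
    rw [mem_closedBall, dist_eq_norm] at hp ⊢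
    calc ‖p + (s / ‖v‖) • v - y‖ = ‖(p - y) + (s / ‖v‖) • v‖ := by congr 1; abel
      _ ≤ ‖p - y‖ + ‖(s / ‖v‖) • v‖ := norm_add_le _ _
      _ = ‖p - y‖ + s := by
        rw [norm_smul, Real.norm_of_nonneg (by positivity), div_mul_cancel₀ _ hv'.ne']
      _ ≤ ρ + s := by gcongr
  have hhalf : convexHull ℝ K ⊆ {w | inner ℝ v w ≤ u + s * ‖v‖} := by
    refine convexHull_min (fun k hk => ?_)
      (convex_halfSpace_le (innerSL ℝ v).toLinearMap.isLinear _)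
    obtain ⟨t, ht, hkt⟩ := hnet k hk
    have h1 := hfu t (subset_convexHull ℝ _ ht)
    have h2 := real_inner_le_norm v (k - t)
    rw [inner_sub_right] at h2
    rw [dist_eq_norm] at hkt
    have h3 := mul_le_mul_of_nonneg_left hkt hv'.le
    simp only [mem_ofPred_eq]
    linarith
  have hqu : inner ℝ v (p + (s / ‖v‖) • v) ≤ u + s * ‖v‖ := hhalf hq
  rw [inner_add_right, real_inner_smul_right, real_inner_self_eq_norm_sq] at hqu
  have : s / ‖v‖ * ‖v‖ ^ 2 = s * ‖v‖ := by field_simp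
  linarith

/-- A strict net of a compact set is a net with a slightly smaller radius. -/
theorem IsCompact.exists_net_lt {α : Type*} [PseudoMetricSpace α] {K : Set α} (hK : IsCompact K)
    {T : Finset α} (hT : T.Nonempty) {s : ℝ} (hs : 0 < s)
    (hnet : ∀ k ∈ K, ∃ t ∈ T, dist k t < s) :
    ∃ s' < s, 0 ≤ s' ∧ ∀ k ∈ K, ∃ t ∈ T, dist k t ≤ s' := by
  rcases K.eq_empty_or_nonempty with rfl | hKne
  · exact ⟨0, hs, le_rfl, by simp⟩
  obtain ⟨m, hm, hmax⟩ := hK.exists_isMaxOn hKne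
    (continuous_infDist_pt (T : Set α)).continuousOn
  refine ⟨infDist m T, ?_, infDist_nonneg, fun k hk => ?_⟩
  · obtain ⟨t, ht, hmt⟩ := hnet m hm
    exact (infDist_le_dist_of_mem (Finset.mem_coe.2 ht)).trans_lt hmt
  · obtain ⟨t, ht, hkt⟩ := T.finite_toSet.isCompact.exists_infDist_eq_dist hT k
    exact ⟨t, ht, hkt ▸ hmax hk⟩

/-- Below the thickness, the defining ball condition holds. -/
theorem exists_closedBall_subset_of_lt_thickness {d : ℕ} {E : Set (EuclideanSpace ℝ (Fin d))}
    {c : ℝ} (h0 : 0 ≤ c) (hc : c < thickness E) {x : EuclideanSpace ℝ (Fin d)} (hx : x ∈ E)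
    {r : ℝ} (hr : 0 < r) (hrE : r ≤ diam E) :
    ∃ y, closedBall y (c * r) ⊆ convexHull ℝ (closedBall x r ∩ E) := by
  rw [thickness] at hc
  obtain ⟨c', ⟨-, h⟩, hcc'⟩ := exists_lt_of_lt_csSup (nonempty_iff_ne_empty.2 fun h => by
    rw [h, Real.sSup_empty] at hc
    linarith) hc
  obtain ⟨y, hy⟩ := h x hx r hr hrE
  exact ⟨y, (closedBall_subset_closedBall (by gcongr)).trans hy⟩

/-- A nonempty finset with at most `N` elements is the range of a family indexed by `Fin N`. -/
theorem Finset.exists_range_eq_of_card_le {α : Type*} {T : Finset α} (hT : T.Nonempty) {N : ℕ}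
    (hN : T.card ≤ N) : ∃ y : Fin N → α, Set.range y = T := by
  obtain ⟨e⟩ : Nonempty (T ↪ Fin N) :=
    Function.Embedding.nonempty_of_card_le (by simpa using hN)
  have : Nonempty T := hT.to_subtype
  refine ⟨fun i => (Function.invFun e i : T), ?_⟩
  have hsurj := Function.invFun_surjective e.injective
  rw [show (fun i => ((Function.invFun e i : T) : α)) = Subtype.val ∘ Function.invFun e from rfl,
    hsurj.range_comp]
  simp

/-- If `E ⊆ ℝ^d` is compact with `τ(E) ≥ c > 0` and `N = ⌊((4+c)/c)^d⌋`, then for every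
`x ∈ E` and `0 < r ≤ diam E` there are `z ∈ ℝ^d` and `y_1, …, y_N ∈ E ∩ B(x,r)` with
`conv({y_1, …, y_N}) ⊇ B(z, cr/2)`. -/
theorem thick_set_finite_points_property {d : ℕ} (E : Set (EuclideanSpace ℝ (Fin d)))
    (hcomp : IsCompact E) (c : ℝ) (hc : 0 < c) (hthick : c ≤ thickness E)
    (N : ℕ) (hN : N = ⌊((4 + c) / c) ^ d⌋₊) :
    ∀ x ∈ E, ∀ r : ℝ, 0 < r → r ≤ Metric.diam E →
      ∃ (z : EuclideanSpace ℝ (Fin d)) (y : Fin N → EuclideanSpace ℝ (Fin d)),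
        (∀ i, y i ∈ E ∩ Metric.closedBall x r) ∧
        Metric.closedBall z (c * r / 2) ⊆ convexHull ℝ (Set.range y) := by
  intro x hx r hr hrE
  have hs : 0 < c * r / 2 := by positivity
  have hK : IsCompact (closedBall x r ∩ E) := hcomp.inter_left isClosed_closedBall
  obtain ⟨T, hTK, hTN, hnet⟩ := exists_separated_net (K := closedBall x r ∩ E) (N := N) hs
    fun T hTK hsep => by
      rw [hN]
      refine Nat.le_floor ((card_le_of_pairwise_le_dist hr hs
        (hTK.trans inter_subset_left) hsep).trans_eq ?_)
      congr 1
      field_simp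
      ring
  have hT : T.Nonempty := by
    obtain ⟨t, ht, -⟩ := hnet x ⟨mem_closedBall_self hr.le, hx⟩
    exact ⟨t, ht⟩
  obtain ⟨s, hsc, hs0, hnet'⟩ := hK.exists_net_lt hT hs hnet
  obtain ⟨z, hz⟩ := exists_closedBall_subset_of_lt_thickness (c := c / 2 + s / r) (by positivity)
    (lt_of_lt_of_le (by
      have : s / r < c / 2 := by
        rw [div_lt_iff₀ hr]
        linarith
      linarith) hthick) hx hr hrE
  have hrad : (c / 2 + s / r) * r = c * r / 2 + s := by field_simp
  rw [hrad] at hz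
  obtain ⟨y, hy⟩ := T.exists_range_eq_of_card_le hT hTN
  refine ⟨z, y, fun i => ?_, ?_⟩
  · have hi : y i ∈ (T : Set _) := hy ▸ mem_range_self i
    exact (hTK hi).symm
  · rw [hy]
    exact closedBall_subset_convexHull_of_net hs0 hT hnet' hz
end

section
/- Let Φ = {φ_i(x) = Tx + a_i}_{i=1}^ℓ be a homogeneous affine iterated function system on ℝ^d, where T is an invertible d×d real matrix with operator norm strictly less than 1, and let E be the attractor of Φ. Suppose the origin is an interior point of conv(A), where A = {a_1, …, a_ℓ}. Then there exist δ > 0 and n ∈ ℕ such that, with B = B(0, δ) and Φ(B) = ∪_{i=1}^ℓ φ_i(B), the n-fold Minkowski sum ⊕_n Φ(B) contains ⊕_n B, and furthermore ⊕_n E ⊇ ⊕_n B. -/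
open Metric Set

/-- A point of the convex hull of a finite family is a convex combination of the whole family. -/
theorem exists_weights_of_mem_convexHull_range {ι V : Type*} [Fintype ι] [AddCommGroup V]
    [Module ℝ V] (a : ι → V) {x : V} (hx : x ∈ convexHull ℝ (range a)) :
    ∃ w : ι → ℝ, (∀ i, 0 ≤ w i) ∧ ∑ i, w i = 1 ∧ ∑ i, w i • a i = x := by
  classical
  have hsub : convexHull ℝ (range a) ⊆ Fintype.linearCombination ℝ a '' stdSimplex ℝ ι := by
    refine convexHull_min ?_ ((convex_stdSimplex ℝ ι).linear_image _)
    rintro _ ⟨i, rfl⟩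
    exact ⟨Pi.single i 1, single_mem_stdSimplex ℝ i, by simp⟩
  obtain ⟨w, hw, rfl⟩ := hsub hx
  exact ⟨w, hw.1, hw.2, by simp [Fintype.linearCombination_apply]⟩

/-- Sums of `n` members of a finite family approximate the `n`-fold dilation of the convex hull
with an error that does not depend on `n`. -/
theorem exists_sum_near_nsmul_convexHull {V : Type*} [NormedAddCommGroup V] [NormedSpace ℝ V]
    {ℓ : ℕ} (hl : 0 < ℓ) (a : Fin ℓ → V) :
    ∃ C : ℝ, 0 ≤ C ∧ ∀ (n : ℕ), ∀ x ∈ convexHull ℝ (range a),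
      ∃ f : Fin n → Fin ℓ, ‖(n : ℝ) • x - ∑ j, a (f j)‖ ≤ C := by
  set i₀ : Fin ℓ := ⟨0, hl⟩
  refine ⟨∑ i, ‖a i - a i₀‖, by positivity, fun n x hx => ?_⟩
  obtain ⟨w, hw0, hw1, rfl⟩ := exists_weights_of_mem_convexHull_range a hx
  set m : Fin ℓ → ℕ := fun i => ⌊(n : ℝ) * w i⌋₊
  have hm_le (i) : (m i : ℝ) ≤ n * w i := Nat.floor_le (mul_nonneg n.cast_nonneg (hw0 i))
  have hm_lt (i) : (n : ℝ) * w i < m i + 1 := Nat.lt_floor_add_one _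
  have hsum : ∑ i, m i ≤ n := by
    have h : (∑ i, (m i : ℝ)) ≤ ∑ i, n * w i := Finset.sum_le_sum fun i _ => hm_le i
    rw [← Finset.mul_sum, hw1, mul_one] at h
    exact_mod_cast h
  set k : Fin ℓ → ℕ := fun i => m i + if i = i₀ then n - ∑ i, m i else 0
  have hk : ∑ i, k i = n := by
    simp only [k, Finset.sum_add_distrib, Finset.sum_ite_eq', Finset.mem_univ, if_true]
    omega
  let e : (Σ i, Fin (k i)) ≃ Fin n := finSigmaFinEquiv.trans (finCongr hk)
  refine ⟨fun j => (e.symm j).1, ?_⟩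
  have hcount : ∑ j, a (e.symm j).1 = ∑ i, (k i : ℝ) • a i := by
    rw [Equiv.sum_comp e.symm fun p : (Σ i, Fin (k i)) => a p.1, Fintype.sum_sigma]
    simp [Nat.cast_smul_eq_nsmul]
  have hdiff : (n : ℝ) • ∑ i, w i • a i - ∑ j, a (e.symm j).1
      = ∑ i, (n * w i - m i) • (a i - a i₀) := by
    have hk' : ∑ i, (k i : ℝ) • a i = ∑ i, (m i : ℝ) • a i + (n - ∑ i, (m i : ℝ)) • a i₀ := by
      simp only [k, Nat.cast_add, add_smul, Finset.sum_add_distrib, Nat.cast_ite, Nat.cast_zero,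
        ite_smul, zero_smul, Finset.sum_ite_eq', Finset.mem_univ, if_true]
      rw [Nat.cast_sub hsum, Nat.cast_sum]
    rw [hcount, hk']
    have hn : ∑ i, (n : ℝ) • w i • a i₀ = (n : ℝ) • a i₀ := by
      rw [← Finset.smul_sum, ← Finset.sum_smul, hw1, one_smul]
    simp only [smul_sub, Finset.sum_sub_distrib, ← Finset.sum_smul, sub_smul, Finset.smul_sum,
      mul_smul, hn]
    abel
  rw [hdiff]
  refine (norm_sum_le _ _).trans (Finset.sum_le_sum fun i _ => ?_)
  rw [norm_smul, Real.norm_eq_abs, abs_of_nonneg (sub_nonneg.2 (hm_le i))]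
  exact mul_le_of_le_one_left (norm_nonneg _) (by linarith [hm_lt i])

/-- The `n`-fold sum of a compact set is compact. -/
theorem IsCompact.nfoldSum {d n : ℕ} {E : Set (EuclideanSpace ℝ (Fin d))} (hE : IsCompact E) :
    IsCompact (nfoldSum n E) := by
  have hcont : Continuous fun x : Fin n → EuclideanSpace ℝ (Fin d) => ∑ i, x i := by fun_prop
  convert (isCompact_univ_pi fun _ : Fin n => hE).image hcont using 1
  ext y
  simp [_root_.nfoldSum, eq_comm]

/-- If `B` is bounded, every point of `B` is an affine image `L b + t` of a point `b ∈ B`, and the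
corresponding maps `x ↦ L x + t` send the closed set `K` into itself, then `B ⊆ K`, as soon as `L`
is a contraction. -/
theorem subset_of_contracting_cover {V : Type*} [NormedAddCommGroup V] [NormedSpace ℝ V]
    (L : V →ₗ[ℝ] V) {c : ℝ} (hc0 : 0 ≤ c) (hc1 : c < 1) (hL : ∀ x, ‖L x‖ ≤ c * ‖x‖)
    {B K : Set V} (hB : Bornology.IsBounded B) (hK : IsClosed K) (hKne : K.Nonempty)
    (hcover : ∀ y ∈ B, ∃ b ∈ B, ∃ t, y = L b + t ∧ ∀ z ∈ K, L z + t ∈ K) : B ⊆ K := by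
  obtain ⟨z₀, hz₀⟩ := hKne
  obtain ⟨R, hR⟩ := hB.subset_closedBall z₀
  have happrox (k : ℕ) : ∀ y ∈ B, ∃ z ∈ K, dist y z ≤ c ^ k * R := by
    induction k with
    | zero => exact fun y hy => ⟨z₀, hz₀, by simpa using hR hy⟩
    | succ k ih =>
      intro y hy
      obtain ⟨b, hb, t, rfl, ht⟩ := hcover y hy
      obtain ⟨z, hz, hbz⟩ := ih b hb
      refine ⟨L z + t, ht z hz, ?_⟩
      rw [dist_add_right, dist_eq_norm, ← map_sub, pow_succ', mul_assoc]
      rw [dist_eq_norm] at hbz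
      exact (hL _).trans (mul_le_mul_of_nonneg_left hbz hc0)
  intro y hy
  rw [← hK.closure_eq, Metric.mem_closure_iff]
  intro ε hε
  have hlim : Filter.Tendsto (fun k : ℕ => c ^ k * R) Filter.atTop (nhds 0) := by
    simpa using (tendsto_pow_atTop_nhds_zero_of_lt_one hc0 hc1).mul_const R
  obtain ⟨k, hk⟩ := (hlim.eventually (gt_mem_nhds hε)).exists
  obtain ⟨z, hz, hyz⟩ := happrox k y hy
  exact ⟨z, hz, hyz.trans_lt hk⟩

/-- The Euclidean linear map of an invertible matrix has preimages of controlled norm. -/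
theorem exists_preimage_norm_le_toEuclideanLin {d : ℕ} {T : Matrix (Fin d) (Fin d) ℝ}
    (hT : IsUnit T) : ∃ R : ℝ, 0 ≤ R ∧ ∀ y : EuclideanSpace ℝ (Fin d),
      ∃ x, Matrix.toEuclideanLin T x = y ∧ ‖x‖ ≤ R * ‖y‖ := by
  let S := LinearMap.toContinuousLinearMap (Matrix.toEuclideanLin T⁻¹)
  refine ⟨‖S‖, norm_nonneg _, fun y => ⟨S y, ?_, S.le_opNorm y⟩⟩
  have hmul : T * T⁻¹ = 1 := Matrix.mul_nonsing_inv T ((Matrix.isUnit_iff_isUnit_det T).1 hT)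
  simp [S, Matrix.toLpLin_apply, Matrix.mulVec_mulVec, hmul]

/-- For a homogeneous affine IFS `Φ = {x ↦ Tx + a_i}` on `ℝ^d` whose attractor is `E`,
if `0` lies in the interior of `conv{a_1, …, a_ℓ}`, then there are `δ > 0` and `n ∈ ℕ`
such that, with `B = B(0, δ)`, one has `⊕_n Φ(B) ⊇ ⊕_n B` and `⊕_n E ⊇ ⊕_n B`. -/
theorem homogeneous_selfAffine_sum_contains {d ℓ : ℕ} (hl : 0 < ℓ)
    (T : Matrix (Fin d) (Fin d) ℝ) (a : Fin ℓ → EuclideanSpace ℝ (Fin d))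
    (hinv : IsUnit T)
    (hnorm : ∃ c : ℝ, 0 ≤ c ∧ c < 1 ∧
      ∀ x : EuclideanSpace ℝ (Fin d), ‖Matrix.toEuclideanLin T x‖ ≤ c * ‖x‖)
    (E : Set (EuclideanSpace ℝ (Fin d))) (hne : E.Nonempty) (hcomp : IsCompact E)
    (hattr : E = ⋃ i, (fun x => Matrix.toEuclideanLin T x + a i) '' E)
    (h0 : (0 : EuclideanSpace ℝ (Fin d)) ∈ interior (convexHull ℝ (Set.range a))) :
    ∃ δ : ℝ, 0 < δ ∧ ∃ n : ℕ, 0 < n ∧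
      nfoldSum n (Metric.closedBall 0 δ) ⊆
        nfoldSum n (⋃ i, (fun x => Matrix.toEuclideanLin T x + a i) ''
          Metric.closedBall 0 δ) ∧
      nfoldSum n (Metric.closedBall 0 δ) ⊆ nfoldSum n E := by
  obtain ⟨c, hc0, hc1, hL⟩ := hnorm
  obtain ⟨C, hC0, hC⟩ := exists_sum_near_nsmul_convexHull hl a
  obtain ⟨R, hR0, hR⟩ := exists_preimage_norm_le_toEuclideanLin hinv
  obtain ⟨δ, hδ, hball⟩ := Metric.nhds_basis_closedBall.mem_iff.1 (mem_interior_iff_mem_nhds.1 h0)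
  obtain ⟨n, hn⟩ := exists_nat_gt (R * C / δ)
  have hnpos' : (0 : ℝ) < n := lt_of_le_of_lt (by positivity) hn
  have hnpos : 0 < n := by exact_mod_cast hnpos'
  have hRC : R * C ≤ n * δ := ((div_lt_iff₀ hδ).1 hn).le
  set L := Matrix.toEuclideanLin T
  have hstep : ∀ y ∈ closedBall (0 : EuclideanSpace ℝ (Fin d)) (n * δ),
      ∃ b ∈ closedBall (0 : EuclideanSpace ℝ (Fin d)) (n * δ), ∃ f : Fin n → Fin ℓ,
        y = L b + ∑ j, a (f j) := by
    intro y hy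
    rw [mem_closedBall_zero_iff] at hy
    have hy' : (n : ℝ)⁻¹ • y ∈ convexHull ℝ (range a) := by
      apply hball
      rw [mem_closedBall_zero_iff, norm_smul, norm_inv, Real.norm_natCast]
      exact (inv_mul_le_iff₀ hnpos').2 hy
    obtain ⟨f, hf⟩ := hC n _ hy'
    rw [smul_inv_smul₀ hnpos'.ne'] at hf
    obtain ⟨b, hb, hbR⟩ := hR (y - ∑ j, a (f j))
    refine ⟨b, ?_, f, by rw [hb, sub_add_cancel]⟩
    rw [mem_closedBall_zero_iff]
    exact (hbR.trans (mul_le_mul_of_nonneg_left hf hR0)).trans hRC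
  have hsub : nfoldSum n (closedBall (0 : EuclideanSpace ℝ (Fin d)) δ) ⊆
      closedBall 0 (n * δ) := by
    rintro _ ⟨x, hx, rfl⟩
    rw [mem_closedBall_zero_iff]
    refine (norm_sum_le_of_le _ fun i _ => mem_closedBall_zero_iff.1 (hx i)).trans ?_
    simp
  refine ⟨δ, hδ, n, hnpos, fun y hy => ?_, hsub.trans ?_⟩
  · obtain ⟨b, hb, f, rfl⟩ := hstep y (hsub hy)
    refine ⟨fun j => L ((n : ℝ)⁻¹ • b) + a (f j), fun j => mem_iUnion.2 ⟨f j, _, ?_, rfl⟩, ?_⟩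
    · rw [mem_closedBall_zero_iff] at hb ⊢
      rw [norm_smul, norm_inv, Real.norm_natCast]
      exact (inv_mul_le_iff₀ hnpos').2 hb
    · rw [Finset.sum_add_distrib, Finset.sum_const, Finset.card_univ, Fintype.card_fin, ← map_nsmul,
        ← Nat.cast_smul_eq_nsmul ℝ, smul_inv_smul₀ hnpos'.ne']
  · obtain ⟨e, he⟩ := hne
    refine subset_of_contracting_cover L hc0 hc1 hL isBounded_closedBall hcomp.nfoldSum.isClosed
      ⟨_, fun _ => e, fun _ => he, rfl⟩ fun y hy => ?_
    obtain ⟨b, hb, f, rfl⟩ := hstep y hy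
    refine ⟨b, hb, _, rfl, ?_⟩
    rintro _ ⟨x, hx, rfl⟩
    refine ⟨fun j => L (x j) + a (f j), fun j => ?_, ?_⟩
    · rw [hattr]
      exact mem_iUnion.2 ⟨f j, x j, hx j, rfl⟩
    · rw [Finset.sum_add_distrib, map_sum]
end
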